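/- Let n ≥ 2 and let Γ ⊂ ℝⁿ satisfy condition (C) with λ* = (1,−1,…,−1) ∉ ∂Γ. Then every continuous viscosity solution of λ(A[v]) ∈ ∂Γ in ℝⁿ is constant. -/

import Mathlib

open Filter Topology MeasureTheory Metric Set
open scoped BigOperators ENNReal NNReal

noncomputable section

/-- `ℝⁿ` with the Euclidean norm. -/
abbrev Euc (n : ℕ) := EuclideanSpace ℝ (Fin n)

/-- The positive cone `Γₙ = {λ : λᵢ > 0 ∀ i}`. -/
def GammaN (n : ℕ) : Set (Fin n → ℝ) := {lam | ∀ i, 0 < lam i}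

/-- Condition (C): `Γ ⊊ ℝⁿ` is a nonempty open symmetric cone with vertex at the origin
satisfying `Γ + Γₙ ⊆ Γ`. -/
def CondC {n : ℕ} (Γ : Set (Fin n → ℝ)) : Prop :=
  Γ.Nonempty ∧ Γ ≠ Set.univ ∧ IsOpen Γ ∧
    (∀ σ : Equiv.Perm (Fin n), ∀ lam ∈ Γ, lam ∘ σ ∈ Γ) ∧
    (∀ lam ∈ Γ, ∀ t : ℝ, 0 < t → t • lam ∈ Γ) ∧
    (∀ lam ∈ Γ, ∀ mu ∈ GammaN n, lam + mu ∈ Γ)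

/-- `λ* = (1, -1, …, -1)`. -/
def lamStar (n : ℕ) : Fin n → ℝ := fun i => if i.val = 0 then 1 else -1

/-- Partial derivative `∂ᵢ v (x)`. -/
def pgrad {n : ℕ} (v : Euc n → ℝ) (x : Euc n) (i : Fin n) : ℝ :=
  fderiv ℝ v x (EuclideanSpace.single i 1)

/-- Second partial derivative `∂ᵢ∂ⱼ v (x)`. -/
def phess {n : ℕ} (v : Euc n → ℝ) (x : Euc n) (i j : Fin n) : ℝ :=
  fderiv ℝ (fun y => fderiv ℝ v y (EuclideanSpace.single j 1)) x (EuclideanSpace.single i 1)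

/-- The Möbius Hessian
`A[v](x) = e^{-2v(x)} (-∇²v + ∇v ⊗ ∇v - ½ |∇v|² I)` as a matrix. -/
def mobius {n : ℕ} (v : Euc n → ℝ) (x : Euc n) : Matrix (Fin n) (Fin n) ℝ :=
  Real.exp (-2 * v x) • Matrix.of fun i j =>
    - phess v x i j + pgrad v x i * pgrad v x j
      - (1 / 2) * (∑ k, (pgrad v x k) ^ 2) * (if i = j then (1 : ℝ) else 0)

/-- The (unordered, permutation-invariant) eigenvalue tuple of the symmetric matrix `M`
belongs to the (permutation-invariant) set `S`. -/
def EigIn {n : ℕ} (M : Matrix (Fin n) (Fin n) ℝ) (S : Set (Fin n → ℝ)) : Prop :=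
  ∃ hM : M.IsHermitian, hM.eigenvalues ∈ S

/-- Viscosity supersolution of `λ(A[v]) ∈ ∂Γ` in `Ω`, i.e. `λ(A[v]) ∈ closure Γ`
in the viscosity sense (for a real-valued `v`). -/
def Supersol {n : ℕ} (Γ : Set (Fin n → ℝ)) (Ω : Set (Euc n)) (v : Euc n → ℝ) : Prop :=
  ∀ x₀ ∈ Ω, ∀ φ : Euc n → ℝ, ContDiff ℝ 2 φ → φ x₀ = v x₀ →
    (∀ᶠ x in 𝓝[Ω] x₀, φ x ≤ v x) → EigIn (mobius φ x₀) (closure Γ)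

/-- Viscosity subsolution of `λ(A[v]) ∈ ∂Γ` in `Ω`, i.e. `λ(A[v]) ∈ ℝⁿ ∖ Γ`
in the viscosity sense (for a real-valued `v`). -/
def Subsol {n : ℕ} (Γ : Set (Fin n → ℝ)) (Ω : Set (Euc n)) (v : Euc n → ℝ) : Prop :=
  ∀ x₀ ∈ Ω, ∀ φ : Euc n → ℝ, ContDiff ℝ 2 φ → φ x₀ = v x₀ →
    (∀ᶠ x in 𝓝[Ω] x₀, v x ≤ φ x) → EigIn (mobius φ x₀) Γᶜ

/-- quadratic form of a matrix -/
def qf {n : ℕ} (M : Matrix (Fin n) (Fin n) ℝ) (h : Euc n) : ℝ := ∑ i, ∑ j, M i j * h i * h j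

lemma qf_eq_inner {n : ℕ} (M : Matrix (Fin n) (Fin n) ℝ) (h : Euc n) :
    qf M h = inner ℝ (Matrix.toEuclideanLin M h) h := by
  simp only [qf, PiLp.inner_apply, Matrix.toEuclideanLin_apply, Matrix.mulVec, dotProduct]
  refine Finset.sum_congr rfl fun i _ => ?_
  simp [Finset.mul_sum]
  refine Finset.sum_congr rfl fun j _ => ?_
  ring

lemma qf_eigen {n : ℕ} {M : Matrix (Fin n) (Fin n) ℝ} (hM : M.IsHermitian) (h : Euc n) :
    qf M h = ∑ i, hM.eigenvalues i * (inner ℝ (hM.eigenvectorBasis i) h) ^ 2 := by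
  rw [qf_eq_inner, ← hM.eigenvectorBasis.sum_inner_mul_inner]
  refine Finset.sum_congr rfl fun i _ => ?_
  have hs := (Matrix.isHermitian_iff_isSymmetric.1 hM)
  have h1 : inner ℝ (Matrix.toEuclideanLin M h) (hM.eigenvectorBasis i)
      = inner ℝ h (Matrix.toEuclideanLin M (hM.eigenvectorBasis i)) := hs _ _
  have h2 : Matrix.toEuclideanLin M (hM.eigenvectorBasis i)
      = hM.eigenvalues i • hM.eigenvectorBasis i := by
    have := hM.mulVec_eigenvectorBasis i
    rw [Matrix.toEuclideanLin_apply, this]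
    ext k; simp
  rw [h1, h2, inner_smul_right, real_inner_comm h]
  ring

lemma weyl {n : ℕ} {M N : Matrix (Fin n) (Fin n) ℝ} (hM : M.IsHermitian) (hN : N.IsHermitian)
    (S : Euc n ≃ₗᵢ[ℝ] Euc n) (t c : ℝ) (ht : 0 ≤ t)
    (H : ∀ h, qf M h ≤ t * qf N (S h) + c * ‖h‖ ^ 2) (i : Fin n) :
    hM.eigenvalues i ≤ t * hN.eigenvalues i + c := by
  classical
  let e := (Fintype.equivOfCardEq (Fintype.card_fin (Fintype.card (Fin n)))).symm (β := Fin n)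
  have hMe : ∀ j, hM.eigenvalues j = hM.eigenvalues₀ (e j) := fun j => rfl
  have hNe : ∀ j, hN.eigenvalues j = hN.eigenvalues₀ (e j) := fun j => rfl
  let T : Euc n →ₗ[ℝ] ({j : Fin n // j ≠ i} → ℝ) :=
    LinearMap.pi fun j => if e i < e j.1 then (innerSL ℝ (hM.eigenvectorBasis j.1)).toLinearMap
      else (innerSL ℝ (hN.eigenvectorBasis j.1)).toLinearMap ∘ₗ S.toLinearEquiv.toLinearMap
  have hker : LinearMap.ker T ≠ ⊥ := by
    apply LinearMap.ker_ne_bot_of_finrank_lt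
    have : 0 < n := Fin.pos i
    simp; omega
  obtain ⟨h, hT, h0⟩ := Submodule.exists_mem_ne_zero_of_ne_bot hker
  have hT' : ∀ j : {j : Fin n // j ≠ i}, T h j = 0 := fun j => by
    have : T h = 0 := hT
    rw [this]; rfl
  have A : hM.eigenvalues i * ‖h‖ ^ 2 ≤ qf M h := by
    rw [qf_eigen hM, ← hM.eigenvectorBasis.sum_sq_norm_inner_right h, Finset.mul_sum]
    refine Finset.sum_le_sum fun j _ => ?_
    rw [Real.norm_eq_abs, sq_abs]
    by_cases hj : e i < e j
    · have hji : j ≠ i := by rintro rfl; exact lt_irrefl _ hj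
      have := hT' ⟨j, hji⟩
      simp [T, hj] at this
      simp [this]
    · gcongr
      rw [hMe, hMe]
      exact hM.eigenvalues₀_antitone (not_lt.1 hj)
  have B : qf N (S h) ≤ hN.eigenvalues i * ‖h‖ ^ 2 := by
    rw [qf_eigen hN, ← S.norm_map h, ← hN.eigenvectorBasis.sum_sq_norm_inner_right (S h),
      Finset.mul_sum]
    refine Finset.sum_le_sum fun j _ => ?_
    rw [Real.norm_eq_abs, sq_abs]
    by_cases hj : e i ≤ e j
    · gcongr
      rw [hNe, hNe]
      exact hN.eigenvalues₀_antitone hj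
    · have hji : j ≠ i := by rintro rfl; exact hj le_rfl
      have h2 : ¬ e i < e j := fun hh => hj hh.le
      have := hT' ⟨j, hji⟩
      simp [T, h2] at this
      simp [this]
  have hp : 0 < ‖h‖ ^ 2 := by positivity
  have := H h
  have h3 : t * qf N (S h) ≤ t * (hN.eigenvalues i * ‖h‖ ^ 2) := by gcongr
  have h4 : hM.eigenvalues i * ‖h‖ ^ 2 ≤ (t * hN.eigenvalues i + c) * ‖h‖ ^ 2 := by linarith
  exact le_of_mul_le_mul_right h4 hp

/-- `q` is a quadratic form -/
def IsQF {n : ℕ} (q : Euc n → ℝ) : Prop := ∃ A : Euc n →L[ℝ] Euc n, ∀ h, q h = inner ℝ (A h) h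

/-- eigenvalues of the quadratic form `q` lie in `S` -/
def EI {n : ℕ} (q : Euc n → ℝ) (S : Set (Fin n → ℝ)) : Prop :=
  ∃ M : Matrix (Fin n) (Fin n) ℝ, EigIn M S ∧ ∀ h, q h = qf M h

lemma IsQF.add {n : ℕ} {q r : Euc n → ℝ} (hq : IsQF q) (hr : IsQF r) :
    IsQF (fun h => q h + r h) := by
  obtain ⟨A, hA⟩ := hq
  obtain ⟨B, hB⟩ := hr
  exact ⟨A + B, fun h => by simp [hA, hB, inner_add_left]⟩

lemma IsQF.smul {n : ℕ} {q : Euc n → ℝ} (hq : IsQF q) (c : ℝ) :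
    IsQF (fun h => c * q h) := by
  obtain ⟨A, hA⟩ := hq
  exact ⟨c • A, fun h => by simp [hA, inner_smul_left]⟩

lemma IsQF.neg {n : ℕ} {q : Euc n → ℝ} (hq : IsQF q) : IsQF (fun h => - q h) := by
  simpa using hq.smul (-1)

lemma IsQF.sub {n : ℕ} {q r : Euc n → ℝ} (hq : IsQF q) (hr : IsQF r) :
    IsQF (fun h => q h - r h) := by
  simpa [sub_eq_add_neg] using hq.add hr.neg

lemma isQF_norm {n : ℕ} : IsQF (fun h : Euc n => ‖h‖ ^ 2) :=
  ⟨ContinuousLinearMap.id ℝ _, fun h => by simp⟩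

lemma isQF_inner {n : ℕ} (p : Euc n) : IsQF (fun h : Euc n => (inner ℝ p h) ^ 2) :=
  ⟨(innerSL ℝ p).smulRight p, fun h => by simp [inner_smul_left, pow_two]⟩

lemma IsQF.comp {n : ℕ} {q : Euc n → ℝ} (hq : IsQF q) (S : Euc n →L[ℝ] Euc n) :
    IsQF (fun h => q (S h)) := by
  obtain ⟨A, hA⟩ := hq
  exact ⟨(ContinuousLinearMap.adjoint S) ∘L A ∘L S, fun h => by
    simp [hA, ContinuousLinearMap.adjoint_inner_left]⟩

lemma isQF_qf {n : ℕ} (M : Matrix (Fin n) (Fin n) ℝ) : IsQF (qf M) :=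
  ⟨(Matrix.toEuclideanLin M).toContinuousLinearMap, fun h => by simp [qf_eq_inner]⟩

lemma IsQF.matrix {n : ℕ} {q : Euc n → ℝ} (hq : IsQF q) :
    ∃ M : Matrix (Fin n) (Fin n) ℝ, M.IsHermitian ∧ ∀ h, q h = qf M h := by
  obtain ⟨A, hA⟩ := hq
  let b := EuclideanSpace.basisFun (Fin n) ℝ
  refine ⟨Matrix.of fun i j => (1/2 : ℝ) * (inner ℝ (A (b i)) (b j) + inner ℝ (A (b j)) (b i)),
    ?_, ?_⟩
  · ext i j; simp; ring
  · intro h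
    have e : h = ∑ i, h i • b i := by
      conv_lhs => rw [← b.sum_repr h]
      simp [b]
    have h1 : q h = ∑ i, ∑ j, inner ℝ (A (b i)) (b j) * h i * h j := by
      rw [hA]
      conv_lhs => rw [e]
      simp only [map_sum, sum_inner, inner_sum, map_smul, inner_smul_left, inner_smul_right]
      rw [Finset.sum_comm (f := fun i j => inner ℝ (A (b i)) (b j) * h i * h j)]
      refine Finset.sum_congr rfl fun i _ => ?_
      rw [Finset.mul_sum]
      refine Finset.sum_congr rfl fun j _ => ?_
      simp; ring
    have h2 : q h = ∑ i, ∑ j, inner ℝ (A (b j)) (b i) * h i * h j := by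
      rw [h1, Finset.sum_comm]
      refine Finset.sum_congr rfl fun i _ => Finset.sum_congr rfl fun j _ => ?_
      ring
    have h3 : q h = (1/2 : ℝ) * (q h + q h) := by ring
    rw [h3]; nth_rw 1 [h1]; rw [h2, ← Finset.sum_add_distrib, Finset.mul_sum, qf]
    refine Finset.sum_congr rfl fun i _ => ?_
    rw [← Finset.sum_add_distrib, Finset.mul_sum]
    refine Finset.sum_congr rfl fun j _ => ?_
    simp; ring

lemma EI.isQF {n : ℕ} {q : Euc n → ℝ} {S : Set (Fin n → ℝ)} (h : EI q S) : IsQF q := by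
  obtain ⟨M, _, hq⟩ := h
  have : q = qf M := funext hq
  rw [this]; exact isQF_qf M

lemma IsQF.bound {n : ℕ} {q : Euc n → ℝ} (hq : IsQF q) : ∃ C, 0 ≤ C ∧ ∀ h, |q h| ≤ C * ‖h‖ ^ 2 := by
  obtain ⟨A, hA⟩ := hq
  refine ⟨‖A‖, norm_nonneg _, fun h => ?_⟩
  rw [hA]
  calc |inner ℝ (A h) h| ≤ ‖A h‖ * ‖h‖ := abs_real_inner_le_norm _ _
    _ ≤ ‖A‖ * ‖h‖ * ‖h‖ := by gcongr; exact A.le_opNorm h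
    _ = _ := by ring

/-- comparison of eigenvalues -/
lemma EI.compare {n : ℕ} {q r : Euc n → ℝ} {S : Set (Fin n → ℝ)} (h : EI q S) (hr : IsQF r)
    (R : Euc n ≃ₗᵢ[ℝ] Euc n) (t : ℝ) (ht : 0 < t) (c : ℝ)
    (H : ∀ h, t * q h + c * ‖h‖ ^ 2 ≤ r (R h)) :
    ∃ lam ∈ S, ∃ mu : Fin n → ℝ, (∀ T : Set (Fin n → ℝ), mu ∈ T → EI r T) ∧
      (∀ T : Set (Fin n → ℝ), EI r T → mu ∈ T) ∧
      ∀ i, t * lam i + c ≤ mu i := by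
  obtain ⟨M, ⟨hM, hMS⟩, hq⟩ := h
  obtain ⟨N, hN, hrN⟩ := hr.matrix
  refine ⟨_, hMS, hN.eigenvalues, fun T hT => ⟨N, ⟨hN, hT⟩, hrN⟩, ?_, ?_⟩
  · rintro T ⟨N', ⟨hN', hT⟩, hr'⟩
    have : hN.eigenvalues = hN'.eigenvalues := by
      ext i
      apply le_antisymm
      · have := weyl hN hN' (LinearIsometryEquiv.refl ℝ _) 1 0 (by norm_num)
          (fun h => by simp [← hrN, ← hr']) i
        simpa using this
      · have := weyl hN' hN (LinearIsometryEquiv.refl ℝ _) 1 0 (by norm_num)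
          (fun h => by simp [← hrN, ← hr']) i
        simpa using this
    rwa [this]
  · intro i
    have := weyl hM hN R t⁻¹ (-c * t⁻¹) (by positivity) (fun h => by
      rw [← hq, ← hrN]
      have := H h
      rw [← mul_le_mul_iff_right₀ ht]
      field_simp
      linarith) i
    rw [← mul_le_mul_iff_right₀ ht] at this
    field_simp at this
    linarith

lemma EI.unique {n : ℕ} {q : Euc n → ℝ} {S : Set (Fin n → ℝ)} (h : EI q S) (h' : EI q Sᶜ) :
    False := by
  obtain ⟨lam, hl, mu, _, h2, _⟩ := h.compare h.isQF (LinearIsometryEquiv.refl ℝ _) 1 one_pos 0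
    (by simp)
  exact (h2 _ h') (h2 _ h)

lemma EI.of_shift {n : ℕ} {q : Euc n → ℝ} {S : Set (Fin n → ℝ)} (hS : IsClosed S) (hq : IsQF q)
    (s : ℝ) (H : ∀ η : ℝ, 0 < η → EI (fun h => q h + s * η * ‖h‖ ^ 2) S) : EI q S := by
  obtain ⟨M, hM, hqM⟩ := hq.matrix
  refine ⟨M, ⟨hM, ?_⟩, hqM⟩
  have key : ∀ η : ℝ, 0 < η → (fun i => hM.eigenvalues i + s * η) ∈ S := by
    intro η hη
    obtain ⟨N, ⟨hN, hNS⟩, hr⟩ := H η hη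
    have : (fun i => hM.eigenvalues i + s * η) = hN.eigenvalues := by
      ext i
      apply le_antisymm
      · have := weyl hM hN (LinearIsometryEquiv.refl ℝ _) 1 (-(s * η)) (by norm_num)
          (fun h => by simp [← hqM, ← hr]) i
        linarith
      · have := weyl hN hM (LinearIsometryEquiv.refl ℝ _) 1 (s * η) (by norm_num)
          (fun h => by simp [← hqM, ← hr]) i
        linarith
    rw [this]; exact hNS
  have ht : Tendsto (fun η : ℝ => (fun i => hM.eigenvalues i + s * η)) (𝓝[>] 0)
      (𝓝 hM.eigenvalues) := by
    have : ContinuousAt (fun η : ℝ => (fun i => hM.eigenvalues i + s * η)) 0 := by fun_prop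
    have h2 := this.tendsto
    simp only [mul_zero, add_zero] at h2
    exact h2.mono_left nhdsWithin_le_nhds
  refine hS.mem_of_tendsto ht ?_
  filter_upwards [self_mem_nhdsWithin] with η hη using key η hη

/-! ### cones -/

lemma cone_up {n : ℕ} {Γ : Set (Fin n → ℝ)} (hΓ : CondC Γ) {a b : Fin n → ℝ}
    (ha : a ∈ closure Γ) (h : ∀ i, a i < b i) : b ∈ Γ := by
  obtain ⟨_, _, ho, _, _, hadd⟩ := hΓ
  have hU : IsOpen {x : Fin n → ℝ | ∀ i, x i < b i} := by
    simp only [setOf_forall]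
    exact isOpen_iInter_of_finite fun i => isOpen_lt (continuous_apply i) continuous_const
  obtain ⟨x, hx, hxΓ⟩ := mem_closure_iff.1 ha _ hU h
  have := hadd x hxΓ (b - x) (fun i => by simpa using hx i)
  simpa using this

lemma cone_up_le {n : ℕ} {Γ : Set (Fin n → ℝ)} (hΓ : CondC Γ) {a b : Fin n → ℝ}
    (ha : a ∈ closure Γ) (h : ∀ i, a i ≤ b i) : b ∈ closure Γ := by
  have ht : Tendsto (fun η : ℝ => (fun i => b i + η)) (𝓝[>] 0) (𝓝 b) := by
    have : ContinuousAt (fun η : ℝ => (fun i => b i + η)) 0 := by fun_prop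
    have h2 := this.tendsto
    simp only [add_zero] at h2
    exact h2.mono_left nhdsWithin_le_nhds
  refine mem_closure_of_tendsto ht ?_
  filter_upwards [self_mem_nhdsWithin] with η hη
  exact cone_up hΓ ha fun i => by have := h i; simp at hη; linarith

lemma cone_smul {n : ℕ} {Γ : Set (Fin n → ℝ)} (hΓ : CondC Γ) {a : Fin n → ℝ}
    (ha : a ∈ closure Γ) {t : ℝ} (ht : 0 < t) : t • a ∈ closure Γ := by
  obtain ⟨_, _, ho, _, hs, hadd⟩ := hΓ
  have : Continuous fun a : Fin n → ℝ => t • a := continuous_const_smul t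
  exact map_mem_closure this ha (fun x hx => hs x hx t ht)

lemma EI.mono {n : ℕ} {Γ : Set (Fin n → ℝ)} (hΓ : CondC Γ) {q r : Euc n → ℝ}
    (h : EI q (closure Γ)) (hr : IsQF r)
    (R : Euc n ≃ₗᵢ[ℝ] Euc n) (t : ℝ) (ht : 0 < t)
    (H : ∀ h, t * q h ≤ r (R h)) : EI r (closure Γ) := by
  obtain ⟨lam, hl, mu, h1, h2, h3⟩ := h.compare hr R t ht 0 (by simpa using H)
  apply h1
  exact cone_up_le hΓ (cone_smul hΓ hl ht) (fun i => by simpa using h3 i)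

lemma EI.strict {n : ℕ} {Γ : Set (Fin n → ℝ)} (hΓ : CondC Γ) {q r : Euc n → ℝ}
    (h : EI q (closure Γ)) (hr : IsQF r) (t : ℝ) (ht : 0 < t) (c : ℝ) (hc : 0 < c)
    (H : ∀ h, t * q h + c * ‖h‖ ^ 2 ≤ r h) : EI r Γ := by
  obtain ⟨lam, hl, mu, h1, h2, h3⟩ := h.compare hr (LinearIsometryEquiv.refl ℝ _) t ht c
    (by simpa using H)
  apply h1
  exact cone_up hΓ (cone_smul hΓ hl ht) (fun i => by have := h3 i; simp; linarith)

/-- scaling for the complement -/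
lemma EI.scale {n : ℕ} {q : Euc n → ℝ} {S : Set (Fin n → ℝ)} (t : ℝ) (ht : 0 < t)
    (hS : ∀ a, t • a ∈ S → a ∈ S) (h : EI (fun h => t * q h) S) (hq : IsQF q) : EI q S := by
  obtain ⟨M, hM, hqM⟩ := hq.matrix
  refine ⟨M, ⟨hM, ?_⟩, hqM⟩
  obtain ⟨N, ⟨hN, hNS⟩, hr⟩ := h
  apply hS
  have : t • hM.eigenvalues = hN.eigenvalues := by
    ext i
    apply le_antisymm
    · have := weyl hM hN (LinearIsometryEquiv.refl ℝ _) t⁻¹ 0 (by positivity)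
        (fun h => by simp [← hqM, ← hr]; field_simp; rfl) i
      rw [← mul_le_mul_iff_right₀ ht] at this
      field_simp at this
      simpa using this
    · have := weyl hN hM (LinearIsometryEquiv.refl ℝ _) t 0 ht.le
          (fun h => by simp [← hqM, ← hr]) i
      simpa using this
  rw [this]; exact hNS

/-! ### rank one perturbations -/

lemma perm_of_map_eq {n : ℕ} {f g : Fin n → ℝ}
    (h : Multiset.map f Finset.univ.val = Multiset.map g Finset.univ.val) :
    ∃ σ : Equiv.Perm (Fin n), f = g ∘ σ := by
  classical
  have hc : ∀ c : ℝ, Nonempty ({a // f a = c} ≃ {b // g b = c}) := by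
    intro c
    refine Fintype.card_eq.1 ?_
    have := congrArg (Multiset.count c) h
    rw [Multiset.count_map, Multiset.count_map] at this
    rw [Fintype.card_subtype, Fintype.card_subtype]
    simpa [Finset.card, Finset.filter, eq_comm] using this
  refine ⟨Equiv.ofFiberEquiv fun c => (hc c).some, ?_⟩
  ext a
  exact (Equiv.ofFiberEquiv_map (fun c => (hc c).some) a).symm

lemma diag_eig {n : ℕ} (d : Fin n → ℝ) (h : (Matrix.diagonal d).IsHermitian) :
    ∃ σ : Equiv.Perm (Fin n), h.eigenvalues = d ∘ σ := by
  apply perm_of_map_eq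
  have h1 := h.roots_charpoly_eq_eigenvalues
  rw [Matrix.charpoly_diagonal, Polynomial.roots_prod] at h1
  · simp only [Polynomial.roots_X_sub_C, Multiset.bind_singleton] at h1
    rw [h1]; rfl
  · simp [Finset.prod_ne_zero_iff, Polynomial.X_sub_C_ne_zero]

/-- the tuple `(a+b, b, …, b)` -/
def tup (n : ℕ) (a b : ℝ) : Fin n → ℝ := fun i => if i.val = 0 then a + b else b

lemma qf_diag {n : ℕ} (d : Fin n → ℝ) (h : Euc n) :
    qf (Matrix.diagonal d) h = ∑ i, d i * h i ^ 2 := by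
  simp only [qf, Matrix.diagonal_apply]
  refine Finset.sum_congr rfl fun i _ => ?_
  rw [Finset.sum_eq_single i]
  · simp; ring
  · intro j _ hj; simp [hj.symm]
  · simp

lemma exists_refl {n : ℕ} (hn : 2 ≤ n) (e : Euc n) (he : ‖e‖ = 1) :
    ∃ R : Euc n ≃ₗᵢ[ℝ] Euc n, ∀ h, (R h) ⟨0, by omega⟩ = inner ℝ e h := by
  let e0 : Euc n := EuclideanSpace.single ⟨0, by omega⟩ 1
  have h0 : ‖e0‖ = ‖e‖ := by simp [e0, he]
  obtain ⟨R, hR⟩ : ∃ R : Euc n ≃ₗᵢ[ℝ] Euc n, R e = e0 :=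
    ⟨(ℝ ∙ (e - e0))ᗮ.reflection, Submodule.reflection_sub h0.symm⟩
  refine ⟨R, fun h => ?_⟩
  have h4 := R.inner_map_map e h
  rw [hR] at h4
  rw [← h4]
  simp [e0, EuclideanSpace.inner_single_left]

lemma isQF_rank {n : ℕ} (e : Euc n) (a b : ℝ) :
    IsQF (fun h : Euc n => a * (inner ℝ e h) ^ 2 + b * ‖h‖ ^ 2) :=
  ((isQF_inner e).smul a).add (isQF_norm.smul b)

lemma rank_tuple {n : ℕ} (hn : 2 ≤ n) (e : Euc n) (he : ‖e‖ = 1) (a b : ℝ) :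
    ∃ σ : Equiv.Perm (Fin n), ∀ S : Set (Fin n → ℝ),
      (EI (fun h : Euc n => a * (inner ℝ e h) ^ 2 + b * ‖h‖ ^ 2) S ↔ tup n a b ∘ σ ∈ S) := by
  obtain ⟨R, hR⟩ := exists_refl hn e he
  have hD : (Matrix.diagonal (tup n a b)).IsHermitian := Matrix.isHermitian_diagonal _
  obtain ⟨σ, hσ⟩ := diag_eig _ hD
  have hq : ∀ h, a * (inner ℝ e h) ^ 2 + b * ‖h‖ ^ 2 = qf (Matrix.diagonal (tup n a b)) (R h) := by
    intro h
    rw [qf_diag, ← R.norm_map h, EuclideanSpace.norm_sq_eq, ← hR h, Finset.mul_sum]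
    have : ∀ i : Fin n, tup n a b i * (R h) i ^ 2 = (if i = ⟨0, by omega⟩ then
        a * (R h) ⟨0, by omega⟩ ^ 2 else 0) + b * ‖(R h) i‖ ^ 2 := by
      intro i
      by_cases hi : i.val = 0
      · have : i = ⟨0, by omega⟩ := Fin.ext hi
        rw [this]
        simp [tup]; ring
      · have : i ≠ ⟨0, by omega⟩ := fun h => hi (by rw [h])
        simp [tup, this, hi]
    simp_rw [this, Finset.sum_add_distrib]
    simp
  refine ⟨σ, fun S => ?_⟩
  obtain ⟨M, hM, hqM⟩ := (isQF_rank e a b).matrix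
  have hEq : ∀ {N : Matrix (Fin n) (Fin n) ℝ} (hN : N.IsHermitian), (∀ h, a * (inner ℝ e h) ^ 2 +
      b * ‖h‖ ^ 2 = qf N h) → hN.eigenvalues = hD.eigenvalues := by
    intro N hN hqN
    ext i
    apply le_antisymm
    · have := weyl hN hD R 1 0 (by norm_num) (fun h => by simp [← hqN, hq]) i
      simpa using this
    · have := weyl hD hN R.symm 1 0 (by norm_num) (fun h => by
        simp only [← hqN]; rw [hq]; simp) i
      simpa using this
  constructor
  · rintro ⟨N, ⟨hN, hNS⟩, hqN⟩
    rw [← hσ, ← hEq hN hqN]; exact hNS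
  · intro h
    exact ⟨M, ⟨hM, by rw [hEq hM hqM, hσ]; exact h⟩, hqM⟩

lemma rank_in {n : ℕ} (hn : 2 ≤ n) {Γ : Set (Fin n → ℝ)} (hΓ : CondC Γ) {e : Euc n}
    (he : ‖e‖ = 1) {a b : ℝ} (h : tup n a b ∈ Γ) :
    EI (fun h : Euc n => a * (inner ℝ e h) ^ 2 + b * ‖h‖ ^ 2) Γ := by
  obtain ⟨σ, hσ⟩ := rank_tuple hn e he a b
  exact (hσ _).2 (hΓ.2.2.2.1 σ _ h)

lemma rank_out {n : ℕ} (hn : 2 ≤ n) {Γ : Set (Fin n → ℝ)} (hΓ : CondC Γ) {e : Euc n}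
    (he : ‖e‖ = 1) {a b : ℝ} (h : tup n a b ∉ closure Γ) :
    ¬ EI (fun h : Euc n => a * (inner ℝ e h) ^ 2 + b * ‖h‖ ^ 2) (closure Γ) := by
  obtain ⟨σ, hσ⟩ := rank_tuple hn e he a b
  intro H
  have h1 := (hσ _).1 H
  have hc : Continuous fun f : Fin n → ℝ => f ∘ σ.symm := by fun_prop
  have h2 : (tup n a b ∘ σ) ∘ σ.symm ∈ closure Γ :=
    map_mem_closure (f := fun f : Fin n → ℝ => f ∘ σ.symm) hc h1 (fun x hx => hΓ.2.2.2.1 σ.symm x hx)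
  rw [Function.comp_assoc] at h2
  simp only [Equiv.self_comp_symm, Function.comp_id] at h2
  exact h h2

/-- form used in case 2 -/
lemma rank_not {n : ℕ} (hn : 2 ≤ n) {Γ : Set (Fin n → ℝ)} (hΓ : CondC Γ) {e : Euc n}
    (he : ‖e‖ = 1) {a b : ℝ} (h : tup n a b ∉ closure Γ) {t : ℝ} (ht : 0 < t) {q : Euc n → ℝ}
    (hq : EI q (closure Γ)) (H : ∀ h, q h ≤ t * (a * (inner ℝ e h) ^ 2 + b * ‖h‖ ^ 2)) : False := by
  refine rank_out hn hΓ he h (hq.mono hΓ (isQF_rank e a b) (LinearIsometryEquiv.refl ℝ _) t⁻¹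
    (by positivity) fun h => ?_)
  have := H h
  rw [inv_mul_le_iff₀ ht]
  simpa using this

/-! ### second order expansions -/

/-- second order upper expansion -/
def UB {n : ℕ} (f : Euc n → ℝ) (x p : Euc n) (q : Euc n → ℝ) : Prop :=
  ∀ η : ℝ, 0 < η → ∀ᶠ h in 𝓝 (0 : Euc n),
    f (x + h) ≤ f x + inner ℝ p h + (1 / 2) * q h + η * ‖h‖ ^ 2

/-- second order Taylor expansion, two-sided -/
def T2 {E : Type*} [NormedAddCommGroup E] [InnerProductSpace ℝ E] (f : E → ℝ) (x p : E)
    (q : E → ℝ) : Prop :=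
  ∀ η : ℝ, 0 < η → ∀ᶠ h in 𝓝 (0 : E),
    |f (x + h) - f x - inner ℝ p h - (1 / 2) * q h| ≤ η * ‖h‖ ^ 2

lemma T2.ub {n : ℕ} {f : Euc n → ℝ} {x p : Euc n} {q : Euc n → ℝ} (h : T2 f x p q) :
    UB f x p q := by
  intro η hη
  filter_upwards [h η hη] with k hk
  have := (abs_le.1 hk).2
  linarith

/-- Taylor's formula -/
lemma taylor2 {E : Type*} [NormedAddCommGroup E] [InnerProductSpace ℝ E] {g : E → ℝ} {P : E → E}
    {x : E} {X : E →L[ℝ] E} (hg : ∀ᶠ z in 𝓝 x, HasFDerivAt g (innerSL ℝ (P z)) z)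
    (hP : HasFDerivAt P X x) : T2 g x (P x) (fun h => inner ℝ (X h) h) := by
  intro η hη
  have h1 : ∀ᶠ z in 𝓝 x, ‖P z - P x - X (z - x)‖ ≤ η * ‖z - x‖ := by
    have := hP.isLittleO.def hη
    simpa using this
  obtain ⟨r, hr, hball⟩ := Metric.eventually_nhds_iff_ball.1 (hg.and h1)
  filter_upwards [Metric.ball_mem_nhds (0 : E) hr] with h hh
  have hh' : ‖h‖ < r := by simpa using hh
  have hmem : ∀ t ∈ Icc (0 : ℝ) 1, x + t • h ∈ ball x r := by
    intro t ht
    simp only [mem_ball, dist_self_add_left, norm_smul, Real.norm_eq_abs, abs_of_nonneg ht.1]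
    calc t * ‖h‖ ≤ 1 * ‖h‖ := by gcongr; exact ht.2
      _ < r := by simpa using hh'
  have key := norm_image_sub_le_of_norm_deriv_le_segment_01'
    (f := fun t : ℝ => g (x + t • h) - t * inner ℝ (P x) h - (1 / 2) * t ^ 2 * inner ℝ (X h) h)
    (f' := fun t : ℝ => inner ℝ (P (x + t • h)) h - inner ℝ (P x) h - t * inner ℝ (X h) h)
    (C := η * ‖h‖ ^ 2) ?_ ?_
  · simp only [one_smul, zero_smul, add_zero, Real.norm_eq_abs] at key
    refine le_trans (le_of_eq ?_) key
    congr 1; ring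
  · intro t ht
    have hd := (hball _ (hmem t ht)).1
    have hl : HasDerivAt (fun t : ℝ => x + t • h) h t := by
      have := ((hasDerivAt_id t).smul_const h).const_add x
      simpa using this
    have h2 := hd.comp_hasDerivAt t hl
    have h3 : HasDerivAt (fun t : ℝ => t * inner ℝ (P x) h) (inner ℝ (P x) h) t := by
      simpa using (hasDerivAt_id t).mul_const (inner ℝ (P x) h)
    have h4 : HasDerivAt (fun t : ℝ => (1 / 2) * t ^ 2 * inner ℝ (X h) h) (t * inner ℝ (X h) h) t := by
      have := ((hasDerivAt_pow 2 t).const_mul (1 / 2 : ℝ)).mul_const (inner ℝ (X h) h)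
      refine this.congr_deriv ?_
      push_cast; ring
    exact ((h2.sub h3).sub h4).hasDerivWithinAt
  · intro t ht
    have h2 := (hball _ (hmem t ⟨ht.1, ht.2.le⟩)).2
    have e : inner ℝ (P (x + t • h)) h - inner ℝ (P x) h - t * inner ℝ (X h) h
        = inner ℝ (P (x + t • h) - P x - X (x + t • h - x)) h := by
      simp [inner_sub_left, inner_smul_left]
    rw [e]
    calc _ ≤ ‖P (x + t • h) - P x - X (x + t • h - x)‖ * ‖h‖ := norm_inner_le_norm _ _
      _ ≤ (η * ‖x + t • h - x‖) * ‖h‖ := by gcongr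
      _ = η * t * ‖h‖ ^ 2 := by simp [norm_smul, abs_of_nonneg ht.1]; ring
      _ ≤ η * 1 * ‖h‖ ^ 2 := by gcongr; exact ht.2.le
      _ = _ := by ring

/-- one-dimensional expansion -/
def T1 (G : ℝ → ℝ) (t a b : ℝ) : Prop :=
  ∀ η : ℝ, 0 < η → ∀ᶠ s in 𝓝 (0 : ℝ), |G (t + s) - G t - a * s - (1 / 2) * b * s ^ 2| ≤ η * s ^ 2

lemma taylor1 {G G' : ℝ → ℝ} {t b : ℝ} (hG : ∀ᶠ s in 𝓝 t, HasDerivAt G (G' s) s)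
    (hG' : HasDerivAt G' b t) : T1 G t (G' t) b := by
  intro η hη
  have h := taylor2 (E := ℝ) (g := G) (P := G') (x := t)
    (X := ContinuousLinearMap.toSpanSingleton ℝ b) ?_ ?_ η hη
  · filter_upwards [h] with s hs
    simp only [Real.norm_eq_abs, sq_abs, ContinuousLinearMap.toSpanSingleton_apply,
      smul_eq_mul] at hs
    refine le_trans (le_of_eq ?_) hs
    congr 1
    simp; ring
  · filter_upwards [hG] with s hs
    refine hs.hasFDerivAt.congr_fderiv ?_
    ext; simp
  · exact hG'.hasFDerivAt

lemma T1_exp (t : ℝ) : T1 Real.exp t (Real.exp t) (Real.exp t) :=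
  taylor1 (Eventually.of_forall Real.hasDerivAt_exp) (Real.hasDerivAt_exp t)

lemma T1_log {t : ℝ} (ht : 0 < t) : T1 Real.log t t⁻¹ (-(t ^ 2)⁻¹) :=
  taylor1 (G' := fun s => s⁻¹) (by
    filter_upwards [lt_mem_nhds ht] with s hs using Real.hasDerivAt_log hs.ne')
    (hasDerivAt_inv ht.ne')

lemma IsQF.continuous {n : ℕ} {q : Euc n → ℝ} (hq : IsQF q) : Continuous q := by
  obtain ⟨A, hA⟩ := hq
  have : q = fun h => inner ℝ (A h) h := funext hA
  rw [this]; fun_prop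

/-- composition with a one-dimensional function -/
lemma T2.comp {n : ℕ} {f : Euc n → ℝ} {x p : Euc n} {q : Euc n → ℝ} (hf : T2 f x p q)
    (hq : IsQF q) {G : ℝ → ℝ} {a b : ℝ} (hG : T1 G (f x) a b) :
    T2 (fun y => G (f y)) x (a • p) (fun h => a * q h + b * (inner ℝ p h) ^ 2) := by
  intro η hη
  obtain ⟨C, hC0, hC⟩ := hq.bound
  -- linear bound
  set B : ℝ := ‖p‖ + C + 2 with hB
  have hBpos : 0 < B := by positivity
  have hlin : ∀ᶠ h in 𝓝 (0 : Euc n), |f (x + h) - f x| ≤ B * ‖h‖ := by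
    filter_upwards [hf 1 one_pos, Metric.ball_mem_nhds (0 : Euc n) one_pos] with h h1 h2
    have h3 : ‖h‖ < 1 := by simpa using h2
    have h4 := abs_real_inner_le_norm p h
    have h5 := hC h
    have h6 : ‖h‖ ^ 2 ≤ ‖h‖ := by nlinarith [norm_nonneg h]
    have h7 : C * ‖h‖ ^ 2 ≤ C * ‖h‖ := by gcongr
    have h8 := norm_nonneg h
    rw [abs_le] at *
    constructor <;> nlinarith
  have hs : Tendsto (fun h => f (x + h) - f x) (𝓝 0) (𝓝 0) := by
    refine squeeze_zero_norm' (a := fun h => B * ‖h‖) (by simpa using hlin) ?_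
    have : Continuous fun h : Euc n => B * ‖h‖ := by fun_prop
    simpa using this.tendsto 0
  have hη1 : 0 < η / (3 * B ^ 2) := by positivity
  have hη2 : 0 < η / (3 * (|a| + 1)) := by positivity
  -- square term
  have hsq : ∀ᶠ h in 𝓝 (0 : Euc n),
      |(1 / 2) * b * ((f (x + h) - f x) ^ 2 - (inner ℝ p h) ^ 2)| ≤ η / 3 * ‖h‖ ^ 2 := by
    -- (s^2 - (p h)^2) = (s - p h)(s + p h)
    have hsmall : ∀ᶠ h in 𝓝 (0 : Euc n), (|b| * (C + 2) * (2 * B)) * ‖h‖ ≤ η / 3 := by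
      have : Continuous fun h : Euc n => (|b| * (C + 2) * (2 * B)) * ‖h‖ := by fun_prop
      have h0 := this.tendsto 0
      simp only [norm_zero, mul_zero] at h0
      filter_upwards [h0.eventually (gt_mem_nhds (show (0 : ℝ) < η / 3 by positivity))] with h hh
        using hh.le
    filter_upwards [hf 1 one_pos, hlin, hsmall] with h h1 h2 h3
    have h4 := abs_real_inner_le_norm p h
    have h5 := hC h
    have h8 := norm_nonneg h
    have e1 : |(f (x + h) - f x) - inner ℝ p h| ≤ (C + 2) * ‖h‖ ^ 2 := by
      have h80 := sq_nonneg ‖h‖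
      rw [abs_le] at *
      constructor <;> nlinarith
    have e2 : |(f (x + h) - f x) + inner ℝ p h| ≤ 2 * B * ‖h‖ := by
      have : ‖p‖ * ‖h‖ ≤ B * ‖h‖ := by gcongr; linarith
      calc _ ≤ |f (x + h) - f x| + |inner ℝ p h| := abs_add_le _ _
        _ ≤ _ := by linarith
    calc |(1 / 2) * b * ((f (x + h) - f x) ^ 2 - (inner ℝ p h) ^ 2)|
        = 1 / 2 * |b| * (|(f (x + h) - f x) - inner ℝ p h| * |(f (x + h) - f x) + inner ℝ p h|) := by
          rw [← abs_mul, abs_mul, abs_mul, abs_of_pos (by norm_num : (0 : ℝ) < 1 / 2)]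
          congr 2; ring
      _ ≤ 1 / 2 * |b| * (((C + 2) * ‖h‖ ^ 2) * (2 * B * ‖h‖)) := by gcongr
      _ = 1 / 2 * ((|b| * (C + 2) * (2 * B)) * ‖h‖) * ‖h‖ ^ 2 := by ring
      _ ≤ 1 / 2 * (η / 3) * ‖h‖ ^ 2 := by gcongr
      _ ≤ _ := by nlinarith [sq_nonneg ‖h‖]
  filter_upwards [hf _ hη2, hlin, hs.eventually (hG _ hη1), hsq] with h h1 h2 h3 h4
  have e0 : f x + (f (x + h) - f x) = f (x + h) := by ring
  rw [e0] at h3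
  have e1 : η / (3 * B ^ 2) * (f (x + h) - f x) ^ 2 ≤ η / 3 * ‖h‖ ^ 2 := by
    have : (f (x + h) - f x) ^ 2 ≤ (B * ‖h‖) ^ 2 := by
      rw [← sq_abs]; gcongr
    calc _ ≤ η / (3 * B ^ 2) * (B * ‖h‖) ^ 2 := by gcongr
      _ = _ := by field_simp
  have e2 : |a * (f (x + h) - f x - inner ℝ p h - 1 / 2 * q h)| ≤ η / 3 * ‖h‖ ^ 2 := by
    rw [abs_mul]
    calc _ ≤ |a| * (η / (3 * (|a| + 1)) * ‖h‖ ^ 2) := by gcongr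
      _ ≤ (|a| + 1) * (η / (3 * (|a| + 1)) * ‖h‖ ^ 2) := by gcongr; linarith
      _ = _ := by field_simp
  simp only [inner_smul_left, conj_trivial]
  have := h3.trans e1
  rw [abs_le] at *
  constructor <;> linarith

lemma T2_poly {n : ℕ} (c : ℝ) (x p : Euc n) {q : Euc n → ℝ} (hq : IsQF q) :
    T2 (fun y => c + inner ℝ p (y - x) + (1 / 2) * q (y - x)) x p q := by
  intro η hη
  have h0 : q 0 = 0 := by obtain ⟨A, hA⟩ := hq; simp [hA]
  refine Eventually.of_forall fun h => ?_
  have : c + inner ℝ p (x + h - x) + (1 / 2) * q (x + h - x) - (c + inner ℝ p (x - x) +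
    (1 / 2) * q (x - x)) - inner ℝ p h - 1 / 2 * q h = 0 := by
    simp [h0]; ring
  rw [this]; simp; positivity

lemma UB.comp {n : ℕ} {f : Euc n → ℝ} {x p : Euc n} {q : Euc n → ℝ} (hf : UB f x p q)
    (hq : IsQF q) {G : ℝ → ℝ} {a b : ℝ} (hG : T1 G (f x) a b) {s : Set ℝ} (hs : s ∈ 𝓝 (f x))
    (hmono : MonotoneOn G s) (hfs : ∀ y, f y ∈ s) :
    UB (fun y => G (f y)) x (a • p) (fun h => a * q h + b * (inner ℝ p h) ^ 2) := by
  intro η hη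
  set θ := η / (2 * (|a| + 1)) with hθ
  have hθp : 0 < θ := by positivity
  have hq' : IsQF (fun h => q h + (2 * θ) * ‖h‖ ^ 2) := hq.add (isQF_norm.smul _)
  have hT := T2_poly (f x) x p hq'
  have h0 : q 0 = 0 := by obtain ⟨A, hA⟩ := hq; simp [hA]
  have hT2 := hT.comp hq' (G := G) (a := a) (b := b) (by simpa [h0] using hG)
  have hcont : Tendsto (fun h => f x + inner ℝ p (x + h - x) + (1 / 2) * (q (x + h - x) +
      (2 * θ) * ‖x + h - x‖ ^ 2)) (𝓝 0) (𝓝 (f x)) := by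
    have hqc := hq.continuous
    have : Continuous fun h => f x + inner ℝ p (x + h - x) + (1 / 2) * (q (x + h - x) +
      (2 * θ) * ‖x + h - x‖ ^ 2) := by fun_prop
    have h1 := this.tendsto 0
    simpa [h0] using h1
  filter_upwards [hf θ hθp, hT2 (η / 2) (by positivity), hcont hs] with h h1 h2 h3
  have h4 : f (x + h) ≤ f x + inner ℝ p (x + h - x) + (1 / 2) * (q (x + h - x) +
      (2 * θ) * ‖x + h - x‖ ^ 2) := by
    simp only [add_sub_cancel_left]; linarith
  have h5 := hmono (hfs _) h3 h4
  have h6 := (abs_le.1 h2).2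
  simp only [sub_self, h0, inner_zero_right, norm_zero] at h6
  have h7 : a * θ ≤ η / 2 := by
    calc a * θ ≤ (|a| + 1) * θ := by gcongr; linarith [le_abs_self a]
      _ = _ := by rw [hθ]; field_simp
  have h8 : a * θ * ‖h‖ ^ 2 ≤ η / 2 * ‖h‖ ^ 2 := by gcongr
  simp only [add_sub_cancel_left, zero_pow, ne_eq, OfNat.ofNat_ne_zero, not_false_eq_true,
    mul_zero, add_zero] at h5 h6 ⊢
  nlinarith

lemma UB.congr {n : ℕ} {f : Euc n → ℝ} {x p p' : Euc n} {q q' : Euc n → ℝ} (hf : UB f x p q)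
    (hp : p = p') (hq : ∀ h, q h = q' h) : UB f x p' q' := by
  subst hp
  have : q = q' := funext hq
  rwa [← this]

/-- from touching above by a function with an upper expansion -/
lemma UB.of_touch {n : ℕ} {f g : Euc n → ℝ} {x p : Euc n} {q : Euc n → ℝ} (hg : UB g x p q)
    (H : ∀ᶠ y in 𝓝 x, f y - g y ≤ f x - g x) : UB f x p q := by
  intro η hη
  have ht : Tendsto (fun h : Euc n => x + h) (𝓝 0) (𝓝 x) := by
    have : Continuous fun h : Euc n => x + h := by fun_prop
    simpa using this.tendsto 0
  filter_upwards [hg η hη, ht.eventually H] with h h1 h2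
  linarith

/-- sum of an upper expansion and a Taylor expansion -/
lemma UB.add {n : ℕ} {f g : Euc n → ℝ} {x p p' : Euc n} {q q' : Euc n → ℝ} (hf : UB f x p q)
    (hg : UB g x p' q') : UB (fun y => f y + g y) x (p + p') (fun h => q h + q' h) := by
  intro η hη
  filter_upwards [hf (η / 2) (by positivity), hg (η / 2) (by positivity)] with h h1 h2
  simp only [inner_add_left]
  linarith

/-! ### the Moebius form -/

/-- the Moebius form with hessian `-Z` -/
def mob {n : ℕ} (p : Euc n) (Z : Euc n → ℝ) (h : Euc n) : ℝ :=
  Z h + (inner ℝ p h) ^ 2 - (1 / 2) * ‖p‖ ^ 2 * ‖h‖ ^ 2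

lemma isQF_mob {n : ℕ} (p : Euc n) {Z : Euc n → ℝ} (hZ : IsQF Z) : IsQF (mob p Z) :=
  (hZ.add (isQF_inner p)).sub (isQF_norm.smul _)

/-- viscosity subsolution, second order form -/
def SubV {n : ℕ} (Γ : Set (Fin n → ℝ)) (v : Euc n → ℝ) : Prop :=
  ∀ x p X, IsQF X → UB v x p X → EI (mob p (fun h => - X h)) Γᶜ

/-- viscosity supersolution for `-ω`, second order form -/
def SupL {n : ℕ} (Γ : Set (Fin n → ℝ)) (Ω : Set (Euc n)) (ω : Euc n → ℝ) : Prop :=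
  ∀ x ∈ Ω, ∀ p Z, IsQF Z → UB ω x p Z → EI (mob p Z) (closure Γ)

/-- the polynomial test function -/
def tst {n : ℕ} (c : ℝ) (x₀ a : Euc n) (A : Euc n →L[ℝ] Euc n) (x : Euc n) : ℝ :=
  c + inner ℝ a (x - x₀) + (1 / 2) * inner ℝ (A (x - x₀)) (x - x₀)

lemma tst_contDiff {n : ℕ} (c : ℝ) (x₀ a : Euc n) (A : Euc n →L[ℝ] Euc n) :
    ContDiff ℝ 2 (tst c x₀ a A) := by
  have h1 : ContDiff ℝ 2 fun x : Euc n => x - x₀ := by fun_prop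
  have h2 : ContDiff ℝ 2 fun x : Euc n => A (x - x₀) := by fun_prop
  exact (contDiff_const.add (contDiff_const.inner ℝ h1)).add (contDiff_const.mul (h2.inner ℝ h1))

lemma tst_fderiv {n : ℕ} (c : ℝ) (x₀ a : Euc n) (A : Euc n →L[ℝ] Euc n) (x e : Euc n) :
    fderiv ℝ (tst c x₀ a A) x e = inner ℝ a e + (1 / 2) * (inner ℝ (A e) (x - x₀)
      + inner ℝ (A (x - x₀)) e) := by
  have h1 : HasFDerivAt (fun x : Euc n => x - x₀) (ContinuousLinearMap.id ℝ _) x :=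
    (hasFDerivAt_id x).sub_const x₀
  have h2 : HasFDerivAt (fun x : Euc n => A (x - x₀)) (A ∘L ContinuousLinearMap.id ℝ _) x :=
    A.hasFDerivAt.comp x h1
  have h3 := (h2.inner ℝ h1).const_mul (1 / 2 : ℝ)
  have h4 := ((hasFDerivAt_const a x).inner ℝ h1).const_add c
  have h5 := (h4.add h3).fderiv
  have h6 : tst c x₀ a A = ((fun x => c + inner ℝ a (x - x₀)) + fun y => 1 / 2 * inner ℝ (A (y - x₀)) (y - x₀)) := rfl
  rw [h6, h5]
  simp
  ring

lemma mobius_tst {n : ℕ} (c : ℝ) (x₀ a : Euc n) (A : Euc n →L[ℝ] Euc n) (h : Euc n) :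
    qf (mobius (tst c x₀ a A) x₀) h =
      Real.exp (-2 * c) * mob a (fun h => - inner ℝ (A h) h) h := by
  have hv : tst c x₀ a A x₀ = c := by simp [tst]
  have hg : ∀ i, pgrad (tst c x₀ a A) x₀ i = a i := by
    intro i; rw [pgrad, tst_fderiv]; simp [EuclideanSpace.inner_single_right]
  have hh : ∀ i j, phess (tst c x₀ a A) x₀ i j =
      (1 / 2) * (inner ℝ (A (EuclideanSpace.single j 1)) (EuclideanSpace.single i 1)
        + inner ℝ (A (EuclideanSpace.single i 1)) (EuclideanSpace.single j 1)) := by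
    intro i j
    rw [phess]
    simp_rw [tst_fderiv]
    set ei : Euc n := EuclideanSpace.single i 1
    set ej : Euc n := EuclideanSpace.single j 1
    have h1 : HasFDerivAt (fun x : Euc n => x - x₀) (ContinuousLinearMap.id ℝ _) x₀ :=
      (hasFDerivAt_id x₀).sub_const x₀
    have h2 : HasFDerivAt (fun x : Euc n => A (x - x₀)) (A ∘L ContinuousLinearMap.id ℝ _) x₀ :=
      A.hasFDerivAt.comp x₀ h1
    have h3 := ((hasFDerivAt_const (A ej) x₀).inner ℝ h1)
    have h4 := (h2.inner ℝ (hasFDerivAt_const ej x₀))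
    have h5 := (((h3.add h4).const_mul (1 / 2 : ℝ)).const_add (inner ℝ a ej)).fderiv
    have h6 := congrArg (fun L : Euc n →L[ℝ] ℝ => L ei) h5
    simp only [Pi.add_apply] at h6
    rw [h6]
    simp
    ring
  have hn : ‖a‖ ^ 2 = ∑ k, a k ^ 2 := by simp [EuclideanSpace.norm_sq_eq]
  have hn' : ‖h‖ ^ 2 = ∑ k, h k ^ 2 := by simp [EuclideanSpace.norm_sq_eq]
  have hi : inner ℝ a h = ∑ k, a k * h k := by
    simp [PiLp.inner_apply, mul_comm]
  have hA : inner ℝ (A h) h = ∑ i, ∑ j, (1 / 2) * (inner ℝ (A (EuclideanSpace.single j 1)) (EuclideanSpace.single i 1)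
        + inner ℝ (A (EuclideanSpace.single i 1)) (EuclideanSpace.single j 1)) * h i * h j := by
    have e : h = ∑ i, h i • (EuclideanSpace.single i 1 : Euc n) := by
      conv_lhs => rw [← (EuclideanSpace.basisFun (Fin n) ℝ).sum_repr h]
      simp
    have h1 : inner ℝ (A h) h = ∑ i, ∑ j, inner ℝ (A (EuclideanSpace.single i 1)) (EuclideanSpace.single j 1 : Euc n) * h i * h j := by
      conv_lhs => rw [e]
      simp only [map_sum, sum_inner, inner_sum, map_smul, inner_smul_left, inner_smul_right]
      simp_rw [Finset.mul_sum]
      rw [Finset.sum_comm]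
      refine Finset.sum_congr rfl fun i _ => ?_
      refine Finset.sum_congr rfl fun j _ => ?_
      simp only [conj_trivial]; ring
    have h2 := h1
    rw [Finset.sum_comm] at h2
    have h3 : inner ℝ (A h) h = (1 / 2 : ℝ) * (inner ℝ (A h) h + inner ℝ (A h) h) := by ring
    rw [h3]; nth_rw 1 [h1]; rw [h2, ← Finset.sum_add_distrib, Finset.mul_sum]
    refine Finset.sum_congr rfl fun i _ => ?_
    rw [← Finset.sum_add_distrib, Finset.mul_sum]
    refine Finset.sum_congr rfl fun j _ => ?_
    ring
  have e1 : (∑ k, a k * h k) ^ 2 = ∑ i, ∑ j, a i * a j * h i * h j := by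
    rw [pow_two, Finset.sum_mul_sum]
    refine Finset.sum_congr rfl fun i _ => Finset.sum_congr rfl fun j _ => by ring
  have e2 : (1 / 2) * ‖a‖ ^ 2 * ‖h‖ ^ 2 = ∑ i, ∑ j, (1 / 2) * ‖a‖ ^ 2 * (if i = j then (1 : ℝ) else 0) * h i * h j := by
    rw [hn', Finset.mul_sum]
    refine Finset.sum_congr rfl fun i _ => ?_
    simp
    ring
  rw [mob, hi, e1, e2, hA]
  simp only [qf, mobius, hv, hg, hh, ← hn]
  rw [← Finset.sum_neg_distrib, ← Finset.sum_add_distrib, ← Finset.sum_sub_distrib, Finset.mul_sum]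
  refine Finset.sum_congr rfl fun i _ => ?_
  rw [← Finset.sum_neg_distrib, ← Finset.sum_add_distrib, ← Finset.sum_sub_distrib, Finset.mul_sum]
  refine Finset.sum_congr rfl fun j _ => ?_
  simp only [Matrix.smul_apply, Matrix.of_apply, smul_eq_mul]
  ring

lemma subV_of {n : ℕ} {Γ : Set (Fin n → ℝ)} (hΓ : CondC Γ) {v : Euc n → ℝ}
    (h : Subsol Γ Set.univ v) : SubV Γ v := by
  rintro x p X ⟨A, hA⟩ hu
  have hX : IsQF X := ⟨A, hA⟩
  refine EI.of_shift (hΓ.2.2.1.isClosed_compl) (isQF_mob p hX.neg) (-2) fun η hη => ?_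
  let B : Euc n →L[ℝ] Euc n := A + (2 * η) • ContinuousLinearMap.id ℝ _
  have hB : ∀ h, inner ℝ (B h) h = X h + 2 * η * ‖h‖ ^ 2 := by
    intro h; simp [B, inner_add_left, inner_smul_left, hA]
  have H := h x (mem_univ _) (tst (v x) x p B) (tst_contDiff _ _ _ _) (by simp [tst]) (by
    rw [nhdsWithin_univ]
    have ht : Tendsto (fun y : Euc n => y - x) (𝓝 x) (𝓝 0) := by
      have : Continuous fun y : Euc n => y - x := by fun_prop
      simpa using this.tendsto x
    filter_upwards [ht.eventually (hu η hη)] with y hy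
    rw [tst, hB]
    simp only [add_sub_cancel] at hy
    linarith)
  have hq : IsQF (fun h => mob p (fun h => -X h) h + -2 * η * ‖h‖ ^ 2) :=
    (isQF_mob p hX.neg).add (isQF_norm.smul _)
  refine EI.scale (Real.exp (-2 * v x)) (Real.exp_pos _) ?_ ⟨_, H, fun h => ?_⟩ hq
  · intro a ha ha'
    exact ha (hΓ.2.2.2.2.1 a ha' _ (Real.exp_pos _))
  · rw [mobius_tst]; simp only [mob, hB]; ring

lemma supL_of {n : ℕ} {Γ : Set (Fin n → ℝ)} (hΓ : CondC Γ) {v : Euc n → ℝ}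
    (h : Supersol Γ Set.univ v) : SupL Γ Set.univ (fun x => - v x) := by
  rintro x - p X ⟨A, hA⟩ hu
  have hX : IsQF X := ⟨A, hA⟩
  refine EI.of_shift isClosed_closure (isQF_mob p hX) 2 fun η hη => ?_
  let B : Euc n →L[ℝ] Euc n := -(A + (2 * η) • ContinuousLinearMap.id ℝ _)
  have hB : ∀ h, inner ℝ (B h) h = -(X h + 2 * η * ‖h‖ ^ 2) := by
    intro h; simp [B, inner_add_left, inner_smul_left, hA]
  have H := h x (mem_univ _) (tst (v x) x (-p) B) (tst_contDiff _ _ _ _) (by simp [tst]) (by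
    rw [nhdsWithin_univ]
    have ht : Tendsto (fun y : Euc n => y - x) (𝓝 x) (𝓝 0) := by
      have : Continuous fun y : Euc n => y - x := by fun_prop
      simpa using this.tendsto x
    filter_upwards [ht.eventually (hu η hη)] with y hy
    rw [tst, hB]
    simp only [add_sub_cancel, inner_neg_left] at hy ⊢
    linarith)
  have hq : IsQF (fun h => mob p X h + 2 * η * ‖h‖ ^ 2) :=
    (isQF_mob p hX).add (isQF_norm.smul _)
  refine EI.mono hΓ ⟨_, H, fun h => rfl⟩ hq (LinearIsometryEquiv.refl ℝ _)
    (Real.exp (2 * v x)) (Real.exp_pos _) fun h => ?_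
  rw [mobius_tst, ← mul_assoc, ← Real.exp_add]; simp only [mob, hB]
  simp
  linarith

/-! ### radial barrier -/

lemma T2_sq {n : ℕ} (x₀ x : Euc n) :
    T2 (fun y => ‖y - x₀‖ ^ 2) x ((2 : ℝ) • (x - x₀)) (fun h => 2 * ‖h‖ ^ 2) := by
  intro η hη
  refine Eventually.of_forall fun h => ?_
  have e : x + h - x₀ = (x - x₀) + h := by abel
  have : ‖x + h - x₀‖ ^ 2 - ‖x - x₀‖ ^ 2 - inner ℝ ((2 : ℝ) • (x - x₀)) h - 1 / 2 * (2 * ‖h‖ ^ 2)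
      = 0 := by
    rw [e, norm_add_sq_real, inner_smul_left]
    simp; ring
  rw [this]; simp; positivity

/-- the barrier profile -/
def bar (k S s : ℝ) : ℝ := -(1 / k) * Real.log (1 - (s / S) ^ k)

lemma T1_bar {k S s : ℝ} (hk : k ≠ 0) (hS : 0 < S) (hs : 0 < s) (hu : (s / S) ^ k < 1) :
    T1 (bar k S) s ((s / S) ^ k / (s * (1 - (s / S) ^ k)))
      ((s / S) ^ k * (k - 1 + (s / S) ^ k) / (s ^ 2 * (1 - (s / S) ^ k) ^ 2)) := by
  have du : ∀ t : ℝ, 0 < t → HasDerivAt (fun t => (t / S) ^ k) (k * (t / S) ^ k / t) t := by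
    intro t ht
    have h1 : HasDerivAt (fun t : ℝ => t / S) (1 / S) t := (hasDerivAt_id t).div_const S
    have h2 := h1.rpow_const (p := k) (Or.inl (by positivity))
    refine h2.congr_deriv ?_
    rw [Real.rpow_sub_one (by positivity)]
    field_simp
  have hcont : ContinuousAt (fun t => (t / S) ^ k) s := (du s hs).continuousAt
  have hev : ∀ᶠ t in 𝓝 s, 0 < t ∧ (t / S) ^ k < 1 :=
    (lt_mem_nhds hs).and (hcont.eventually (gt_mem_nhds hu))
  refine taylor1 (G' := fun s => (s / S) ^ k / (s * (1 - (s / S) ^ k))) ?_ ?_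
  · filter_upwards [hev] with t ht
    have h1 := ((du t ht.1).const_sub 1).log (by linarith [ht.2])
    have h2 := h1.const_mul (-(1 / k))
    refine h2.congr_deriv ?_
    have : 1 - (t / S) ^ k ≠ 0 := by linarith [ht.2]
    have := ht.1
    field_simp
  · have h3 := (du s hs).div ((hasDerivAt_id s).mul ((du s hs).const_sub 1)) (by
      have : 0 < 1 - (s / S) ^ k := by linarith
      simp; exact ⟨hs.ne', this.ne'⟩)
    refine h3.congr_deriv ?_
    have : 1 - (s / S) ^ k ≠ 0 := by linarith
    simp
    field_simp
    ring

lemma barrier {n : ℕ} (x₀ x : Euc n) (hx : x ≠ x₀) {k S : ℝ} (hk : k ≠ 0) (hS : 0 < S)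
    (hu : (‖x - x₀‖ ^ 2 / S) ^ k < 1) :
    ∃ p X, IsQF X ∧ T2 (fun y => bar k S (‖y - x₀‖ ^ 2)) x p X ∧ ∃ β : ℝ, 0 < β ∧ ∃ e : Euc n,
      ‖e‖ = 1 ∧ ∀ h, mob p (fun h => - X h) h =
        β * ((2 - 2 * k) * (inner ℝ e h) ^ 2 + (-1) * ‖h‖ ^ 2) := by
  have hd : 0 < ‖x - x₀‖ := norm_pos_iff.2 (sub_ne_zero.2 hx)
  have hs : 0 < ‖x - x₀‖ ^ 2 := by positivity
  have hT := (T2_sq x₀ x).comp (isQF_norm.smul 2) (T1_bar hk hS hs hu)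
  have hup : 0 < (‖x - x₀‖ ^ 2 / S) ^ k := by positivity
  refine ⟨_, _, ?_, hT, ?_⟩
  · exact ((isQF_norm.smul 2).smul _).add ((isQF_inner _).smul _)
  set u := (‖x - x₀‖ ^ 2 / S) ^ k
  have h1u : 0 < 1 - u := by linarith
  refine ⟨2 * u / (‖x - x₀‖ ^ 2 * (1 - u) ^ 2), by positivity, (‖x - x₀‖)⁻¹ • (x - x₀), ?_, ?_⟩
  · rw [norm_smul]; simp [hd.ne']
  · intro h
    simp only [mob, inner_smul_left, conj_trivial, norm_smul, Real.norm_eq_abs, mul_pow, sq_abs]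
    field_simp
    ring

lemma case1_aux {n : ℕ} (hn : 2 ≤ n) {Γ : Set (Fin n → ℝ)} (hΓ : CondC Γ) {c : ℝ} (hc : 0 < c)
    (ht : tup n (2 - 2 * c) (-1) ∈ Γ) {v : Euc n → ℝ} (hv : Continuous v) (hsub : SubV Γ v)
    (x₀ x : Euc n) {R : ℝ} (hR : 0 < R) (hxR : ‖x - x₀‖ ≤ R) :
    Real.exp (c * v x) * (1 - (‖x - x₀‖ ^ 2 / R ^ 2) ^ c) ≤ Real.exp (c * v x₀) := by
  set Ψ : Euc n → ℝ := fun y => Real.exp (c * v y) * (1 - (‖y - x₀‖ ^ 2 / R ^ 2) ^ c) with hΨ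
  have hcont : Continuous Ψ := by
    have h1 : Continuous fun y : Euc n => (‖y - x₀‖ ^ 2 / R ^ 2) ^ c := by
      refine Continuous.rpow_const (by fun_prop) (fun _ => Or.inr hc.le)
    fun_prop
  obtain ⟨z, hz, hmax⟩ := (isCompact_closedBall x₀ R).exists_isMaxOn
    ⟨x₀, by simp [hR.le]⟩ hcont.continuousOn
  have hmax' : ∀ y ∈ closedBall x₀ R, Ψ y ≤ Ψ z := fun y hy => hmax hy
  have h0 : Ψ x₀ = Real.exp (c * v x₀) := by simp [hΨ, hc.ne']
  have hx : Ψ x ≤ Ψ z := hmax' x (by simpa [dist_eq_norm] using hxR)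
  by_cases hzx : z = x₀
  · rw [hzx, h0] at hx; exact hx
  exfalso
  have hpos : 0 < Ψ z := by
    have := hmax' x₀ (by simp [hR.le])
    rw [h0] at this
    exact lt_of_lt_of_le (Real.exp_pos _) this
  have hu : (‖z - x₀‖ ^ 2 / R ^ 2) ^ c < 1 := by
    have := (mul_pos_iff_of_pos_left (Real.exp_pos _)).1 hpos
    linarith
  have hzR : ‖z - x₀‖ < R := by
    by_contra hcon
    have h1 : 1 ≤ ‖z - x₀‖ ^ 2 / R ^ 2 := by
      rw [le_div_iff₀ (by positivity)]
      have := not_lt.1 hcon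
      nlinarith
    have := Real.one_le_rpow h1 hc.le
    linarith
  obtain ⟨p, X, hX, hT, β, hβ, e, he, hm⟩ := barrier x₀ z hzx hc.ne' (by positivity : 0 < R ^ 2) hu
  have hUB : UB v z p X := by
    refine hT.ub.of_touch ?_
    have hev1 : ∀ᶠ y in 𝓝 z, 0 < Ψ y := hcont.continuousAt.eventually (lt_mem_nhds hpos)
    have hev2 : ∀ᶠ y in 𝓝 z, y ∈ ball x₀ R := isOpen_ball.mem_nhds (by
      simpa [dist_eq_norm] using hzR)
    filter_upwards [hev1, hev2] with y hy1 hy2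
    have h1 : 0 < 1 - (‖y - x₀‖ ^ 2 / R ^ 2) ^ c :=
      (mul_pos_iff_of_pos_left (Real.exp_pos _)).1 hy1
    have h2 : 0 < 1 - (‖z - x₀‖ ^ 2 / R ^ 2) ^ c := by linarith
    have h3 := Real.log_le_log hy1 (hmax' y (ball_subset_closedBall hy2))
    simp only [hΨ] at h3
    rw [Real.log_mul (Real.exp_pos _).ne' h1.ne', Real.log_mul (Real.exp_pos _).ne' h2.ne',
      Real.log_exp, Real.log_exp] at h3
    simp only [bar]
    rw [← mul_le_mul_iff_right₀ hc]
    field_simp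
    linarith
  have h1 := hsub z p X hX hUB
  have h2 : EI (fun h => β * ((2 - 2 * c) * (inner ℝ e h) ^ 2 + (-1) * ‖h‖ ^ 2)) Γᶜ := by
    have : mob p (fun h => - X h) = fun h => β * ((2 - 2 * c) * (inner ℝ e h) ^ 2 + (-1) * ‖h‖ ^ 2) :=
      funext hm
    rwa [this] at h1
  have h3 := EI.scale (S := Γᶜ) β hβ (fun a ha ha' => ha (hΓ.2.2.2.2.1 a ha' _ hβ)) h2 (isQF_rank e _ _)
  exact (rank_in hn hΓ he ht).unique h3

lemma case1 {n : ℕ} (hn : 2 ≤ n) {Γ : Set (Fin n → ℝ)} (hΓ : CondC Γ)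
    (hl : lamStar n ∈ Γ) {v : Euc n → ℝ} (hv : Continuous v) (hsub : SubV Γ v)
    (x₀ x : Euc n) : v x ≤ v x₀ := by
  obtain ⟨c, hc, ht⟩ : ∃ c : ℝ, 0 < c ∧ tup n (2 - 2 * c) (-1) ∈ Γ := by
    have h1 : Continuous fun c : ℝ => tup n (2 - 2 * c) (-1) := by
      refine continuous_pi fun i => ?_
      by_cases hi : i.val = 0 <;> simp only [tup, hi, if_true, if_false] <;> fun_prop
    have h2 : tup n (2 - 2 * 0) (-1) = lamStar n := by
      ext i; simp only [tup, lamStar]; split_ifs <;> norm_num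
    have h3 : ∀ᶠ c in 𝓝 (0 : ℝ), tup n (2 - 2 * c) (-1) ∈ Γ :=
      h1.continuousAt.eventually (hΓ.2.2.1.mem_nhds (by simp only [h2]; exact hl))
    have h4 := (h3.filter_mono (nhdsWithin_le_nhds (s := Ioi 0))).and self_mem_nhdsWithin
    obtain ⟨c, h5, h6⟩ := h4.exists
    exact ⟨c, h6, h5⟩
  have hlim : Tendsto (fun R : ℝ => Real.exp (c * v x) * (1 - (‖x - x₀‖ ^ 2 / R ^ 2) ^ c)) atTop
      (𝓝 (Real.exp (c * v x) * (1 - 0))) := by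
    refine Tendsto.const_mul _ (Tendsto.const_sub _ ?_)
    have h1 : Tendsto (fun R : ℝ => ‖x - x₀‖ ^ 2 / R ^ 2) atTop (𝓝 0) :=
      tendsto_const_nhds.div_atTop (tendsto_pow_atTop two_ne_zero)
    have h2 := h1.rpow_const (p := c) (Or.inr hc.le)
    rwa [Real.zero_rpow hc.ne'] at h2
  have := le_of_tendsto hlim (b := Real.exp (c * v x₀)) (by
    filter_upwards [eventually_gt_atTop 0, eventually_ge_atTop ‖x - x₀‖] with R h1 h2
    exact case1_aux hn hΓ hc ht hv hsub x₀ x h1 h2)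
  simp only [sub_zero, mul_one, Real.exp_le_exp] at this
  exact le_of_mul_le_mul_left this hc

/-! ### boundary control near an isolated singularity -/

lemma sing_bound {n : ℕ} (hn : 2 ≤ n) {Γ : Set (Fin n → ℝ)} (hΓ : CondC Γ) {δ : ℝ} (hδ : 0 < δ)
    (ht : tup n (2 + δ) (-(1 - δ)) ∉ closure Γ) {ω : Euc n → ℝ} (hω : ContinuousOn ω {0}ᶜ)
    (hsup : SupL Γ {0}ᶜ ω) {M : ℝ} (hM : ∀ y : Euc n, ‖y‖ = 1 → ω y ≤ M)
    (y₀ : Euc n) (hy0 : y₀ ≠ 0) (hy1 : ‖y₀‖ ≤ 1) : ω y₀ ≤ M := by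
  set c := δ / 2 with hcdef
  have hc : 0 < c := by positivity
  have hy0' : 0 < ‖y₀‖ := norm_pos_iff.2 hy0
  have main : ∀ r : ℝ, 0 < r → r < ‖y₀‖ →
      Real.exp (c * ω y₀) * (1 - (‖y₀‖ ^ 2 / r ^ 2) ^ (-c)) ≤ Real.exp (c * M) := by
    intro r hr hry
    set Ψ : Euc n → ℝ := fun y => Real.exp (c * ω y) * (1 - (‖y - 0‖ ^ 2 / r ^ 2) ^ (-c)) with hΨ
    have hcont : ContinuousOn Ψ {0}ᶜ := by
      have h1 : ContinuousOn (fun y : Euc n => (‖y - 0‖ ^ 2 / r ^ 2) ^ (-c)) {0}ᶜ := by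
        refine ContinuousOn.rpow_const (by fun_prop) (fun y hy => Or.inl ?_)
        have : y ≠ 0 := hy
        have : 0 < ‖y‖ := norm_pos_iff.2 this
        simp only [sub_zero]
        positivity
      fun_prop
    set K : Set (Euc n) := closedBall 0 1 ∩ {y | r ≤ ‖y‖} with hK
    have hKc : IsCompact K := (isCompact_closedBall 0 1).inter_right
      (isClosed_le continuous_const continuous_norm)
    have hK0 : K ⊆ {0}ᶜ := by
      rintro y ⟨_, hy⟩ rfl
      simp at hy; linarith
    have hyK : y₀ ∈ K := ⟨by simpa using hy1, hry.le⟩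
    obtain ⟨z, hz, hmax⟩ := hKc.exists_isMaxOn ⟨y₀, hyK⟩ (hcont.mono hK0)
    have hmax' : ∀ y ∈ K, Ψ y ≤ Ψ z := fun y hy => hmax hy
    have hlt1 : ∀ y : Euc n, r < ‖y‖ → (‖y - 0‖ ^ 2 / r ^ 2) ^ (-c) < 1 := by
      intro y hy
      apply Real.rpow_lt_one_of_one_lt_of_neg _ (by linarith)
      rw [lt_div_iff₀ (by positivity), sub_zero]
      nlinarith
    have hpos : 0 < Ψ z := by
      refine lt_of_lt_of_le ?_ (hmax' _ hyK)
      have := hlt1 y₀ hry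
      exact mul_pos (Real.exp_pos _) (by linarith)
    have hx := hmax' _ hyK
    simp only [hΨ, sub_zero] at hx
    refine hx.trans ?_
    have hz1 : ‖z‖ ≤ 1 := by simpa using hz.1
    rcases hz1.eq_or_lt with hz1 | hz1
    · have h1 : 0 ≤ (‖z‖ ^ 2 / r ^ 2) ^ (-c) := by positivity
      calc _ ≤ Real.exp (c * ω z) * 1 := by gcongr; linarith
        _ ≤ _ := by rw [mul_one]; gcongr; exact hM z hz1
    exfalso
    have hu : (‖z - 0‖ ^ 2 / r ^ 2) ^ (-c) < 1 := by
      have := (mul_pos_iff_of_pos_left (Real.exp_pos _)).1 hpos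
      linarith
    have hzr : r < ‖z‖ := by
      refine lt_of_le_of_ne hz.2 fun h => ?_
      rw [sub_zero, ← h, div_self (by positivity)] at hu
      simp at hu
    have hz0 : z ≠ 0 := hK0 hz
    obtain ⟨p, X, hX, hT, β, hβ, e, he, hm⟩ := barrier 0 z hz0 (by linarith : -c ≠ 0)
      (by positivity : 0 < r ^ 2) hu
    have hUB : UB ω z (-p) (fun h => - X h) := by
      refine UB.of_touch (g := fun y => - bar (-c) (r ^ 2) (‖y - 0‖ ^ 2)) ?_ ?_
      · intro η hη
        filter_upwards [hT η hη] with h hh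
        have := (abs_le.1 hh).1
        simp only [inner_neg_left]
        linarith
      have hev2 : ∀ᶠ y in 𝓝 z, ‖y‖ < 1 ∧ r < ‖y‖ :=
        (continuous_norm.continuousAt.eventually (gt_mem_nhds hz1)).and
          (continuous_norm.continuousAt.eventually (lt_mem_nhds hzr))
      filter_upwards [hev2] with y hy
      have h1 : 0 < 1 - (‖y - 0‖ ^ 2 / r ^ 2) ^ (-c) := by linarith [hlt1 y hy.2]
      have h2 : 0 < 1 - (‖z - 0‖ ^ 2 / r ^ 2) ^ (-c) := by linarith
      have h3 := Real.log_le_log (mul_pos (Real.exp_pos _) h1)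
        (hmax' y ⟨by simpa using hy.1.le, hy.2.le⟩)
      simp only [hΨ] at h3
      rw [Real.log_mul (Real.exp_pos _).ne' h1.ne', Real.log_mul (Real.exp_pos _).ne' h2.ne',
        Real.log_exp, Real.log_exp] at h3
      simp only [bar]
      rw [← mul_le_mul_iff_right₀ hc]
      field_simp
      linarith
    have h1 := hsup z hz0 _ _ hX.neg hUB
    refine rank_not hn hΓ he ht hβ h1 fun h => ?_
    have h2 : mob (-p) (fun h => -X h) h = mob p (fun h => -X h) h := by simp [mob]
    rw [h2, hm]
    refine mul_le_mul_of_nonneg_left ?_ hβ.le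
    have h3 := sq_nonneg ‖h‖
    have h4 := sq_nonneg (inner ℝ e h)
    rw [hcdef]
    nlinarith
  have hlim : Tendsto (fun r : ℝ => Real.exp (c * ω y₀) * (1 - (‖y₀‖ ^ 2 / r ^ 2) ^ (-c))) (𝓝[>] 0)
      (𝓝 (Real.exp (c * ω y₀) * (1 - 0))) := by
    refine Tendsto.const_mul _ (Tendsto.const_sub _ ?_)
    have h1 : Tendsto (fun r : ℝ => ((r ^ 2) / ‖y₀‖ ^ 2) ^ c) (𝓝[>] 0) (𝓝 0) := by
      have : Continuous fun r : ℝ => ((r ^ 2) / ‖y₀‖ ^ 2) ^ c :=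
        Continuous.rpow_const (by fun_prop) (fun _ => Or.inr hc.le)
      have h2 := this.tendsto 0
      simp only [ne_eq, OfNat.ofNat_ne_zero, not_false_eq_true, zero_pow, zero_div,
        Real.zero_rpow hc.ne'] at h2
      exact h2.mono_left nhdsWithin_le_nhds
    refine h1.congr fun r => ?_
    rw [Real.rpow_neg (by positivity), ← Real.inv_rpow (by positivity), inv_div]
  have := le_of_tendsto hlim (b := Real.exp (c * M)) (by
    filter_upwards [self_mem_nhdsWithin, Ioo_mem_nhdsGT hy0'] with r h1 h2
    exact main r h1 h2.2)
  simp only [sub_zero, mul_one, Real.exp_le_exp] at this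
  exact le_of_mul_le_mul_left this hc

/-! ### sup-convolutions and the theorem on sums -/

lemma coercive_min {n : ℕ} {f : Euc n → ℝ} (hf : Continuous f) {a b c : ℝ} (ha : 0 < a)
    (h : ∀ z, a * ‖z‖ ^ 2 - b * ‖z‖ - c ≤ f z) : ∃ z, ∀ z', f z ≤ f z' := by
  apply hf.exists_forall_le
  have h1 : Tendsto (fun t : ℝ => t * (a * t - b) + (-c)) atTop atTop := by
    apply tendsto_atTop_add_const_right
    apply tendsto_id.atTop_mul_atTop₀
    exact tendsto_atTop_add_const_right _ _ (tendsto_id.const_mul_atTop ha)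
  refine tendsto_atTop_mono ?_ (h1.comp (tendsto_norm_cocompact_atTop (E := Euc n)))
  intro z
  have := h z
  simp only [Function.comp]
  linarith

/-- `f` is the sup-convolution of `u` on `K` -/
def SC {n : ℕ} (u : Euc n → ℝ) (K : Set (Euc n)) (κ : ℝ) (f : Euc n → ℝ) : Prop :=
  (∀ z, ∃ x ∈ K, f z = u x - κ / 2 * ‖x - z‖ ^ 2) ∧
    ∀ x ∈ K, ∀ z, u x - κ / 2 * ‖x - z‖ ^ 2 ≤ f z

lemma SC.exists {n : ℕ} {u : Euc n → ℝ} {K : Set (Euc n)} (hK : IsCompact K) (hne : K.Nonempty)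
    (hu : UpperSemicontinuousOn u K) (κ : ℝ) : ∃ f, SC u K κ f := by
  have : ∀ z : Euc n, ∃ x ∈ K, ∀ x' ∈ K, u x' - κ / 2 * ‖x' - z‖ ^ 2 ≤ u x - κ / 2 * ‖x - z‖ ^ 2 := by
    intro z
    have hc : ContinuousOn (fun x : Euc n => - (κ / 2 * ‖x - z‖ ^ 2)) K := by fun_prop
    have hus : UpperSemicontinuousOn (fun x => u x + - (κ / 2 * ‖x - z‖ ^ 2)) K :=
      hu.add hc.upperSemicontinuousOn
    obtain ⟨x, hx, hm⟩ := hus.exists_isMaxOn hne hK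
    refine ⟨x, hx, fun x' hx' => ?_⟩
    have : u x' + - (κ / 2 * ‖x' - z‖ ^ 2) ≤ u x + - (κ / 2 * ‖x - z‖ ^ 2) := hm hx'
    linarith
  choose m hm hm' using this
  exact ⟨fun z => u (m z) - κ / 2 * ‖m z - z‖ ^ 2, fun z => ⟨m z, hm z, rfl⟩, fun x hx z => hm' z x hx⟩

lemma sq_shift {n : ℕ} (x z d : Euc n) :
    ‖x - (z + d)‖ ^ 2 = ‖x - z‖ ^ 2 - 2 * inner ℝ (x - z) d + ‖d‖ ^ 2 := by
  have : x - (z + d) = (x - z) - d := by abel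
  rw [this, norm_sub_sq_real]

/-- lower paraboloid -/
lemma SC.lower {n : ℕ} {u : Euc n → ℝ} {K : Set (Euc n)} {κ : ℝ} {f : Euc n → ℝ} (h : SC u K κ f)
    {x z : Euc n} (hx : x ∈ K) (hxz : f z = u x - κ / 2 * ‖x - z‖ ^ 2) (d : Euc n) :
    f z + inner ℝ (κ • (x - z)) d - κ / 2 * ‖d‖ ^ 2 ≤ f (z + d) := by
  have := h.2 x hx (z + d)
  rw [sq_shift] at this
  rw [hxz, inner_smul_left]
  simp only [conj_trivial]
  linarith

lemma SC.continuous {n : ℕ} {u : Euc n → ℝ} {K : Set (Euc n)} (hK : IsCompact K) {κ : ℝ}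
    (hκ : 0 < κ) {f : Euc n → ℝ} (h : SC u K κ f) : Continuous f := by
  obtain ⟨R, hR0, hR⟩ := hK.isBounded.exists_pos_norm_le
  have key : ∀ z d, ‖d‖ ≤ 1 → f z - κ * (R + ‖z‖ + 1) * ‖d‖ ≤ f (z + d) := by
    intro z d hd
    obtain ⟨x, hx, hxz⟩ := h.1 z
    have h1 := h.lower hx hxz d
    have h2 := abs_real_inner_le_norm (κ • (x - z)) d
    have h3 : ‖κ • (x - z)‖ ≤ κ * (R + ‖z‖) := by
      rw [norm_smul, Real.norm_eq_abs, abs_of_pos hκ]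
      gcongr
      exact (norm_sub_le _ _).trans (by gcongr; exact hR x hx)
    have h4 : ‖κ • (x - z)‖ * ‖d‖ ≤ κ * (R + ‖z‖) * ‖d‖ := by gcongr
    have h5 : κ / 2 * ‖d‖ ^ 2 ≤ κ * ‖d‖ := by nlinarith [norm_nonneg d, mul_nonneg hκ.le (norm_nonneg d)]
    have h6 := (abs_le.1 h2).1
    linarith
  rw [continuous_iff_continuousAt]
  intro z
  rw [Metric.continuousAt_iff]
  intro ε hε
  refine ⟨min 1 (ε / (κ * (R + ‖z‖ + 2) + 1)), by positivity, fun {z'} hz' => ?_⟩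
  have hd : ‖z' - z‖ < min 1 (ε / (κ * (R + ‖z‖ + 2) + 1)) := by rwa [← dist_eq_norm]
  have h1 : ‖z' - z‖ < 1 := lt_of_lt_of_le hd (min_le_left _ _)
  have h2 : ‖z' - z‖ < ε / (κ * (R + ‖z‖ + 2) + 1) := lt_of_lt_of_le hd (min_le_right _ _)
  rw [lt_div_iff₀ (by positivity)] at h2
  have h3 := key z (z' - z) h1.le
  have h4 := key z' (z - z') (by rw [norm_sub_rev]; exact h1.le)
  rw [norm_sub_rev z z'] at h4
  simp only [add_sub_cancel] at h3 h4
  have h5 : ‖z'‖ ≤ ‖z‖ + 1 := by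
    have : z' = z + (z' - z) := by abel
    rw [this]; exact (norm_add_le _ _).trans (by linarith)
  have h6 : κ * (R + ‖z'‖ + 1) * ‖z' - z‖ ≤ κ * (R + ‖z‖ + 2) * ‖z' - z‖ := by
    exact mul_le_mul_of_nonneg_right (mul_le_mul_of_nonneg_left (by linarith) hκ.le) (norm_nonneg _)
  have h7 : κ * (R + ‖z‖ + 1) * ‖z' - z‖ ≤ κ * (R + ‖z‖ + 2) * ‖z' - z‖ := by
    exact mul_le_mul_of_nonneg_right (mul_le_mul_of_nonneg_left (by linarith) hκ.le) (norm_nonneg _)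
  have h8 := norm_nonneg (z' - z)
  rw [Real.dist_eq, abs_lt]
  constructor <;> linarith

/-- semiconvexity -/
lemma SC.semiconvex {n : ℕ} {u : Euc n → ℝ} {K : Set (Euc n)} {κ : ℝ} {f : Euc n → ℝ}
    (h : SC u K κ f) (z d : Euc n) {t : ℝ} (ht0 : 0 ≤ t) (ht1 : t ≤ 1) :
    f (z + t • d) ≤ (1 - t) * f z + t * f (z + d) + κ / 2 * t * (1 - t) * ‖d‖ ^ 2 := by
  obtain ⟨x, hx, hxz⟩ := h.1 (z + t • d)
  have h1 := mul_le_mul_of_nonneg_left (h.2 x hx z) (sub_nonneg.2 ht1)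
  have h2 := mul_le_mul_of_nonneg_left (h.2 x hx (z + d)) ht0
  rw [hxz]
  rw [sq_shift] at *
  rw [norm_smul, inner_smul_right, Real.norm_eq_abs, mul_pow, sq_abs]
  nlinarith

/-- two-sided quadratic bounds give `C^{1,1}` -/
lemma quad_deriv {n : ℕ} {g : Euc n → ℝ} {P : Euc n → Euc n} {C : ℝ} (hC : 0 < C)
    (h : ∀ z d, |g (z + d) - g z - inner ℝ (P z) d| ≤ C * ‖d‖ ^ 2) :
    (∀ z, HasFDerivAt g (innerSL ℝ (P z)) z) ∧ ∀ z z', ‖P z' - P z‖ ≤ 6 * C * ‖z' - z‖ := by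
  constructor
  · intro z
    rw [hasFDerivAt_iff_isLittleO_nhds_zero]
    have h1 : (fun d : Euc n => g (z + d) - g z - innerSL ℝ (P z) d) =O[𝓝 0] fun d => ‖d‖ ^ 2 :=
      Asymptotics.IsBigO.of_bound C (Eventually.of_forall fun d => by simpa using h z d)
    refine h1.trans_isLittleO ?_
    have := Asymptotics.isLittleO_norm_pow_id (E' := Euc n) one_lt_two
    simpa using this
  · intro z z'
    set Δ := P z' - P z with hΔ
    set d := z' - z with hd
    have hz' : z' = z + d := by simp [hd]
    have key : ∀ e, inner ℝ Δ e ≤ C * (‖d + e‖ ^ 2 + ‖d‖ ^ 2 + ‖e‖ ^ 2) := by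
      intro e
      have h1 := (abs_le.1 (h z (d + e))).2
      have h2 := (abs_le.1 (h z d)).1
      have h3 := (abs_le.1 (h z' e)).1
      have e1 : z + (d + e) = z' + e := by rw [hz']; abel
      rw [e1] at h1
      rw [← hz'] at h2
      rw [inner_add_right] at h1
      rw [hΔ, inner_sub_left]
      linarith
    have h1 := key ((1 / (6 * C)) • Δ)
    have h2 : ‖d + (1 / (6 * C)) • Δ‖ ^ 2 ≤ 2 * ‖d‖ ^ 2 + 2 * ‖(1 / (6 * C)) • Δ‖ ^ 2 := by
      have := norm_add_le d ((1 / (6 * C)) • Δ)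
      have h0 := norm_nonneg (d + (1 / (6 * C)) • Δ)
      nlinarith [sq_nonneg (‖d‖ - ‖(1 / (6 * C)) • Δ‖)]
    rw [inner_smul_right, real_inner_self_eq_norm_sq] at h1
    have h3 : ‖(1 / (6 * C)) • Δ‖ ^ 2 = (1 / (6 * C)) ^ 2 * ‖Δ‖ ^ 2 := by
      rw [norm_smul, mul_pow, Real.norm_eq_abs, sq_abs]
    rw [h3] at h1 h2
    have h4 : 1 / (6 * C) * ‖Δ‖ ^ 2 ≤ C * (3 * ‖d‖ ^ 2 + 3 * ((1 / (6 * C)) ^ 2 * ‖Δ‖ ^ 2)) := by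
      exact h1.trans (mul_le_mul_of_nonneg_left (by linarith) hC.le)
    have h5 : ‖Δ‖ ^ 2 ≤ (6 * C * ‖d‖) ^ 2 := by
      field_simp at h4
      nlinarith
    exact abs_le_of_sq_le_sq' h5 (by positivity) |>.2

/-- data of the Lasry-Lions regularisation -/
lemma lasry {n : ℕ} {u : Euc n → ℝ} {K : Set (Euc n)} (hK : IsCompact K) (hne : K.Nonempty)
    (hu : UpperSemicontinuousOn u K) {κ : ℝ} (hκ : 0 < κ) {f : Euc n → ℝ} (hf : SC u K κ f) :
    ∃ (g : Euc n → ℝ) (P : Euc n → Euc n),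
      (∀ z d, |g (z + d) - g z - inner ℝ (P z) d| ≤ κ * ‖d‖ ^ 2) ∧
      (∀ z, f z ≤ g z) ∧
      (∀ z p, (∀ d, f (z + d) ≤ f z + inner ℝ p d + κ / 2 * ‖d‖ ^ 2) → g z ≤ f z) := by
  obtain ⟨F, hF⟩ := SC.exists hK hne hu (2 * κ / 3)
  have hFc : Continuous F := hF.continuous hK (by positivity)
  have hmin : ∀ z, ∃ ζ, ∀ ζ', F ζ + κ * ‖z - ζ‖ ^ 2 ≤ F ζ' + κ * ‖z - ζ'‖ ^ 2 := by
    intro z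
    obtain ⟨x0, hx0⟩ := hne
    refine coercive_min (f := fun ζ => F ζ + κ * ‖z - ζ‖ ^ 2) (by fun_prop) (a := 2 * κ / 3)
      (b := 2 * κ / 3 * ‖x0‖ + 2 * κ * ‖z‖)
      (c := κ / 3 * ‖x0‖ ^ 2 - u x0) (by positivity) fun ζ => ?_
    have h1 := hF.2 x0 hx0 ζ
    have h2 : ‖x0 - ζ‖ ^ 2 ≤ (‖x0‖ + ‖ζ‖) ^ 2 := by gcongr; exact norm_sub_le _ _
    have h3 : (‖ζ‖ - ‖z‖) ^ 2 ≤ ‖z - ζ‖ ^ 2 := by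
      rw [sq_le_sq, abs_norm, norm_sub_rev]; exact abs_norm_sub_norm_le _ _
    have h4 := mul_le_mul_of_nonneg_left h2 (by positivity : 0 ≤ κ / 3)
    have h5 := mul_le_mul_of_nonneg_left h3 hκ.le
    nlinarith [mul_nonneg hκ.le (sq_nonneg ‖z‖)]
  choose m hm using hmin
  -- slope inequality
  have hslope : ∀ z d, F (m z) + 2 * κ * inner ℝ (z - m z) d - κ / 3 * ‖d‖ ^ 2 ≤ F (m z + d) := by
    intro z d
    have hlow : ∀ d, F (m z) + 2 * κ * inner ℝ (z - m z) d - κ * ‖d‖ ^ 2 ≤ F (m z + d) := by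
      intro d
      have := hm z (m z + d)
      rw [sq_shift] at this
      linarith
    have hall : ∀ t : ℝ, t ∈ Ioo (0 : ℝ) 1 → 2 * κ * inner ℝ (z - m z) d - κ / 3 * ‖d‖ ^ 2
        - t * (κ * ‖d‖ ^ 2) ≤ F (m z + d) - F (m z) := by
      intro t ht
      have h1 := hF.semiconvex (m z) d ht.1.le ht.2.le
      have h2 := hlow (t • d)
      rw [norm_smul, inner_smul_right, Real.norm_eq_abs, mul_pow, sq_abs] at h2
      rw [← mul_le_mul_iff_right₀ ht.1]
      nlinarith [mul_nonneg (mul_nonneg hκ.le (sq_nonneg t)) (sq_nonneg ‖d‖)]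
    have hlim : Tendsto (fun t : ℝ => 2 * κ * inner ℝ (z - m z) d - κ / 3 * ‖d‖ ^ 2
        - t * (κ * ‖d‖ ^ 2)) (𝓝[>] 0) (𝓝 (2 * κ * inner ℝ (z - m z) d - κ / 3 * ‖d‖ ^ 2
        - 0 * (κ * ‖d‖ ^ 2))) := by
      have : Continuous (fun t : ℝ => 2 * κ * inner ℝ (z - m z) d - κ / 3 * ‖d‖ ^ 2
        - t * (κ * ‖d‖ ^ 2)) := by fun_prop
      exact (this.tendsto 0).mono_left nhdsWithin_le_nhds
    have := le_of_tendsto hlim (b := F (m z + d) - F (m z)) (by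
      filter_upwards [Ioo_mem_nhdsGT one_pos] with t ht using hall t ht)
    linarith
  refine ⟨fun z => F (m z) + κ * ‖z - m z‖ ^ 2, fun z => (2 * κ) • (z - m z), ?_, ?_, ?_⟩
  · intro z d
    simp only [inner_smul_left, conj_trivial]
    rw [abs_le]
    constructor
    · set r := (z + d - m (z + d)) - (z - m z) with hr
      have e1 : m (z + d) = m z + (d - r) := by rw [hr]; abel
      have h1 := hslope z (d - r)
      rw [← e1] at h1
      have e2 : z + d - m (z + d) = (z - m z) + r := by rw [hr]; abel
      rw [e2, norm_add_sq_real]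
      rw [inner_sub_right] at h1
      have h2 : ‖d - r‖ ^ 2 ≤ 3 / 2 * ‖d‖ ^ 2 + 3 * ‖r‖ ^ 2 := by
        have h3 := norm_sub_le d r
        have h0 := norm_nonneg (d - r)
        nlinarith [sq_nonneg (‖d‖ - 2 * ‖r‖)]
      have h4 := mul_le_mul_of_nonneg_left h2 (by positivity : 0 ≤ κ / 3)
      have h5 := mul_nonneg hκ.le (sq_nonneg ‖d‖)
      linarith
    · have h1 := hm (z + d) (m z)
      have e : z + d - m z = (z - m z) + d := by abel
      rw [e, norm_add_sq_real] at h1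
      linarith
  · intro z
    obtain ⟨x, hx, hxz⟩ := hf.1 z
    have h1 := hF.2 x hx (m z)
    have h2 : ‖x - m z‖ ^ 2 ≤ 3 / 2 * ‖x - z‖ ^ 2 + 3 * ‖z - m z‖ ^ 2 := by
      have h3 : ‖x - m z‖ ≤ ‖x - z‖ + ‖z - m z‖ := norm_sub_le_norm_sub_add_norm_sub _ _ _
      have h0 := norm_nonneg (x - m z)
      nlinarith [sq_nonneg (‖x - z‖ - 2 * ‖z - m z‖)]
    have h4 := mul_le_mul_of_nonneg_left h2 (by positivity : 0 ≤ κ / 3)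
    simp only
    linarith
  · intro z p hp
    set ζ := z - (1 / (2 * κ)) • p with hζ
    refine (hm z ζ).trans ?_
    obtain ⟨x', hx', hxz⟩ := hF.1 ζ
    set k := (1 / 3 : ℝ) • (x' - ζ) with hk
    have ezζ : z - ζ = (1 / (2 * κ)) • p := by rw [hζ]; abel
    have exζ : x' - ζ = (3 : ℝ) • k := by rw [hk, smul_smul]; norm_num
    have h1 := hf.2 x' hx' (z + (k - (1 / (2 * κ)) • p))
    have e1 : x' - (z + (k - (1 / (2 * κ)) • p)) = (2 : ℝ) • k := by
      have : x' - (z + (k - (1 / (2 * κ)) • p)) = (x' - ζ) - k := by rw [hζ]; abel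
      rw [this, exζ]; module
    have h2 := hp (k - (1 / (2 * κ)) • p)
    rw [e1] at h1
    rw [hxz, ezζ, exζ]
    simp only [norm_smul, mul_pow, Real.norm_eq_abs, sq_abs, inner_sub_right, inner_smul_right,
      norm_sub_sq_real, real_inner_self_eq_norm_sq] at h1 h2 ⊢
    have h3 : inner ℝ p k ≤ ‖p‖ * ‖k‖ := real_inner_le_norm p k
    rw [real_inner_comm p k] at h2
    have h4 : ‖p‖ * ‖k‖ ≤ ‖p‖ ^ 2 / (4 * κ) + κ * ‖k‖ ^ 2 := by
      rw [div_add' _ _ _ (by positivity), le_div_iff₀ (by positivity)]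
      nlinarith [sq_nonneg (‖p‖ - 2 * κ * ‖k‖)]
    have e5 : (1 / (2 * κ)) ^ 2 * ‖p‖ ^ 2 * κ = ‖p‖ ^ 2 / (4 * κ) := by field_simp; ring
    have e6 : 1 / (2 * κ) * ‖p‖ ^ 2 = 2 * (‖p‖ ^ 2 / (4 * κ)) := by field_simp; ring
    have e7 : κ * (1 / (2 * κ) * inner ℝ p k) = inner ℝ p k / 2 := by field_simp
    nlinarith

lemma density_pick {n : ℕ} {P₁ P₂ : Euc n → Euc n} {C : ℝ} (hC : 0 < C)
    (h₁ : ∀ z z', ‖P₁ z' - P₁ z‖ ≤ C * ‖z' - z‖) (h₂ : ∀ z z', ‖P₂ z' - P₂ z‖ ≤ C * ‖z' - z‖)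
    {E : Set (Euc n)} {r : ℝ} (hr : 0 < r)
    (hE : ∀ q : Euc n, ‖q‖ ≤ r → ∃ z ∈ E, P₁ z + P₂ z = q)
    (hmon : ∀ z ∈ E, ∀ z' ∈ E, inner ℝ ((P₁ z' + P₂ z') - (P₁ z + P₂ z)) (z' - z) ≤ 0) :
    ∃ z ∈ E, ∃ X Y : Euc n →L[ℝ] Euc n, HasFDerivAt P₁ X z ∧ HasFDerivAt P₂ Y z ∧
      ∀ h, inner ℝ (X h) h + inner ℝ (Y h) h ≤ 0 := by
  set μ : Measure (Euc n) := Measure.hausdorffMeasure (Module.finrank ℝ (Euc n) : ℝ) with hμ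
  have hL : ∀ {P : Euc n → Euc n}, (∀ z z', ‖P z' - P z‖ ≤ C * ‖z' - z‖) →
      LipschitzWith ⟨C, hC.le⟩ P := by
    intro P h
    refine LipschitzWith.of_dist_le_mul fun x y => ?_
    rw [dist_eq_norm, dist_eq_norm]; exact h y x
  have hL1 := hL h₁
  have hL2 := hL h₂
  have hQ := hL1.add hL2
  have hpos : μ E ≠ 0 := by
    intro h0
    have h1 := hQ.hausdorffMeasure_image_le (d := (Module.finrank ℝ (Euc n) : ℝ)) (by positivity) E
    rw [← hμ, h0, mul_zero] at h1
    have h2 : closedBall (0 : Euc n) r ⊆ (fun z => P₁ z + P₂ z) '' E := by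
      intro q hq
      obtain ⟨z, hz, e⟩ := hE q (by simpa using hq)
      exact ⟨z, hz, e⟩
    have h3 : μ (closedBall (0 : Euc n) r) ≤ 0 := (measure_mono h2).trans h1
    exact (measure_closedBall_pos μ (0 : Euc n) hr).not_ge h3
  have hd := Besicovitch.ae_tendsto_measure_inter_div μ E
  have ha1 := ae_restrict_of_ae (s := E) (hL1.ae_differentiableAt (μ := μ))
  have ha2 := ae_restrict_of_ae (s := E) (hL2.ae_differentiableAt (μ := μ))
  have hall := (hd.and ha1).and ha2
  have hex : ∃ z ∈ E, (Tendsto (fun r => μ (E ∩ closedBall z r) / μ (closedBall z r)) (𝓝[>] 0) (𝓝 1)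
      ∧ DifferentiableAt ℝ P₁ z) ∧ DifferentiableAt ℝ P₂ z := by
    by_contra hno
    push Not at hno
    rw [ae_iff] at hall
    have h1 := (Measure.le_restrict_apply (μ := μ) E _).trans hall.le
    apply hpos
    refine le_antisymm ((measure_mono ?_).trans h1) (zero_le)
    intro z hz
    refine ⟨fun hh => ?_, hz⟩
    exact hno z hz hh.1 hh.2
  obtain ⟨z, hzE, ⟨hzd, hz1⟩, hz2⟩ := hex
  refine ⟨z, hzE, _, _, hz1.hasFDerivAt, hz2.hasFDerivAt, ?_⟩
  set D : Euc n →L[ℝ] Euc n := fderiv ℝ P₁ z + fderiv ℝ P₂ z with hDdef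
  have hD : HasFDerivAt (fun z => P₁ z + P₂ z) D z := hz1.hasFDerivAt.add hz2.hasFDerivAt
  intro h
  rw [← inner_add_left, ← ContinuousLinearMap.add_apply, ← hDdef]
  by_contra hc
  push Not at hc
  have hh0 : h ≠ 0 := by rintro rfl; simp at hc
  have hhn : 0 < ‖h‖ := norm_pos_iff.2 hh0
  set η := inner ℝ (D h) h / (2 * ‖h‖ ^ 2) with hη
  have hηp : 0 < η := by positivity
  set t : Set (Euc n) := {k | η * ‖k‖ ^ 2 < inner ℝ (D k) k} ∩ ball h 1 with ht
  have hto : IsOpen t := (isOpen_lt (by fun_prop) (by fun_prop)).inter isOpen_ball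
  have hht : h ∈ t := by
    refine ⟨?_, mem_ball_self one_pos⟩
    show η * ‖h‖ ^ 2 < inner ℝ (D h) h
    have : η * ‖h‖ ^ 2 = inner ℝ (D h) h / 2 := by rw [hη]; field_simp
    rw [this]; linarith
  have hev := Measure.eventually_nonempty_inter_smul_of_density_one μ E z hzd t hto.measurableSet
    (hto.measure_pos μ ⟨h, hht⟩).ne'
  have hdl : ∀ᶠ z' in 𝓝 z, ‖(P₁ z' + P₂ z') - (P₁ z + P₂ z) - D (z' - z)‖ ≤ η * ‖z' - z‖ :=
    hD.isLittleO.def hηp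
  obtain ⟨ρ, hρ, hb⟩ := Metric.eventually_nhds_iff_ball.1 hdl
  have hsm : ∀ᶠ s : ℝ in 𝓝[>] 0, s ∈ Ioo 0 (ρ / (‖h‖ + 1)) := Ioo_mem_nhdsGT (by positivity)
  obtain ⟨s, ⟨z', hz'E, hz's⟩, hs⟩ := (hev.and hsm).exists
  obtain ⟨k, hk, e⟩ : ∃ k ∈ t, z' = z + s • k := by
    rw [Set.mem_add] at hz's
    obtain ⟨a, ha, b, hb, e⟩ := hz's
    rw [mem_singleton_iff] at ha
    obtain ⟨k, hk, rfl⟩ := hb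
    exact ⟨k, hk, by rw [← e, ha]⟩
  have hkn : ‖k‖ < ‖h‖ + 1 := by
    have h1 : ‖k - h‖ < 1 := by rw [← dist_eq_norm]; exact hk.2
    have : k = h + (k - h) := by abel
    rw [this]; exact (norm_add_le _ _).trans_lt (by linarith)
  have hz'z : z' - z = s • k := by rw [e]; abel
  have hmem : z' ∈ ball z ρ := by
    rw [mem_ball, dist_eq_norm, hz'z, norm_smul, Real.norm_eq_abs, abs_of_pos hs.1]
    have := (lt_div_iff₀ (by positivity)).1 hs.2
    nlinarith [norm_nonneg k, hs.1]
  have h1 := hb z' hmem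
  have h2 := hmon z hzE z' hz'E
  rw [hz'z] at h1 h2
  set Δ := (P₁ z' + P₂ z') - (P₁ z + P₂ z) with hΔ
  have h3 := abs_le.1 (abs_real_inner_le_norm (Δ - D (s • k)) (s • k)) |>.1
  rw [inner_sub_left] at h3
  have h4 : ‖Δ - D (s • k)‖ * ‖s • k‖ ≤ η * ‖s • k‖ * ‖s • k‖ := by gcongr
  have h5 : inner ℝ (D (s • k)) (s • k) ≤ η * ‖s • k‖ * ‖s • k‖ := by linarith
  rw [map_smul, inner_smul_left, inner_smul_right, norm_smul, Real.norm_eq_abs, abs_of_pos hs.1] at h5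
  simp only [conj_trivial] at h5
  have h6 : η * ‖k‖ ^ 2 < inner ℝ (D k) k := hk.1
  have h7 : 0 < s * s := mul_pos hs.1 hs.1
  nlinarith [mul_lt_mul_of_pos_left h6 h7]

lemma lin_eq {n : ℕ} {a : Euc n} {C : ℝ} (hC : 0 ≤ C) (h : ∀ d, inner ℝ a d ≤ C * ‖d‖ ^ 2) :
    a = 0 := by
  have := h ((1 / (C + 1)) • a)
  rw [inner_smul_right, norm_smul, mul_pow, Real.norm_eq_abs, sq_abs, real_inner_self_eq_norm_sq] at this
  have hC1 : 0 < C + 1 := by linarith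
  field_simp at this
  have h3 : ‖a‖ ^ 2 ≤ 0 := by nlinarith
  have : ‖a‖ = 0 := by nlinarith [norm_nonneg a]
  exact norm_eq_zero.1 this

/-- upper expansion relative to a set -/
def UBK {n : ℕ} (u : Euc n → ℝ) (K : Set (Euc n)) (x p : Euc n) (q : Euc n → ℝ) : Prop :=
  ∀ η : ℝ, 0 < η → ∀ᶠ h in 𝓝 (0 : Euc n), x + h ∈ K →
    u (x + h) ≤ u x + inner ℝ p h + (1 / 2) * q h + η * ‖h‖ ^ 2

lemma SC.touch {n : ℕ} {u : Euc n → ℝ} {K : Set (Euc n)} {κ : ℝ} (hκ : 0 < κ) {f : Euc n → ℝ}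
    (hf : SC u K κ f) {g : Euc n → ℝ} {P : Euc n → Euc n}
    (hg : ∀ z d, |g (z + d) - g z - inner ℝ (P z) d| ≤ κ * ‖d‖ ^ 2) (hfg : ∀ z, f z ≤ g z)
    {x z : Euc n} (hx : x ∈ K) (hxz : f z = u x - κ / 2 * ‖x - z‖ ^ 2) (hgf : g z ≤ f z) :
    P z = κ • (x - z) := by
  have : κ • (x - z) - P z = 0 := by
    refine lin_eq (C := 2 * κ) (by positivity) fun d => ?_
    have h1 := hf.lower hx hxz d
    have h2 := (abs_le.1 (hg z d)).2
    have h3 := hfg (z + d)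
    rw [inner_sub_left]
    have h4 := mul_nonneg hκ.le (sq_nonneg ‖d‖)
    linarith
  exact (sub_eq_zero.1 this).symm

lemma SC.expand {n : ℕ} {u : Euc n → ℝ} {K : Set (Euc n)} {κ : ℝ} {f : Euc n → ℝ}
    (hf : SC u K κ f) {g : Euc n → ℝ} {P : Euc n → Euc n}
    (hg : ∀ z, HasFDerivAt g (innerSL ℝ (P z)) z) (hfg : ∀ z, f z ≤ g z)
    {x z : Euc n} (hxz : f z = u x - κ / 2 * ‖x - z‖ ^ 2) (hgf : g z ≤ f z)
    {X : Euc n →L[ℝ] Euc n} (hP : HasFDerivAt P X z) :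
    UBK u K x (P z) (fun h => inner ℝ (X h) h) := by
  intro η hη
  filter_upwards [taylor2 (Eventually.of_forall hg) hP η hη] with h hh hK
  have h1 := hf.2 (x + h) hK (z + h)
  have e : x + h - (z + h) = x - z := by abel
  rw [e] at h1
  have h2 := (abs_le.1 hh).2
  have h3 := hfg (z + h)
  linarith

lemma sums {n : ℕ} {K : Set (Euc n)} (hK : IsCompact K) (hne : K.Nonempty) {u₁ u₂ : Euc n → ℝ}
    (hu₁ : UpperSemicontinuousOn u₁ K) (hu₂ : UpperSemicontinuousOn u₂ K) {κ r : ℝ} (hκ : 0 < κ)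
    (hr : 0 < r) : ∃ x ∈ K, ∃ y ∈ K, ∃ z q : Euc n, ∃ X Y : Euc n →L[ℝ] Euc n,
      ‖q‖ ≤ r ∧ κ • (x - z) + κ • (y - z) = q ∧ (∀ h, inner ℝ (X h) h + inner ℝ (Y h) h ≤ 0) ∧
      UBK u₁ K x (κ • (x - z)) (fun h => inner ℝ (X h) h) ∧
      UBK u₂ K y (κ • (y - z)) (fun h => inner ℝ (Y h) h) ∧
      ∀ x' ∈ K, ∀ y' ∈ K, ∀ z', u₁ x' - κ / 2 * ‖x' - z'‖ ^ 2 + (u₂ y' - κ / 2 * ‖y' - z'‖ ^ 2)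
        - inner ℝ q z' ≤ u₁ x - κ / 2 * ‖x - z‖ ^ 2 + (u₂ y - κ / 2 * ‖y - z‖ ^ 2)
        - inner ℝ q z := by
  obtain ⟨f₁, hf₁⟩ := SC.exists hK hne hu₁ κ
  obtain ⟨f₂, hf₂⟩ := SC.exists hK hne hu₂ κ
  obtain ⟨g₁, P₁, hg₁, hfg₁, hgf₁⟩ := lasry hK hne hu₁ hκ hf₁
  obtain ⟨g₂, P₂, hg₂, hfg₂, hgf₂⟩ := lasry hK hne hu₂ hκ hf₂
  have hd₁ := quad_deriv hκ hg₁
  have hd₂ := quad_deriv hκ hg₂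
  have hc₁ := hf₁.continuous hK hκ
  have hc₂ := hf₂.continuous hK hκ
  obtain ⟨m₁, hm₁, hm₁'⟩ := hu₁.exists_isMaxOn hne hK
  obtain ⟨m₂, hm₂, hm₂'⟩ := hu₂.exists_isMaxOn hne hK
  obtain ⟨R, hR0, hR⟩ := hK.isBounded.exists_pos_norm_le
  let A : Euc n → Euc n → Prop := fun q z => ∀ z', f₁ z' + f₂ z' - inner ℝ q z' ≤ f₁ z + f₂ z - inner ℝ q z
  -- existence
  have hub : ∀ {u f : Euc n → ℝ} {m : Euc n}, SC u K κ f → (IsMaxOn u K m) →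
      ∀ z, f z ≤ u m - κ / 2 * (‖z‖ ^ 2 - 2 * R * ‖z‖) := by
    intro u f m hf hm z
    obtain ⟨x, hx, e⟩ := hf.1 z
    have h1 : u x ≤ u m := hm hx
    have h2 : ‖z‖ ^ 2 - 2 * R * ‖z‖ ≤ ‖x - z‖ ^ 2 := by
      rw [norm_sub_sq_real]
      have := real_inner_le_norm x z
      have := mul_le_mul_of_nonneg_right (hR x hx) (norm_nonneg z)
      nlinarith [sq_nonneg ‖x‖]
    have := mul_le_mul_of_nonneg_left h2 (by positivity : 0 ≤ κ / 2)
    linarith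
  have hexA : ∀ q, ∃ z, A q z := by
    intro q
    obtain ⟨z, hz⟩ := coercive_min (f := fun z => -(f₁ z + f₂ z - inner ℝ q z)) (by fun_prop)
      (a := κ) (b := 2 * R * κ + ‖q‖) (c := u₁ m₁ + u₂ m₂) hκ (fun z => by
        have h1 := hub hf₁ hm₁' z
        have h2 := hub hf₂ hm₂' z
        have h3 := (abs_le.1 (abs_real_inner_le_norm q z)).1
        linarith)
    exact ⟨z, fun z' => by have := hz z'; linarith⟩
  -- structure at maximum points
  have hst : ∀ q z, A q z → ∀ x ∈ K, ∀ y ∈ K, f₁ z = u₁ x - κ / 2 * ‖x - z‖ ^ 2 →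
      f₂ z = u₂ y - κ / 2 * ‖y - z‖ ^ 2 → κ • (x - z) + κ • (y - z) = q ∧ g₁ z ≤ f₁ z ∧ g₂ z ≤ f₂ z := by
    intro q z hA x hx y hy e1 e2
    have hq : κ • (x - z) + κ • (y - z) = q := by
      rw [← sub_eq_zero]
      refine lin_eq (C := κ) hκ.le fun d => ?_
      have h1 := hf₁.lower hx e1 d
      have h2 := hf₂.lower hy e2 d
      have h3 := hA (z + d)
      rw [inner_add_right] at h3
      rw [inner_sub_left, inner_add_left]
      linarith
    refine ⟨hq, hgf₁ z (κ • (x - z)) fun d => ?_, hgf₂ z (κ • (y - z)) fun d => ?_⟩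
    · have h2 := hf₂.lower hy e2 d
      have h3 := hA (z + d)
      rw [inner_add_right, ← hq, inner_add_left _ _ d] at h3
      linarith
    · have h2 := hf₁.lower hx e1 d
      have h3 := hA (z + d)
      rw [inner_add_right, ← hq, inner_add_left _ _ d] at h3
      linarith
  have hP : ∀ q z, A q z → P₁ z + P₂ z = q := by
    intro q z hA
    obtain ⟨x, hx, ex⟩ := hf₁.1 z
    obtain ⟨y, hy, ey⟩ := hf₂.1 z
    obtain ⟨h1, h2, h3⟩ := hst q z hA x hx y hy ex ey
    rw [hf₁.touch hκ hg₁ hfg₁ hx ex h2, hf₂.touch hκ hg₂ hfg₂ hy ey h3, h1]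
  obtain ⟨z, ⟨q, hqr, hA⟩, X, Y, hX, hY, hXY⟩ := density_pick (P₁ := P₁) (P₂ := P₂) (C := 6 * κ)
    (by positivity) hd₁.2 hd₂.2 (E := {z | ∃ q, ‖q‖ ≤ r ∧ A q z}) hr
    (fun q hq => by
      obtain ⟨z, hz⟩ := hexA q
      exact ⟨z, ⟨q, hq, hz⟩, hP q z hz⟩)
    (by
      rintro z ⟨q, hq, hA⟩ z' ⟨q', hq', hA'⟩
      rw [hP q z hA, hP q' z' hA']
      have h1 := hA z'
      have h2 := hA' z
      rw [inner_sub_left, inner_sub_right, inner_sub_right]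
      linarith)
  obtain ⟨x, hx, ex⟩ := hf₁.1 z
  obtain ⟨y, hy, ey⟩ := hf₂.1 z
  obtain ⟨h1, h2, h3⟩ := hst q z hA x hx y hy ex ey
  refine ⟨x, hx, y, hy, z, q, X, Y, hqr, h1, hXY, ?_, ?_, ?_⟩
  · rw [← hf₁.touch hκ hg₁ hfg₁ hx ex h2]
    exact hf₁.expand hd₁.1 hfg₁ ex h2 hX
  · rw [← hf₂.touch hκ hg₂ hfg₂ hy ey h3]
    exact hf₂.expand hd₂.1 hfg₂ ey h3 hY
  · intro x' hx' y' hy' z'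
    have := hA z'
    have h4 := hf₁.2 x' hx' z'
    have h5 := hf₂.2 y' hy' z'
    linarith

/-! ### the comparison argument on the unit ball -/

/-- the equation for `b = exp ω` at a point -/
def SupW {n : ℕ} (Γ : Set (Fin n → ℝ)) (b : Euc n → ℝ) (y : Euc n) : Prop :=
  ∀ P Z, IsQF Z → UB b y P Z → EI (fun h => b y * Z h - (1 / 2) * ‖P‖ ^ 2 * ‖h‖ ^ 2) (closure Γ)

lemma strict_lemma {n : ℕ} {Γ : Set (Fin n → ℝ)} (hΓ : CondC Γ) {b : Euc n → ℝ}
    (hb0 : ∀ y, 0 ≤ b y) {y : Euc n} (hW : SupW Γ b y) (hby : 0 < b y) {B d : ℝ} (hB : b y ≤ B)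
    (hd : 0 < d) (hy : ‖y‖ ≤ 1) {p : Euc n} {Y : Euc n → ℝ} (hY : IsQF Y)
    (hu : UB (fun y => Real.log (b y + d * (1 + ‖y‖ ^ 2))) y p Y) :
    EI (fun h => mob p Y h - d / (B + 2 * d) * ‖h‖ ^ 2) (closure Γ) := by
  have hpos : ∀ y : Euc n, 0 < b y + d * (1 + ‖y‖ ^ 2) := fun y => by
    have := hb0 y; positivity
  have h1 := hu.comp hY (T1_exp _) univ_mem (Real.exp_monotone.monotoneOn _) (fun _ => mem_univ _)
  simp only [Real.exp_log (hpos _)] at h1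
  set bt := b y + d * (1 + ‖y‖ ^ 2) with hbt
  have hbtp : 0 < bt := hpos y
  -- subtract the quadratic
  have h2 : UB (fun y => -d - d * ‖y‖ ^ 2) y (-(2 * d) • y) (fun h => - (2 * d) * ‖h‖ ^ 2) := by
    intro η hη
    refine Eventually.of_forall fun h => ?_
    have := norm_add_sq_real y h
    simp only
    rw [this, inner_smul_left]
    simp only [conj_trivial]
    nlinarith [sq_nonneg ‖h‖]
  have h3 := h1.add h2
  have e3 : (fun y => b y + d * (1 + ‖y‖ ^ 2) + (-d - d * ‖y‖ ^ 2)) = b := by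
    funext y; ring
  rw [e3] at h3
  have hQ : IsQF (fun h => bt * Y h + bt * (inner ℝ p h) ^ 2 + - (2 * d) * ‖h‖ ^ 2) :=
    ((hY.smul bt).add ((isQF_inner p).smul bt)).add (isQF_norm.smul (-(2 * d)))
  have h4 := hW _ _ hQ h3
  refine h4.mono hΓ ((isQF_mob p hY).sub (isQF_norm.smul _)) (LinearIsometryEquiv.refl ℝ _)
    (1 / (b y * bt)) (by positivity) fun h => ?_
  simp only [LinearIsometryEquiv.coe_refl, id]
  rw [one_div, inv_mul_le_iff₀ (by positivity)]
  have en : ‖bt • p + -(2 * d) • y‖ ^ 2 = bt ^ 2 * ‖p‖ ^ 2 - 4 * d * bt * inner ℝ p y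
      + 4 * d ^ 2 * ‖y‖ ^ 2 := by
    rw [norm_add_sq_real, norm_smul, norm_smul, inner_smul_left, inner_smul_right]
    simp only [conj_trivial, mul_pow, Real.norm_eq_abs, sq_abs]
    ring
  rw [en]
  have hc : b y * bt * (d / (B + 2 * d)) ≤ d * b y := by
    have hby2 : bt ≤ B + 2 * d := by
      have : ‖y‖ ^ 2 ≤ 1 := by nlinarith [norm_nonneg y]
      rw [hbt]; nlinarith
    have hBd : 0 < B + 2 * d := by linarith
    have : bt / (B + 2 * d) ≤ 1 := (div_le_one hBd).2 hby2
    calc b y * bt * (d / (B + 2 * d)) = (d * b y) * (bt / (B + 2 * d)) := by ring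
      _ ≤ (d * b y) * 1 := by gcongr
      _ = _ := by ring
  -- scalar inequality
  have key : d * b y ≤ 1 / 2 * (d * (1 + ‖y‖ ^ 2)) * bt * ‖p‖ ^ 2 + 2 * d * b y + 2 * d ^ 2 * ‖y‖ ^ 2
      - 2 * d * bt * inner ℝ p y := by
    have h5 := real_inner_le_norm p y
    have h6 : bt * inner ℝ p y ≤ bt * (‖p‖ * ‖y‖) := by gcongr
    set s := ‖p‖
    set t := ‖y‖
    have ht0 : 0 ≤ t := norm_nonneg y
    have ht1 : 0 ≤ 1 - t ^ 2 := by nlinarith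
    have h8 : 0 ≤ bt * ((1 + t ^ 2) * s - 2 * t) ^ 2 := by positivity
    have h9 : (b y * (1 - t ^ 2)) ≥ 0 := by positivity
    have h10 : 0 ≤ (1 + t ^ 2) * (1 / 2 * (1 + t ^ 2) * bt * s ^ 2 + b y + 2 * d * t ^ 2
        - 2 * bt * (s * t)) := by
      have e : (1 + t ^ 2) * (1 / 2 * (1 + t ^ 2) * bt * s ^ 2 + b y + 2 * d * t ^ 2
        - 2 * bt * (s * t)) = 1 / 2 * (bt * ((1 + t ^ 2) * s - 2 * t) ^ 2) + b y * (1 - t ^ 2) := by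
        rw [hbt]; ring
      rw [e]; positivity
    have h11 := nonneg_of_mul_nonneg_right h10 (by positivity)
    nlinarith [mul_nonneg hd.le h11]
  have h7 := mul_le_mul_of_nonneg_right (hc.trans key) (sq_nonneg ‖h‖)
  simp only [mob]
  have e8 : d * (1 + ‖y‖ ^ 2) = bt - b y := by rw [hbt]; ring
  rw [e8] at h7
  nlinarith

lemma pert_scalar {r κ H a e g c X Y N₁ N₂ : ℝ} (hr : 0 < r) (hr1 : r ≤ 1) (hκp : 0 < κ) (hH : 0 ≤ H)
    (ha : |a| ≤ r * H) (he : |e| ≤ 3 * κ * H) (h7 : g ≤ 3 * κ * r)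
    (hr4 : r * (1 + 9 * κ) ≤ c / 2) (h1 : X + Y ≤ 0) :
    1 * (Y + (a - e) ^ 2 - 1 / 2 * (N₁ ^ 2 - 2 * g + N₂ ^ 2) * H ^ 2 - c * H ^ 2) + c / 2 * H ^ 2 ≤
      -X + e ^ 2 - 1 / 2 * N₂ ^ 2 * H ^ 2 := by
  have h5 : a ^ 2 ≤ r * H ^ 2 := by
    rw [← sq_abs]
    have : |a| ^ 2 ≤ (r * H) ^ 2 := by gcongr
    nlinarith [mul_nonneg hr.le (sq_nonneg H)]
  have h6 : - (a * e) ≤ 3 * κ * r * H ^ 2 := by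
    have h7 : |a * e| ≤ (r * H) * (3 * κ * H) := by rw [abs_mul]; gcongr
    have := (abs_le.1 h7).1
    linarith
  have h8 := mul_le_mul_of_nonneg_right h7 (sq_nonneg H)
  have h9 := mul_le_mul_of_nonneg_right hr4 (sq_nonneg H)
  have h10 := mul_nonneg (sq_nonneg N₁) (sq_nonneg H)
  linarith

set_option maxHeartbeats 1000000 in
lemma comparison {n : ℕ} {Γ : Set (Fin n → ℝ)} (hΓ : CondC Γ) {v b : Euc n → ℝ}
    (hv : Continuous v) (hsub : SubV Γ v) (hb0 : ∀ y, 0 ≤ b y)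
    (hbu : UpperSemicontinuousOn b (closedBall 0 1))
    (hW : ∀ y : Euc n, ‖y‖ < 1 → 0 < b y → SupW Γ b y)
    (hbd : ∀ y : Euc n, ‖y‖ = 1 → b y = Real.exp (- v y))
    (x₀ : Euc n) (hx₀ : ‖x₀‖ ≤ 1) : b x₀ ≤ Real.exp (- v x₀) := by
  by_contra hcon
  push Not at hcon
  set K : Set (Euc n) := closedBall 0 1 with hKdef
  have hK : IsCompact K := isCompact_closedBall 0 1
  have hx₀K : x₀ ∈ K := by simpa [hKdef] using hx₀
  have hne : K.Nonempty := ⟨x₀, hx₀K⟩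
  have hbx : 0 < b x₀ := (Real.exp_pos _).trans hcon
  set m := v x₀ + Real.log (b x₀) with hm
  have hmp : 0 < m := by
    have := (Real.lt_log_iff_exp_lt hbx).2 hcon
    linarith
  obtain ⟨V, hV⟩ := hK.exists_bound_of_continuousOn hv.continuousOn
  have hV' : ∀ x ∈ K, |v x| ≤ V := fun x hx => by simpa using hV x hx
  obtain ⟨yB, hyB, hBm⟩ := hbu.exists_isMaxOn hne hK
  set B := b yB with hB
  have hBb : ∀ y ∈ K, b y ≤ B := fun y hy => hBm hy
  have hBp : 0 < B := hbx.trans_le (hBb x₀ hx₀K)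
  -- choice of d
  obtain ⟨d, hd, hd1, hd2⟩ : ∃ d : ℝ, 0 < d ∧ 2 * d * Real.exp V < Real.exp (m / 4) - 1 ∧
      2 * d < Real.exp (-V) := by
    have h1 : 0 < Real.exp (m / 4) - 1 := by
      have := Real.one_lt_exp_iff.2 (by positivity : 0 < m / 4); linarith
    have h2 := Real.exp_pos V
    have h3 := Real.exp_pos (-V)
    refine ⟨min ((Real.exp (m / 4) - 1) / (4 * Real.exp V)) (Real.exp (-V) / 4), by positivity, ?_, ?_⟩
    · have h4 := min_le_left ((Real.exp (m / 4) - 1) / (4 * Real.exp V)) (Real.exp (-V) / 4)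
      rw [le_div_iff₀ (by positivity)] at h4
      linarith
    · have h4 := min_le_right ((Real.exp (m / 4) - 1) / (4 * Real.exp V)) (Real.exp (-V) / 4)
      linarith
  set u : Euc n → ℝ := fun y => Real.log (b y + d * (1 + ‖y‖ ^ 2)) with hu
  have hpos : ∀ y : Euc n, 0 < b y + d * (1 + ‖y‖ ^ 2) := fun y => by
    have := hb0 y; positivity
  have hnK : ∀ y ∈ K, ‖y‖ ≤ 1 := fun y hy => by simpa [hKdef] using hy
  have huu : UpperSemicontinuousOn u K := by
    have hc : ContinuousOn (fun y : Euc n => d * (1 + ‖y‖ ^ 2)) K := by fun_prop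
    have h1 := hbu.add hc.upperSemicontinuousOn
    rw [upperSemicontinuousOn_iff] at h1 ⊢
    intro x hx
    have h2 := h1 x hx
    rw [upperSemicontinuousWithinAt_iff] at h2 ⊢
    intro c hc
    have h3 : b x + d * (1 + ‖x‖ ^ 2) < Real.exp c := (Real.log_lt_iff_lt_exp (hpos x)).1 hc
    filter_upwards [h2 _ h3] with y hy
    exact (Real.log_lt_iff_lt_exp (hpos y)).2 hy
  -- the set where v + u is large
  have huv : UpperSemicontinuousOn (fun y => v y + u y) K := hv.continuousOn.upperSemicontinuousOn.add huu
  have hS := huv.isCompact_inter_preimage_Ici hK (m / 2)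
  set S := K ∩ (fun y => v y + u y) ⁻¹' Ici (m / 2) with hSdef
  have hSlt : ∀ y ∈ S, ‖y‖ < 1 := by
    rintro y ⟨hyK, hy⟩
    refine lt_of_le_of_ne (hnK y hyK) fun h1 => ?_
    have hy' : m / 2 ≤ v y + u y := hy
    have h2 : u y = Real.log (Real.exp (- v y) + 2 * d) := by
      simp only [hu, hbd y h1, h1]; congr 1; ring
    have h3 : Real.exp (- v y) + 2 * d ≤ Real.exp (- v y + m / 4) := by
      rw [Real.exp_add]
      have h5 : 1 ≤ Real.exp (- v y) * Real.exp V := by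
        rw [← Real.exp_add]
        apply Real.one_le_exp
        have := (abs_le.1 (hV' y hyK)).2
        linarith
      have h6 := Real.exp_pos (- v y)
      have h7 := mul_lt_mul_of_pos_left hd1 h6
      nlinarith
    have h4 := Real.log_le_log (by positivity) h3
    rw [Real.log_exp, ← h2] at h4
    linarith
  obtain ⟨ρ, hρ1, hρ⟩ : ∃ ρ < 1, ∀ y ∈ S, ‖y‖ ≤ ρ := by
    rcases S.eq_empty_or_nonempty with h | h
    · exact ⟨0, one_pos, fun y hy => by rw [h] at hy; exact absurd hy (notMem_empty y)⟩
    · obtain ⟨y, hy, hm⟩ := hS.exists_isMaxOn h continuous_norm.continuousOn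
      exact ⟨‖y‖, hSlt y hy, fun z hz => hm hz⟩
  have huc := hK.uniformContinuousOn_of_continuous hv.continuousOn
  rw [Metric.uniformContinuousOn_iff] at huc
  obtain ⟨ς, hς, hcv⟩ := huc (m / 8) (by positivity)
  set U := Real.log (B + 2 * d) with hU
  have huU : ∀ y ∈ K, u y ≤ U := by
    intro y hy
    apply Real.log_le_log (hpos y)
    have h1 := hBb y hy
    have h2 := hnK y hy
    have : ‖y‖ ^ 2 ≤ 1 := by nlinarith [norm_nonneg y]
    nlinarith
  set τ := min ς (1 - ρ) with hτ
  have hτp : 0 < τ := lt_min hς (by linarith)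
  set κ := 4 * (|V + U| + 1) / τ ^ 2 + 1 with hκ
  have hκp : 0 < κ := by positivity
  set c₀ := d / (B + 2 * d) with hc₀
  have hc₀p : 0 < c₀ := by positivity
  obtain ⟨r, hr, hr1, hr2, hr3, hr4⟩ : ∃ r : ℝ, 0 < r ∧ r ≤ 1 ∧ r ≤ κ ∧ r ≤ m / 12 ∧
      r * (1 + 9 * κ) ≤ c₀ / 2 := by
    refine ⟨min (min 1 κ) (min (m / 12) (c₀ / 2 / (1 + 9 * κ))), by positivity, ?_, ?_, ?_, ?_⟩
    · exact (min_le_left _ _).trans (min_le_left _ _)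
    · exact (min_le_left _ _).trans (min_le_right _ _)
    · exact (min_le_right _ _).trans (min_le_left _ _)
    · rw [← le_div_iff₀ (by positivity)]
      exact (min_le_right _ _).trans (min_le_right _ _)
  obtain ⟨x, hx, y, hy, z, q, X, Y, hqr, hpq, hXY, hux, huy, hmax⟩ :=
    sums hK hne hv.continuousOn.upperSemicontinuousOn huu hκp hr
  -- bounds on z
  have hxn := hnK x hx
  have hyn := hnK y hy
  have hz : ‖z‖ ≤ 2 := by
    have e : (2 * κ) • z = κ • x + κ • y - q := by rw [← hpq]; module
    have h1 : ‖(2 * κ) • z‖ ≤ 2 * κ + r := by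
      rw [e]
      refine (norm_sub_le _ _).trans ?_
      have : ‖κ • x + κ • y‖ ≤ 2 * κ := by
        refine (norm_add_le _ _).trans ?_
        rw [norm_smul, norm_smul, Real.norm_eq_abs, abs_of_pos hκp]
        nlinarith
      linarith
    rw [norm_smul, Real.norm_eq_abs, abs_of_pos (by positivity)] at h1
    by_contra h2
    push Not at h2
    nlinarith
  have h0 := hmax x₀ hx₀K x₀ hx₀K x₀
  simp only [sub_self, norm_zero] at h0
  have hux0 : Real.log (b x₀) ≤ u x₀ := by
    apply Real.log_le_log hbx
    have : 0 < d * (1 + ‖x₀‖ ^ 2) := by positivity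
    linarith
  have hq1 : inner ℝ q x₀ ≤ r := (real_inner_le_norm _ _).trans (by nlinarith [norm_nonneg q, norm_nonneg x₀])
  have hq2 : - (2 * r) ≤ inner ℝ q z := by
    have := (abs_le.1 (abs_real_inner_le_norm q z)).1
    nlinarith [norm_nonneg q, norm_nonneg z]
  have hpar : ‖x - y‖ ^ 2 ≤ 2 * (‖x - z‖ ^ 2 + ‖y - z‖ ^ 2) := by
    have h1 : ‖x - y‖ ≤ ‖x - z‖ + ‖y - z‖ := by
      have : x - y = (x - z) - (y - z) := by abel
      rw [this]; exact norm_sub_le _ _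
    nlinarith [sq_nonneg (‖x - z‖ - ‖y - z‖), norm_nonneg (x - y)]
  have hmain : 3 * m / 4 + κ / 4 * ‖x - y‖ ^ 2 ≤ v x + u y := by
    have := mul_le_mul_of_nonneg_left hpar (by positivity : 0 ≤ κ / 4)
    norm_num at h0
    linarith
  have hxy : ‖x - y‖ < τ := by
    by_contra h2
    push Not at h2
    have h3 := (abs_le.1 (hV' x hx)).2
    have h4 := huU y hy
    have h5 : τ ^ 2 ≤ ‖x - y‖ ^ 2 := by gcongr
    have h6 : κ * τ ^ 2 = 4 * (|V + U| + 1) + τ ^ 2 := by rw [hκ]; field_simp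
    have h7 := le_abs_self (V + U)
    nlinarith [mul_le_mul_of_nonneg_left h5 hκp.le]
  have hvxy : |v x - v y| < m / 8 := by
    have := hcv x hx y hy (by rw [dist_eq_norm]; exact hxy.trans_le (min_le_left _ _))
    rwa [Real.dist_eq] at this
  have hκn : 0 ≤ κ / 4 * ‖x - y‖ ^ 2 := by positivity
  have hyS : y ∈ S := by
    refine ⟨hy, ?_⟩
    show m / 2 ≤ v y + u y
    have := (abs_lt.1 hvxy).2
    linarith
  have hyρ := hρ y hyS
  have hx1 : ‖x‖ < 1 := by
    have : x = y + (x - y) := by abel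
    have h2 : ‖x‖ ≤ ‖y‖ + ‖x - y‖ := by
      conv_lhs => rw [this]
      exact norm_add_le _ _
    have := min_le_right ς (1 - ρ)
    linarith
  have hy1 : ‖y‖ < 1 := by linarith
  have hby : 0 < b y := by
    have h1 : m / 2 ≤ v y + u y := hyS.2
    have h2 := (abs_le.1 (hV' y hy)).2
    have h3 : Real.exp (-V) < b y + d * (1 + ‖y‖ ^ 2) := by
      rw [← Real.lt_log_iff_exp_lt (hpos y)]
      have : u y = Real.log (b y + d * (1 + ‖y‖ ^ 2)) := rfl
      linarith
    have : ‖y‖ ^ 2 ≤ 1 := by nlinarith [norm_nonneg y]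
    nlinarith
  have hconv : ∀ {f : Euc n → ℝ} {x p : Euc n} {Q : Euc n → ℝ}, ‖x‖ < 1 → UBK f K x p Q → UB f x p Q := by
    intro f x p Q hx h η hη
    have ht : Tendsto (fun h : Euc n => x + h) (𝓝 0) (𝓝 x) := by
      have : Continuous fun h : Euc n => x + h := by fun_prop
      simpa using this.tendsto 0
    have hKn : K ∈ 𝓝 x := Filter.mem_of_superset (isOpen_ball.mem_nhds (by simpa using hx))
      (ball_subset_closedBall (x := (0 : Euc n)) (ε := 1))
    filter_upwards [h η hη, ht.eventually hKn] with k hk hk2 using hk hk2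
  have hE1 := hsub x _ _ ⟨X, fun h => rfl⟩ (hconv hx1 hux)
  have hE2 := strict_lemma hΓ hb0 (hW y hy1 hby) hby (hBb y hy) hd hyn ⟨Y, fun h => rfl⟩ (hconv hy1 huy)
  refine EI.unique (hE2.strict hΓ hE1.isQF 1 one_pos (c₀ / 2) (by positivity) fun h => ?_) hE1
  set p₁ := κ • (x - z) with hp₁
  set p₂ := κ • (y - z) with hp₂
  have hp2 : p₂ = q - p₁ := by rw [← hpq]; abel
  have hp1n : ‖p₁‖ ≤ 3 * κ := by
    rw [hp₁, norm_smul, Real.norm_eq_abs, abs_of_pos hκp]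
    have := norm_sub_le x z
    nlinarith
  have h1 := hXY h
  have h2 := abs_real_inner_le_norm q h
  have h3 := abs_real_inner_le_norm p₁ h
  have h4 := (abs_le.1 (abs_real_inner_le_norm q p₁)).2
  have ha : |inner ℝ q h| ≤ r * ‖h‖ := h2.trans (by gcongr)
  have he : |inner ℝ p₁ h| ≤ 3 * κ * ‖h‖ := h3.trans (by gcongr)
  have h7 : inner ℝ q p₁ ≤ 3 * κ * r := by
    refine h4.trans ?_
    calc ‖q‖ * ‖p₁‖ ≤ r * (3 * κ) := by gcongr
      _ = _ := by ring
  simp only [mob]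
  rw [hp2, inner_sub_left, norm_sub_sq_real]
  exact pert_scalar hr hr1 hκp (norm_nonneg h) ha he h7 hr4 h1

/-! ### removability of the isolated singularity -/

lemma IsQF.sym {n : ℕ} {Z : Euc n → ℝ} (hZ : IsQF Z) : ∃ (L : Euc n → Euc n) (C : ℝ), 0 ≤ C ∧
    (∀ x k, Z (x + k) = Z x + 2 * inner ℝ (L x) k + Z k) ∧ (∀ x, ‖L x‖ ≤ C * ‖x‖) ∧
    ∀ k, |Z k| ≤ C * ‖k‖ ^ 2 := by
  obtain ⟨A, hA⟩ := hZ
  refine ⟨fun x => (1 / 2 : ℝ) • (A x + ContinuousLinearMap.adjoint A x),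
    ‖A‖ + ‖ContinuousLinearMap.adjoint A‖, by positivity, ?_, ?_, ?_⟩
  · intro x k
    rw [hA, hA, hA, inner_smul_left, inner_add_left, ContinuousLinearMap.adjoint_inner_left, map_add,
      inner_add_left, inner_add_right, inner_add_right, real_inner_comm (A k) x]
    simp only [conj_trivial]
    ring
  · intro x
    rw [norm_smul]
    have h1 := A.le_opNorm x
    have h2 := (ContinuousLinearMap.adjoint A).le_opNorm x
    have h3 := norm_add_le (A x) (ContinuousLinearMap.adjoint A x)
    have : ‖(1 / 2 : ℝ)‖ = 1 / 2 := by norm_num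
    rw [this]
    have h4 := norm_nonneg (A x + ContinuousLinearMap.adjoint A x)
    linarith
  · intro k
    rw [hA]
    have h1 := abs_real_inner_le_norm (A k) k
    have h2 := mul_le_mul_of_nonneg_right (A.le_opNorm k) (norm_nonneg k)
    have h3 : 0 ≤ ‖ContinuousLinearMap.adjoint A‖ * ‖k‖ ^ 2 := by positivity
    linarith

lemma UB_quad {n : ℕ} {Z : Euc n → ℝ} {L : Euc n → Euc n}
    (hL : ∀ x k, Z (x + k) = Z x + 2 * inner ℝ (L x) k + Z k) (c : ℝ) (a : Euc n) (s : ℝ) (x : Euc n) :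
    UB (fun y => c + inner ℝ a y + 1 / 2 * Z y + s * ‖y‖ ^ 2) x (a + L x + (2 * s) • x)
      (fun h => Z h + 2 * s * ‖h‖ ^ 2) := by
  intro η hη
  refine Eventually.of_forall fun h => ?_
  simp only
  rw [hL, norm_add_sq_real, inner_add_left, inner_add_left, inner_add_right, inner_smul_left]
  simp only [conj_trivial]
  have : 0 ≤ η * ‖h‖ ^ 2 := by positivity
  linarith

lemma UB_neglog {n : ℕ} (η : ℝ) {x : Euc n} (hx : x ≠ 0) :
    UB (fun y => - (η / 2) * Real.log (‖y‖ ^ 2)) x (-(η / ‖x‖ ^ 2) • x)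
      (fun h => - (η / ‖x‖ ^ 2) * ‖h‖ ^ 2 + 2 * (η / ‖x‖ ^ 2) * (inner ℝ (‖x‖⁻¹ • x) h) ^ 2) := by
  have hxn : 0 < ‖x‖ := norm_pos_iff.2 hx
  have h1 := (T2_sq (0 : Euc n) x).comp (isQF_norm.smul 2)
    (T1_log (t := ‖x - 0‖ ^ 2) (by simpa using by positivity))
  simp only [sub_zero] at h1
  intro ε hε
  filter_upwards [h1 (ε / (|η| / 2 + 1)) (by positivity)] with h hh
  set T := Real.log (‖x + h‖ ^ 2) - Real.log (‖x‖ ^ 2) - inner ℝ ((‖x‖ ^ 2)⁻¹ • (2 : ℝ) • x) h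
    - 1 / 2 * ((‖x‖ ^ 2)⁻¹ * (2 * ‖h‖ ^ 2) + -((‖x‖ ^ 2) ^ 2)⁻¹ * (inner ℝ ((2 : ℝ) • x) h) ^ 2) with hT
  have h2 : - (η / 2) * T ≤ ε * ‖h‖ ^ 2 := by
    have h3 : |- (η / 2) * T| ≤ |η| / 2 * (ε / (|η| / 2 + 1) * ‖h‖ ^ 2) := by
      rw [abs_mul, abs_neg, abs_div, abs_two]; gcongr
    refine (le_abs_self _).trans (h3.trans ?_)
    have : |η| / 2 * (ε / (|η| / 2 + 1) * ‖h‖ ^ 2) = (|η| / 2 / (|η| / 2 + 1)) * (ε * ‖h‖ ^ 2) := by ring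
    rw [this]
    have h4 : |η| / 2 / (|η| / 2 + 1) ≤ 1 := (div_le_one (by positivity)).2 (by linarith)
    calc _ ≤ 1 * (ε * ‖h‖ ^ 2) := by gcongr
      _ = _ := one_mul _
  rw [hT] at h2
  simp only [inner_smul_left, conj_trivial] at h2 ⊢
  have e : - (η / 2) * (Real.log (‖x + h‖ ^ 2) - Real.log (‖x‖ ^ 2) - (‖x‖ ^ 2)⁻¹ * (2 * inner ℝ x h)
    - 1 / 2 * ((‖x‖ ^ 2)⁻¹ * (2 * ‖h‖ ^ 2) + -((‖x‖ ^ 2) ^ 2)⁻¹ * (2 * inner ℝ x h) ^ 2)) =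
    - (η / 2) * Real.log (‖x + h‖ ^ 2) - (- (η / 2) * Real.log (‖x‖ ^ 2) + -(η / ‖x‖ ^ 2) * inner ℝ x h
     + 1 / 2 * (- (η / ‖x‖ ^ 2) * ‖h‖ ^ 2 + 2 * (η / ‖x‖ ^ 2) * (‖x‖⁻¹ * inner ℝ x h) ^ 2)) := by
    field_simp
    ring
  rw [e] at h2
  linarith

lemma annulus_min {n : ℕ} {F : Euc n → ℝ} (hF : ContinuousOn F {0}ᶜ) {ρ R : ℝ} (hρ : 0 < ρ)
    {h₀ : Euc n} (h1 : ρ ≤ ‖h₀‖) (h2 : ‖h₀‖ ≤ R) (hρF : ∀ h, ‖h‖ = ρ → F h₀ < F h)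
    (hRF : ∀ h, ‖h‖ = R → F h₀ < F h) :
    ∃ h, ρ < ‖h‖ ∧ ‖h‖ < R ∧ F h ≤ F h₀ ∧ ∀ᶠ y in 𝓝 h, F h ≤ F y := by
  set K : Set (Euc n) := closedBall 0 R ∩ {y | ρ ≤ ‖y‖} with hK
  have hKc : IsCompact K := (isCompact_closedBall 0 R).inter_right
    (isClosed_le continuous_const continuous_norm)
  have hK0 : K ⊆ {0}ᶜ := by
    rintro y ⟨_, hy⟩ rfl
    simp at hy; linarith
  have hyK : h₀ ∈ K := ⟨by simpa using h2, h1⟩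
  obtain ⟨z, hz, hmin⟩ := hKc.exists_isMinOn ⟨h₀, hyK⟩ (hF.mono hK0)
  have hmin' : ∀ y ∈ K, F z ≤ F y := fun y hy => hmin hy
  have hle := hmin' _ hyK
  have hz1 : ρ < ‖z‖ := lt_of_le_of_ne hz.2 fun h => (hρF z h.symm).not_ge hle
  have hz2 : ‖z‖ < R := lt_of_le_of_ne (by simpa using hz.1) fun h => (hRF z h).not_ge hle
  refine ⟨z, hz1, hz2, hle, ?_⟩
  have hev2 : ∀ᶠ y in 𝓝 z, ‖y‖ < R ∧ ρ < ‖y‖ :=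
    (continuous_norm.continuousAt.eventually (gt_mem_nhds hz2)).and
      (continuous_norm.continuousAt.eventually (lt_mem_nhds hz1))
  filter_upwards [hev2] with y hy
  exact hmin' y ⟨by simpa using hy.1.le, hy.2.le⟩

set_option maxHeartbeats 1000000 in
lemma conical_scalar {t δ η C s K N R a b c PP H Zh : ℝ} (ht : 0 ≤ t) (hH : 0 ≤ H)
    (hη : η ≤ δ) (hK : C + s + N ^ 2 ≤ K) (hNR : 3 * (N * R) ≤ δ)
    (hZ : Zh ≤ C * H ^ 2) (ha : a ^ 2 ≤ N ^ 2 * H ^ 2) (hb : - (a * c) ≤ N * R * H ^ 2)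
    (hc : t * c ^ 2 = η * b ^ 2) (hPP : t * PP ≤ t * (N * R)) {x y : ℝ} :
    Zh + (s - K) * H ^ 2 + (- t * H ^ 2 + 2 * t * b ^ 2) + (a - t * c) ^ 2
      - 1 / 2 * (x ^ 2 - 2 * t * PP + y ^ 2) * H ^ 2 ≤ t * ((2 + δ) * b ^ 2 + -(1 - δ) * H ^ 2) := by
  have e1 : (a - t * c) ^ 2 = a ^ 2 + 2 * t * (- (a * c)) + t * (η * b ^ 2) := by rw [← hc]; ring
  rw [e1]
  have h1 := mul_le_mul_of_nonneg_left hb ht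
  have h2 := mul_le_mul_of_nonneg_right hPP (sq_nonneg H)
  have h3 := mul_le_mul_of_nonneg_right hK (sq_nonneg H)
  have h4 := mul_le_mul_of_nonneg_left (mul_le_mul_of_nonneg_right hNR (sq_nonneg H)) ht
  have h5 := mul_le_mul_of_nonneg_left (mul_le_mul_of_nonneg_right hη (sq_nonneg b)) ht
  have h6 := mul_nonneg (sq_nonneg x) (sq_nonneg H)
  have h7 := mul_nonneg (sq_nonneg y) (sq_nonneg H)
  nlinarith

set_option maxHeartbeats 1000000 in
lemma conical {n : ℕ} (hn : 2 ≤ n) {Γ : Set (Fin n → ℝ)} (hΓ : CondC Γ) {δ : ℝ} (hδ : 0 < δ)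
    (ht : tup n (2 + δ) (-(1 - δ)) ∉ closure Γ) {ω : Euc n → ℝ} (hω : ContinuousOn ω {0}ᶜ)
    (hsup : SupL Γ {0}ᶜ ω) (hlim : ∀ ε > 0, ∀ r > 0, ∃ h : Euc n, h ≠ 0 ∧ ‖h‖ < r ∧ ω 0 - ε < ω h)
    {p : Euc n} {Z : Euc n → ℝ} (hZ : IsQF Z) {θ r ε : ℝ} (hθ : 0 < θ) (hr : 0 < r) (hε : 0 < ε) :
    ∃ h : Euc n, h ≠ 0 ∧ ‖h‖ ≤ r ∧
      ω 0 + inner ℝ p h + 1 / 2 * Z h + 2 * θ * ‖h‖ ^ 2 - ω h < ε * ‖h‖ := by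
  by_contra hcon
  push Not at hcon
  obtain ⟨L, C, hC, hL, hLn, hZn⟩ := hZ.sym
  set N := ‖p‖ + 1 with hN
  have hNp : 0 < N := by positivity
  set K := C + 4 * θ + N ^ 2 with hK
  have hKp : 0 < K := by positivity
  obtain ⟨R, hR, hRr, hR1, hR2, hR3, hR4⟩ : ∃ R : ℝ, 0 < R ∧ R ≤ r ∧ R ≤ 1 ∧
      R * (C + 4 * θ + K) ≤ 1 ∧ 3 * (N * R) ≤ δ ∧ R * K ≤ ε := by
    refine ⟨min (min r 1) (min (1 / (C + 4 * θ + K)) (min (δ / (3 * N)) (ε / K))), by positivity,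
      ?_, ?_, ?_, ?_, ?_⟩
    · exact (min_le_left _ _).trans (min_le_left _ _)
    · exact (min_le_left _ _).trans (min_le_right _ _)
    · rw [← le_div_iff₀ (by positivity)]
      exact (min_le_right _ _).trans (min_le_left _ _)
    · have : min (min r 1) (min (1 / (C + 4 * θ + K)) (min (δ / (3 * N)) (ε / K))) ≤ δ / (3 * N) :=
        (min_le_right _ _).trans ((min_le_right _ _).trans (min_le_left _ _))
      rw [le_div_iff₀ (by positivity)] at this
      linarith
    · rw [← le_div_iff₀ (by positivity)]
      exact (min_le_right _ _).trans ((min_le_right _ _).trans (min_le_right _ _))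
  set W : Euc n → ℝ := fun h => ω 0 + inner ℝ p h + 1 / 2 * Z h + 2 * θ * ‖h‖ ^ 2 - ω h with hW
  have hWge : ∀ h : Euc n, h ≠ 0 → ‖h‖ ≤ r → ε * ‖h‖ ≤ W h := hcon
  have hlow : ∀ h : Euc n, h ≠ 0 → ‖h‖ ≤ R → ε / 2 * ‖h‖ ≤ W h - K / 2 * ‖h‖ ^ 2 := by
    intro h h0 hh
    have h1 := hWge h h0 (hh.trans hRr)
    have h2 : ‖h‖ * K ≤ ε := by nlinarith
    nlinarith [norm_nonneg h]
  set m := ε * R / 4 with hm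
  have hmp : 0 < m := by positivity
  -- the point h_j
  obtain ⟨hj, hj0, hjR, hjW⟩ : ∃ h : Euc n, h ≠ 0 ∧ ‖h‖ < R ∧ W h < m := by
    have hcz : Continuous fun h : Euc n => inner ℝ p h + 1 / 2 * Z h + 2 * θ * ‖h‖ ^ 2 := by
      have := hZ.continuous
      fun_prop
    have hZ0 : Z 0 = 0 := by
      have := hZn 0
      simp at this; exact this
    have h1 : ∀ᶠ h in 𝓝 (0 : Euc n), inner ℝ p h + 1 / 2 * Z h + 2 * θ * ‖h‖ ^ 2 < m / 2 := by
      have := hcz.tendsto 0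
      simp only [inner_zero_right, hZ0, norm_zero] at this
      exact this.eventually (gt_mem_nhds (by simpa using by positivity))
    obtain ⟨ρ, hρ, hb⟩ := Metric.eventually_nhds_iff_ball.1 h1
    obtain ⟨h, h0, hh, hω⟩ := hlim (m / 2) (by positivity) (min ρ R) (by positivity)
    refine ⟨h, h0, hh.trans_le (min_le_right _ _), ?_⟩
    have := hb h (by simpa using hh.trans_le (min_le_left _ _))
    simp only [hW]
    linarith
  have hjn : 0 < ‖hj‖ := norm_pos_iff.2 hj0
  have hlogj : Real.log (‖hj‖ ^ 2) < 0 := by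
    apply Real.log_neg (by positivity)
    nlinarith
  obtain ⟨η, hη, hηδ, hηm⟩ : ∃ η : ℝ, 0 < η ∧ η ≤ δ ∧ - (η / 2) * Real.log (‖hj‖ ^ 2) < m := by
    refine ⟨min δ (m / (- Real.log (‖hj‖ ^ 2))), lt_min hδ (div_pos hmp (by linarith)), min_le_left _ _, ?_⟩
    have := min_le_right δ (m / (- Real.log (‖hj‖ ^ 2)))
    rw [le_div_iff₀ (by linarith)] at this
    linarith
  set F : Euc n → ℝ := fun h => W h - K / 2 * ‖h‖ ^ 2 + - (η / 2) * Real.log (‖h‖ ^ 2) with hF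
  have hFc : ContinuousOn F {0}ᶜ := by
    have h1 : ContinuousOn (fun h : Euc n => Real.log (‖h‖ ^ 2)) {0}ᶜ := by
      refine ContinuousOn.log (by fun_prop) fun y hy => ?_
      have : 0 < ‖y‖ := norm_pos_iff.2 hy
      positivity
    have h2 := hZ.continuous
    fun_prop
  have hFj : F hj < 2 * m := by
    have : 0 ≤ K / 2 * ‖hj‖ ^ 2 := by positivity
    simp only [hF]; linarith
  set ρ := Real.exp (-(2 * m / η)) with hρ
  have hρlog : - (η / 2) * Real.log (ρ ^ 2) = 2 * m := by
    rw [hρ, Real.log_pow, Real.log_exp]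
    field_simp
    push_cast
    ring
  have hρj : ρ ≤ ‖hj‖ := by
    by_contra h1
    push Not at h1
    have h2 : Real.log (‖hj‖ ^ 2) ≤ Real.log (ρ ^ 2) := Real.log_le_log (by positivity) (by gcongr)
    nlinarith
  obtain ⟨x, hx1, hx2, _, hxmin⟩ := annulus_min hFc (Real.exp_pos _ : 0 < ρ) hρj hjR.le
    (fun h hh => by
      have hhn : 0 < ‖h‖ := by rw [hh]; exact Real.exp_pos _
      have h1 := hlow h (norm_pos_iff.1 hhn) (by rw [hh]; linarith)
      refine hFj.trans_le ?_
      simp only [hF]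
      rw [hh] at h1 ⊢
      rw [hρlog]
      have : 0 ≤ ε / 2 * ρ := by positivity
      linarith)
    (fun h hh => by
      have hhn : 0 < ‖h‖ := by rw [hh]; exact hR
      have h1 := hlow h (norm_pos_iff.1 hhn) hh.le
      refine hFj.trans_le ?_
      simp only [hF]
      rw [hh] at h1 ⊢
      have h2 : Real.log (R ^ 2) ≤ 0 := Real.log_nonpos (by positivity) (by nlinarith)
      rw [hm]
      nlinarith)
  have hx0 : x ≠ 0 := norm_pos_iff.1 ((Real.exp_pos _).trans hx1)
  have hxn : 0 < ‖x‖ := norm_pos_iff.2 hx0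
  have hUB := UB.of_touch (f := ω) ((UB_quad hL (ω 0) p (2 * θ - K / 2) x).add (UB_neglog η hx0)) (by
    filter_upwards [hxmin] with y hy
    simp only [hF, hW] at hy
    linarith)
  have hQ : IsQF (fun h => Z h + 2 * (2 * θ - K / 2) * ‖h‖ ^ 2 + (- (η / ‖x‖ ^ 2) * ‖h‖ ^ 2 +
      2 * (η / ‖x‖ ^ 2) * (inner ℝ (‖x‖⁻¹ • x) h) ^ 2)) :=
    (hZ.add (isQF_norm.smul _)).add ((isQF_norm.smul _).add ((isQF_inner _).smul _))
  have hE := hsup x hx0 _ _ hQ hUB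
  set t := η / ‖x‖ ^ 2 with htdef
  have htp : 0 < t := by positivity
  refine rank_not hn hΓ (e := ‖x‖⁻¹ • x) (by rw [norm_smul, norm_inv, norm_norm, inv_mul_cancel₀ hxn.ne'])
    ht htp hE fun h => ?_
  set P := p + L x + (2 * (2 * θ - K / 2)) • x with hP
  have hPn : ‖P‖ ≤ N := by
    have h1 : ‖P‖ ≤ ‖p‖ + ‖L x‖ + ‖(2 * (2 * θ - K / 2)) • x‖ :=
      (norm_add_le _ _).trans (by gcongr; exact norm_add_le _ _)
    have h2 : ‖(2 * (2 * θ - K / 2)) • x‖ ≤ (4 * θ + K) * ‖x‖ := by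
      rw [norm_smul, Real.norm_eq_abs]
      gcongr
      rw [abs_le]; constructor <;> linarith
    have h3 := hLn x
    have h4 : ‖x‖ * (C + 4 * θ + K) ≤ 1 := le_trans (by gcongr) hR2
    linarith
  have hip := abs_real_inner_le_norm P h
  have hix := abs_real_inner_le_norm x h
  have hipx := real_inner_le_norm P x
  simp only [mob]
  have e1 : ‖P + -t • x‖ ^ 2 = ‖P‖ ^ 2 - 2 * t * inner ℝ P x + (t * ‖x‖) ^ 2 := by
    rw [norm_add_sq_real, inner_smul_right, norm_smul, Real.norm_eq_abs, mul_pow, mul_pow, sq_abs]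
    ring
  have e2 : inner ℝ (P + -t • x) h = inner ℝ P h - t * inner ℝ x h := by
    rw [inner_add_left, inner_smul_left]; simp; ring
  have e3 : 2 * (2 * θ - K / 2) = 4 * θ - K := by ring
  rw [e1, e2, e3]
  have hPh : |inner ℝ P h| ≤ N * ‖h‖ := hip.trans (by gcongr)
  have hxh : |inner ℝ x h| ≤ R * ‖h‖ := hix.trans (by gcongr)
  refine conical_scalar (N := N) (R := R) (C := C) htp.le (norm_nonneg h) hηδ hK.ge hR3
    ((le_abs_self _).trans (hZn h)) ?_ ?_ ?_ ?_
  · rw [← sq_abs, ← mul_pow]; gcongr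
  · have : |inner ℝ P h * inner ℝ x h| ≤ (N * ‖h‖) * (R * ‖h‖) := by rw [abs_mul]; gcongr
    have := (abs_le.1 this).1
    linarith
  · rw [inner_smul_left]
    simp only [conj_trivial]
    rw [htdef]
    field_simp
  · have : inner ℝ P x ≤ N * R := hipx.trans (by gcongr)
    gcongr

lemma tilt_scalar {σ N θ a b c g q1 q2 H Zh : ℝ} (hσ : 0 ≤ σ) (hσ1 : σ ≤ 1) (hN : 0 ≤ N)
    (hσN : σ * (1 + 3 * N) ≤ θ) (hH : 0 ≤ H) (ha : |a| ≤ N * H) (hb : |b| ≤ σ * H)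
    (hc : - c ≤ σ * N) :
    1 * (Zh + 2 * (2 * θ) * H ^ 2 + (a + b) ^ 2 - 1 / 2 * (q1 ^ 2 + 2 * c + q2 ^ 2) * H ^ 2) ≤
      Zh + a ^ 2 - 1 / 2 * q1 ^ 2 * H ^ 2 + 5 * θ * H ^ 2 + g * 0 := by
  have h1 : b ^ 2 ≤ σ * H ^ 2 := by
    rw [← sq_abs]
    have : |b| ^ 2 ≤ (σ * H) ^ 2 := by gcongr
    nlinarith [mul_nonneg hσ (sq_nonneg H)]
  have h2 : a * b ≤ N * σ * H ^ 2 := by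
    have : |a * b| ≤ (N * H) * (σ * H) := by rw [abs_mul]; gcongr
    have := (abs_le.1 this).2
    linarith
  have h3 := mul_le_mul_of_nonneg_right hc (sq_nonneg H)
  have h4 := mul_le_mul_of_nonneg_right hσN (sq_nonneg H)
  have h5 := mul_nonneg (sq_nonneg q2) (sq_nonneg H)
  nlinarith

set_option maxHeartbeats 1000000 in
lemma removable {n : ℕ} (hn : 2 ≤ n) {Γ : Set (Fin n → ℝ)} (hΓ : CondC Γ) {δ : ℝ} (hδ : 0 < δ)
    (ht : tup n (2 + δ) (-(1 - δ)) ∉ closure Γ) {ω : Euc n → ℝ} (hω : ContinuousOn ω {0}ᶜ)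
    (hsup : SupL Γ {0}ᶜ ω) (hlim : ∀ ε > 0, ∀ r > 0, ∃ h : Euc n, h ≠ 0 ∧ ‖h‖ < r ∧ ω 0 - ε < ω h) :
    SupL Γ {0} ω := by
  rintro x₀ hx₀ p Z hZ hUB
  rw [mem_singleton_iff] at hx₀
  subst hx₀
  refine EI.of_shift isClosed_closure (isQF_mob p hZ) 5 fun θ hθ => ?_
  obtain ⟨L, C, hC, hL, hLn, hZn⟩ := hZ.sym
  obtain ⟨r', hr', hball⟩ := Metric.eventually_nhds_iff_ball.1 (hUB θ hθ)
  set r := r' / 2 with hr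
  have hrp : 0 < r := by positivity
  set W : Euc n → ℝ := fun h => ω 0 + inner ℝ p h + 1 / 2 * Z h + 2 * θ * ‖h‖ ^ 2 - ω h with hW
  have hWge : ∀ h : Euc n, ‖h‖ ≤ r → θ * ‖h‖ ^ 2 ≤ W h := by
    intro h hh
    have := hball h (by simp; linarith)
    rw [zero_add] at this
    simp only [hW]
    linarith
  -- choose ε
  set D := (C + 4 * θ) / θ + 1 with hD
  have hDp : 0 < D := by positivity
  obtain ⟨ε, hε, hε1, hε2, hε3⟩ : ∃ ε : ℝ, 0 < ε ∧ ε < θ * r ∧ D * ε ≤ 1 ∧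
      D * ε * (1 + 3 * ‖p‖) ≤ θ := by
    refine ⟨min (θ * r / 2) (min (1 / D) (θ / (D * (1 + 3 * ‖p‖)))), by positivity, ?_, ?_, ?_⟩
    · have := min_le_left (θ * r / 2) (min (1 / D) (θ / (D * (1 + 3 * ‖p‖))))
      have : 0 < θ * r := by positivity
      linarith
    · rw [mul_comm, ← le_div_iff₀ (by positivity)]
      exact (min_le_right _ _).trans (min_le_left _ _)
    · have : min (θ * r / 2) (min (1 / D) (θ / (D * (1 + 3 * ‖p‖)))) ≤ θ / (D * (1 + 3 * ‖p‖)) :=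
        (min_le_right _ _).trans (min_le_right _ _)
      rw [le_div_iff₀ (by positivity)] at this
      linarith
  obtain ⟨h₀, h00, h0r, h0W⟩ := conical hn hΓ hδ ht hω hsup hlim (p := p) hZ hθ hrp hε
  have h0n : 0 < ‖h₀‖ := norm_pos_iff.2 h00
  set q := (ε * ‖h₀‖⁻¹) • h₀ with hq
  have hqn : ‖q‖ = ε := by
    rw [hq, norm_smul, Real.norm_eq_abs, abs_of_pos (by positivity)]
    field_simp
  have hqh : inner ℝ q h₀ = ε * ‖h₀‖ := by
    rw [hq, inner_smul_left, real_inner_self_eq_norm_sq]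
    simp only [conj_trivial]
    field_simp
  set F : Euc n → ℝ := fun h => W h - inner ℝ q h with hF
  have hF0 : F h₀ < 0 := by
    simp only [hF, hW, hqh]
    linarith
  have hFlow : ∀ h : Euc n, ‖h‖ ≤ r → θ * ‖h‖ ^ 2 - ε * ‖h‖ ≤ F h := by
    intro h hh
    have h1 := hWge h hh
    have h2 := real_inner_le_norm q h
    rw [hqn] at h2
    simp only [hF]; linarith
  have hFc : ContinuousOn F {0}ᶜ := by
    have h2 := hZ.continuous
    fun_prop
  set ρ := min ‖h₀‖ (- F h₀ / (2 * ε)) with hρ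
  have hρp : 0 < ρ := lt_min h0n (div_pos (by linarith) (by positivity))
  have hρ2 : ρ * (2 * ε) ≤ - F h₀ := by
    rw [← le_div_iff₀ (by positivity)]; exact min_le_right _ _
  have hρ1 : ρ ≤ ‖h₀‖ := min_le_left _ _
  obtain ⟨x, hx1, hx2, hx3, hxmin⟩ := annulus_min hFc hρp hρ1 h0r
    (fun h hh => by
      have h1 := hFlow h (by rw [hh]; linarith)
      rw [hh] at h1
      have : 0 < θ * ρ ^ 2 := by positivity
      nlinarith)
    (fun h hh => by
      have h1 := hFlow h hh.le
      rw [hh] at h1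
      nlinarith)
  have hx0 : x ≠ 0 := norm_pos_iff.1 (hρp.trans hx1)
  have hxn : 0 < ‖x‖ := norm_pos_iff.2 hx0
  have hxε : ‖x‖ ≤ ε / θ := by
    have h1 := hFlow x hx2.le
    rw [le_div_iff₀ hθ]
    by_contra h2
    push Not at h2
    nlinarith
  have hUB2 := UB.of_touch (f := ω) (UB_quad hL (ω 0) (p - q) (2 * θ) x) (by
    filter_upwards [hxmin] with y hy
    simp only [hF, hW] at hy
    simp only [inner_sub_left]
    linarith)
  have hE := hsup x hx0 _ _ (hZ.add (isQF_norm.smul _)) hUB2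
  refine hE.mono hΓ ((isQF_mob p hZ).add (isQF_norm.smul _)) (LinearIsometryEquiv.refl ℝ _) 1 one_pos
    fun h => ?_
  set s := L x + (2 * (2 * θ)) • x - q with hs
  have hP : p - q + L x + (2 * (2 * θ)) • x = p + s := by rw [hs]; abel
  have hsn : ‖s‖ ≤ D * ε := by
    have h1 : ‖s‖ ≤ ‖L x‖ + ‖(2 * (2 * θ)) • x‖ + ‖q‖ :=
      (norm_sub_le _ _).trans (by gcongr; exact norm_add_le _ _)
    rw [norm_smul, Real.norm_eq_abs, abs_of_pos (by positivity), hqn] at h1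
    have h2 := hLn x
    have h3 : (C + 4 * θ) * ‖x‖ ≤ (C + 4 * θ) * (ε / θ) := by gcongr
    have h4 : D * ε = (C + 4 * θ) * (ε / θ) + ε := by rw [hD]; field_simp
    linarith
  rw [hP]
  simp only [mob, LinearIsometryEquiv.coe_refl, id]
  rw [inner_add_left, norm_add_sq_real]
  have := tilt_scalar (σ := D * ε) (N := ‖p‖) (θ := θ) (a := inner ℝ p h) (b := inner ℝ s h)
    (c := inner ℝ p s) (g := 0) (q1 := ‖p‖) (q2 := ‖s‖) (H := ‖h‖) (Zh := Z h) (by positivity) hε2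
    (norm_nonneg p) hε3 (norm_nonneg h) (abs_real_inner_le_norm p h)
    ((abs_real_inner_le_norm s h).trans (by gcongr)) (by
      have := (abs_le.1 (abs_real_inner_le_norm p s)).1
      have h2 : ‖p‖ * ‖s‖ ≤ ‖p‖ * (D * ε) := by gcongr
      linarith)
  linarith

lemma IsQF.hom {n : ℕ} {Z : Euc n → ℝ} (hZ : IsQF Z) (c : ℝ) (h : Euc n) :
    Z (c • h) = c ^ 2 * Z h := by
  obtain ⟨A, hA⟩ := hZ
  simp only [hA, map_smul, real_inner_smul_left, real_inner_smul_right]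
  ring

lemma UB.affine {n : ℕ} {f : Euc n → ℝ} {x y p : Euc n} {X : Euc n → ℝ} {l : ℝ} (hl : 0 < l)
    (hX : IsQF X) (h : UB (fun z => f (x + l • z)) y p X) :
    UB f (x + l • y) (l⁻¹ • p) (fun k => (l⁻¹) ^ 2 * X k) := by
  intro η hη
  have ht : Tendsto (fun k : Euc n => l⁻¹ • k) (𝓝 0) (𝓝 0) := by
    have : Continuous (fun k : Euc n => l⁻¹ • k) := by fun_prop
    simpa using this.tendsto 0
  filter_upwards [ht.eventually (h (η * l ^ 2) (by positivity))] with k hk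
  simp only [smul_add, smul_smul, mul_inv_cancel₀ hl.ne', one_smul, real_inner_smul_right,
    hX.hom, norm_smul, norm_inv, Real.norm_eq_abs, abs_of_pos hl] at hk
  rw [real_inner_smul_left, add_assoc]
  have : η * l ^ 2 * (l⁻¹ * ‖k‖) ^ 2 = η * ‖k‖ ^ 2 := by field_simp
  linarith

lemma mob_scale {n : ℕ} (c : ℝ) (p : Euc n) (Z : Euc n → ℝ) :
    mob (c • p) (fun k => c ^ 2 * Z k) = fun h => c ^ 2 * mob p Z h := by
  funext h
  simp only [mob, real_inner_smul_left, norm_smul, mul_pow, Real.norm_eq_abs, sq_abs]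
  ring

lemma SubV.affine {n : ℕ} {Γ : Set (Fin n → ℝ)} (hΓ : CondC Γ) {v : Euc n → ℝ} (h : SubV Γ v)
    (x : Euc n) {l : ℝ} (hl : 0 < l) : SubV Γ (fun y => v (x + l • y)) := by
  intro y p X hX hu
  have h1 := h _ _ _ (hX.smul ((l⁻¹) ^ 2)) (hu.affine hl hX)
  have h2 := mob_scale l⁻¹ p (fun h => - X h)
  have h3 : (fun k => l⁻¹ ^ 2 * -X k) = fun k => - (l⁻¹ ^ 2 * X k) := by funext k; ring
  rw [h3] at h2
  rw [h2] at h1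
  refine EI.scale _ (by positivity) ?_ h1 (isQF_mob p hX.neg)
  intro a ha ha'
  exact ha (hΓ.2.2.2.2.1 a ha' _ (by positivity))

lemma SupL.affine {n : ℕ} {Γ : Set (Fin n → ℝ)} (hΓ : CondC Γ) {v : Euc n → ℝ}
    (h : SupL Γ univ v) (x : Euc n) {l : ℝ} (hl : 0 < l) :
    SupL Γ univ (fun y => v (x + l • y)) := by
  intro y _ p X hX hu
  have h1 := h _ (mem_univ _) _ _ (hX.smul ((l⁻¹) ^ 2)) (hu.affine hl hX)
  rw [mob_scale l⁻¹ p X] at h1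
  refine EI.scale _ (by positivity) ?_ h1 (isQF_mob p hX)
  intro a ha
  have := cone_smul hΓ ha (t := ((l⁻¹) ^ 2)⁻¹) (by positivity)
  rwa [smul_smul, inv_mul_cancel₀ (by positivity), one_smul] at this

/-- from the logarithm to the exponential form -/
lemma supW_of_supL {n : ℕ} {Γ : Set (Fin n → ℝ)} (hΓ : CondC Γ) {b : Euc n → ℝ}
    (hb : ∀ y, 0 < b y) {Ω : Set (Euc n)} (h : SupL Γ Ω (fun y => Real.log (b y)))
    {y : Euc n} (hy : y ∈ Ω) : SupW Γ b y := by
  intro P Z hZ hu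
  have h1 := hu.comp hZ (T1_log (hb y)) (s := Ioi 0) (Ioi_mem_nhds (hb y))
    (fun s hs t ht hst => Real.log_le_log hs hst) hb
  have h2 := h y hy _ _ ((hZ.smul _).add ((isQF_inner P).smul _)) h1
  have hb' := hb y
  refine EI.mono hΓ h2 ((hZ.smul _).sub (isQF_norm.smul _)) (LinearIsometryEquiv.refl ℝ _)
    (b y ^ 2) (by positivity) fun k => le_of_eq ?_
  simp only [mob, LinearIsometryEquiv.coe_refl, id, real_inner_smul_left, norm_smul, mul_pow,
    Real.norm_eq_abs, sq_abs]
  field_simp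
  ring

lemma supL_of_supW {n : ℕ} {Γ : Set (Fin n → ℝ)} (hΓ : CondC Γ) {b : Euc n → ℝ}
    (hb : ∀ y, 0 < b y) {Ω : Set (Euc n)} (h : ∀ y ∈ Ω, SupW Γ b y) :
    SupL Γ Ω (fun y => Real.log (b y)) := by
  intro y hy p Z hZ hu
  have h1 := hu.comp hZ (T1_exp _) (s := univ) univ_mem
    (fun s hs t ht hst => Real.exp_le_exp.2 hst) (fun _ => mem_univ _)
  simp only [Real.exp_log (hb _)] at h1
  have h2 := h y hy _ _ ((hZ.smul _).add ((isQF_inner p).smul _)) h1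
  have hb' := hb y
  refine EI.mono hΓ h2 (isQF_mob p hZ) (LinearIsometryEquiv.refl ℝ _)
    ((b y ^ 2)⁻¹) (by positivity) fun k => le_of_eq ?_
  simp only [mob, LinearIsometryEquiv.coe_refl, id, norm_smul, mul_pow,
    Real.norm_eq_abs, sq_abs]
  field_simp

/-- Kelvin transform with prescribed value at the origin -/
def bK {n : ℕ} (w : Euc n → ℝ) (c : ℝ) (y : Euc n) : ℝ :=
  if y = 0 then c else ‖y‖ ^ 2 * w ((‖y‖ ^ 2)⁻¹ • y)

def kelS {n : ℕ} (z : Euc n) : Euc n ≃ₗᵢ[ℝ] Euc n := (ℝ ∙ z)ᗮ.reflection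

lemma kelS_apply {n : ℕ} (z h : Euc n) :
    kelS z h = h - (2 * inner ℝ z h / ‖z‖ ^ 2) • z := by
  unfold kelS
  rw [Submodule.reflection_orthogonal_apply, Submodule.reflection_singleton_apply]
  simp only [RCLike.ofReal_real_eq_id, id, two_smul]
  rw [mul_div_assoc, two_mul, add_smul]
  simp

set_option maxHeartbeats 1000000 in
lemma kelvin_UB {n : ℕ} {w : Euc n → ℝ} {c : ℝ} {y P : Euc n} {Z : Euc n → ℝ} (hZ : IsQF Z)
    (hy : y ≠ 0) (hu : UB (bK w c) y P Z) {z : Euc n} (hz : z = (‖y‖ ^ 2)⁻¹ • y) :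
    UB w z ((2 * bK w c y) • z + kelS z P)
      (fun h => (2 * bK w c y - 2 * inner ℝ P y) * ‖h‖ ^ 2 + (‖z‖ ^ 2)⁻¹ * Z (kelS z h)) := by
  obtain ⟨L, C, hC, hsym, hL, hZC⟩ := hZ.sym
  have hny : 0 < ‖y‖ := norm_pos_iff.2 hy
  have hnz : ‖z‖ = ‖y‖⁻¹ := by
    rw [hz, norm_smul, norm_inv, norm_pow, norm_norm]; field_simp
  have hz0 : 0 < ‖z‖ := by rw [hnz]; positivity
  have hzne : z ≠ 0 := norm_pos_iff.1 hz0
  have hyz : y = (‖z‖ ^ 2)⁻¹ • z := by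
    rw [hnz, hz, smul_smul]; field_simp; simp
  set a := ‖z‖ ^ 2 with ha
  have hap : 0 < a := by positivity
  set W := bK w c y with hW
  have hwT : ∀ x : Euc n, x ≠ 0 → w x = ‖x‖ ^ 2 * bK w c ((‖x‖ ^ 2)⁻¹ • x) := by
    intro x hx
    have hnx : 0 < ‖x‖ := norm_pos_iff.2 hx
    have h1 : (‖x‖ ^ 2)⁻¹ • x ≠ 0 := smul_ne_zero (by positivity) hx
    have h2 : ‖(‖x‖ ^ 2)⁻¹ • x‖ = ‖x‖⁻¹ := by
      rw [norm_smul, norm_inv, norm_pow, norm_norm]; field_simp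
    rw [bK, if_neg h1, h2, smul_smul]
    have : (‖x‖⁻¹ ^ 2)⁻¹ * (‖x‖ ^ 2)⁻¹ = 1 := by field_simp
    rw [this, one_smul]; field_simp
  have hwz : w z = a * W := by rw [hwT z hzne, ← ha, ← hyz]
  intro η hη
  have hη' : 0 < η * a / 16 := by positivity
  set U : Euc n → Euc n := fun k => kelS z k - ‖k‖ ^ 2 • y with hU
  have hcU : Continuous U := by fun_prop
  have hT : ∀ k : Euc n, z + k ≠ 0 →
      (‖z + k‖ ^ 2)⁻¹ • (z + k) = y + (‖z + k‖ ^ 2)⁻¹ • U k := by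
    intro k hk
    have hr : 0 < ‖z + k‖ ^ 2 := by have := norm_pos_iff.2 hk; positivity
    have h1 : z + k = (‖z + k‖ ^ 2) • y + U k := by
      simp only [hU, kelS_apply]
      rw [norm_add_sq_real, hyz, ← ha]
      have : ∀ i, (z + k) i = ((a + 2 * inner ℝ z k + ‖k‖ ^ 2) • a⁻¹ • z +
        (k - (2 * inner ℝ z k / a) • z - ‖k‖ ^ 2 • a⁻¹ • z)) i := by
        intro i
        simp
        field_simp
        ring
      ext i; exact this i
    have h2 := congrArg (fun t => (‖z + k‖ ^ 2)⁻¹ • t) h1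
    refine h2.trans ?_
    rw [smul_add, smul_smul, inv_mul_cancel₀ hr.ne', one_smul]
  have hne : ∀ᶠ k in 𝓝 (0 : Euc n), z + k ≠ 0 := by
    have : Continuous (fun k : Euc n => z + k) := by fun_prop
    exact this.continuousAt.eventually_ne (by simpa using hzne)
  have hcr : ContinuousAt (fun k : Euc n => (‖z + k‖ ^ 2)⁻¹) 0 := by
    apply ContinuousAt.inv₀ (by fun_prop)
    simpa using hzne
  have hm : Tendsto (fun k => (‖z + k‖ ^ 2)⁻¹ • U k) (𝓝 0) (𝓝 0) := by
    have h0 : U 0 = 0 := by simp [hU]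
    have := Filter.Tendsto.smul hcr.tendsto hcU.continuousAt.tendsto
    rwa [h0, smul_zero] at this
  have hE : ∀ᶠ k in 𝓝 (0 : Euc n), (1 / 2) * (‖z + k‖ ^ 2)⁻¹ * (C * (2 * ‖k‖ * ‖y‖ +
      ‖k‖ ^ 2 * ‖y‖ ^ 2)) + (1 / 2) * |(‖z + k‖ ^ 2)⁻¹ - a⁻¹| * C < η / 2 := by
    have hcE : ContinuousAt (fun k : Euc n => (1 / 2) * (‖z + k‖ ^ 2)⁻¹ * (C * (2 * ‖k‖ * ‖y‖ +
      ‖k‖ ^ 2 * ‖y‖ ^ 2)) + (1 / 2) * |(‖z + k‖ ^ 2)⁻¹ - a⁻¹| * C) 0 := by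
      have h1 : ContinuousAt (fun k : Euc n => C * (2 * ‖k‖ * ‖y‖ + ‖k‖ ^ 2 * ‖y‖ ^ 2)) 0 := by
        fun_prop
      exact ((continuousAt_const.mul hcr).mul h1).add
        ((continuousAt_const.mul ((hcr.sub continuousAt_const).abs)).mul continuousAt_const)
    refine hcE.eventually_lt continuousAt_const ?_
    simp [← ha]; exact hη
  have hr2 : ∀ᶠ k in 𝓝 (0 : Euc n), (‖z + k‖ ^ 2)⁻¹ < 2 * a⁻¹ := by
    refine hcr.eventually_lt continuousAt_const ?_
    have : 0 < a⁻¹ := by positivity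
    simp [← ha]; linarith
  have hk1 : ∀ᶠ k in 𝓝 (0 : Euc n), ‖k‖ * ‖y‖ < 1 := by
    have : ContinuousAt (fun k : Euc n => ‖k‖ * ‖y‖) 0 := by fun_prop
    exact this.eventually_lt continuousAt_const (by simp)
  filter_upwards [hne, hm.eventually (hu _ hη'), hE, hr2, hk1] with k hk hb hEk hrk hk1
  rw [hwT _ hk, hT k hk, hwz]
  set ρ := ‖z + k‖ ^ 2 with hρ
  have hρp : 0 < ρ := by have := norm_pos_iff.2 hk; positivity
  have hρe : ρ = a + 2 * inner ℝ z k + ‖k‖ ^ 2 := by rw [hρ, norm_add_sq_real]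
  rw [hZ.hom, real_inner_smul_right, norm_smul, norm_inv, Real.norm_of_nonneg hρp.le] at hb
  have hSk : ‖kelS z k‖ = ‖k‖ := LinearIsometryEquiv.norm_map _ _
  have hUn : ‖U k‖ ≤ 2 * ‖k‖ := by
    have h1 := norm_sub_le (kelS z k) (‖k‖ ^ 2 • y)
    rw [hSk, norm_smul, norm_pow, norm_norm] at h1
    have : ‖k‖ ^ 2 * ‖y‖ ≤ ‖k‖ := by nlinarith [norm_nonneg k]
    simp only [hU]; linarith
  have hin : inner ℝ P (U k) = inner ℝ P (kelS z k) - ‖k‖ ^ 2 * inner ℝ P y := by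
    simp only [hU, inner_sub_right, real_inner_smul_right]
  have hPS : inner ℝ P (kelS z k) = inner ℝ (kelS z P) k := by
    simp only [kelS_apply, inner_sub_right, inner_sub_left, real_inner_smul_right,
      real_inner_smul_left]
    rw [real_inner_comm P z]; ring
  have hZU : Z (U k) ≤ Z (kelS z k) + C * (2 * ‖k‖ * ‖y‖ + ‖k‖ ^ 2 * ‖y‖ ^ 2) * ‖k‖ ^ 2 := by
    have h1 := hsym (kelS z k) (-(‖k‖ ^ 2 • y))
    have h2 := hL (kelS z k)
    have h3 := (abs_le.1 (hZC (-(‖k‖ ^ 2 • y)))).2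
    have h4 := real_inner_le_norm (L (kelS z k)) (-(‖k‖ ^ 2 • y))
    rw [norm_neg, norm_smul, norm_pow, norm_norm] at h3 h4
    rw [hSk] at h2
    have h5 : ‖L (kelS z k)‖ * (‖k‖ ^ 2 * ‖y‖) ≤ C * ‖k‖ * (‖k‖ ^ 2 * ‖y‖) := by gcongr
    simp only [hU, sub_eq_add_neg]
    rw [h1]
    nlinarith
  have hZd : (1 / 2) * ρ⁻¹ * Z (U k) - (1 / 2) * a⁻¹ * Z (kelS z k) ≤ η / 2 * ‖k‖ ^ 2 := by
    have h1 : (ρ⁻¹ - a⁻¹) * Z (kelS z k) ≤ |ρ⁻¹ - a⁻¹| * (C * ‖k‖ ^ 2) := by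
      refine (le_abs_self _).trans ?_
      rw [abs_mul]
      have := hZC (kelS z k)
      rw [hSk] at this
      gcongr
    have h2 := mul_le_mul_of_nonneg_left hZU (by positivity : 0 ≤ (1 / 2) * ρ⁻¹)
    have h3 := mul_le_mul_of_nonneg_right hEk.le (by positivity : 0 ≤ ‖k‖ ^ 2)
    linarith
  have hUd : ρ * (η * a / 16 * (ρ⁻¹ * ‖U k‖) ^ 2) ≤ η / 2 * ‖k‖ ^ 2 := by
    have h1 : ρ * (η * a / 16 * (ρ⁻¹ * ‖U k‖) ^ 2) = η * a / 16 * ρ⁻¹ * ‖U k‖ ^ 2 := by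
      field_simp
    have h2 : η * a / 16 * ρ⁻¹ * ‖U k‖ ^ 2 ≤ η * a / 16 * (2 * a⁻¹) * (2 * ‖k‖) ^ 2 := by gcongr
    have h3 : η * a / 16 * (2 * a⁻¹) * (2 * ‖k‖) ^ 2 = η / 2 * ‖k‖ ^ 2 := by
      field_simp; ring
    linarith
  have hb2 := mul_le_mul_of_nonneg_left hb hρp.le
  have h6 : ρ * (ρ⁻¹ * inner ℝ P (U k)) = inner ℝ P (U k) := by field_simp
  have h7 : ρ * (1 / 2 * (ρ⁻¹ ^ 2 * Z (U k))) = 1 / 2 * ρ⁻¹ * Z (U k) := by field_simp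
  rw [mul_add, mul_add, mul_add, h6, h7, hin, hPS] at hb2
  rw [inner_add_left, real_inner_smul_left]
  have h8 : ρ * W = a * W + 2 * W * inner ℝ z k + W * ‖k‖ ^ 2 := by rw [hρe]; ring
  linarith

lemma kelvin_supW {n : ℕ} {Γ : Set (Fin n → ℝ)} (hΓ : CondC Γ) {w : Euc n → ℝ}
    (h : ∀ z, SupW Γ w z) (c : ℝ) {y : Euc n} (hy : y ≠ 0) : SupW Γ (bK w c) y := by
  intro P Z hZ hu
  obtain ⟨z, hz⟩ : ∃ z, z = (‖y‖ ^ 2)⁻¹ • y := ⟨_, rfl⟩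
  have h1 := kelvin_UB hZ hy hu hz
  have hq : IsQF (fun h => (2 * bK w c y - 2 * inner ℝ P y) * ‖h‖ ^ 2 +
      (‖z‖ ^ 2)⁻¹ * Z (kelS z h)) :=
    (isQF_norm.smul _).add ((hZ.comp (kelS z).toContinuousLinearEquiv.toContinuousLinearMap).smul _)
  have h2 := h z _ _ hq h1
  refine EI.mono hΓ h2 ((hZ.smul _).sub (isQF_norm.smul _)) (kelS z) 1 one_pos fun k => le_of_eq ?_
  have hny : 0 < ‖y‖ := norm_pos_iff.2 hy
  have hnz : ‖z‖ = ‖y‖⁻¹ := by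
    rw [hz, norm_smul, norm_inv, norm_pow, norm_norm]; field_simp
  have hwz : bK w c y = ‖y‖ ^ 2 * w z := by rw [bK, if_neg hy, hz]
  have hSP : ‖kelS z P‖ = ‖P‖ := LinearIsometryEquiv.norm_map _ _
  have hSk : ‖kelS z k‖ = ‖k‖ := LinearIsometryEquiv.norm_map _ _
  have hin : inner ℝ z (kelS z P) = - (‖y‖ ^ 2)⁻¹ * inner ℝ P y := by
    rw [kelS_apply, inner_sub_right, real_inner_smul_right, real_inner_self_eq_norm_sq, hnz, hz,
      real_inner_smul_left, real_inner_comm P y]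
    field_simp; ring
  rw [norm_add_sq_real, real_inner_smul_left, hin, hSP, hSk, norm_smul, mul_pow, hnz,
    Real.norm_eq_abs, sq_abs, hwz]
  field_simp
  ring

lemma kelvin_cmp {n : ℕ} (hn : 2 ≤ n) {Γ : Set (Fin n → ℝ)} (hΓ : CondC Γ) {δ : ℝ} (hδ : 0 < δ)
    (ht : tup n (2 + δ) (-(1 - δ)) ∉ closure Γ) {v : Euc n → ℝ} (hv : Continuous v)
    (hsub : SubV Γ v) (hsup : SupL Γ univ (fun x => - v x)) (y₀ : Euc n) (hy0 : y₀ ≠ 0)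
    (hy1 : ‖y₀‖ ≤ 1) :
    ‖y₀‖ ^ 2 * Real.exp (- v ((‖y₀‖ ^ 2)⁻¹ • y₀)) ≤ Real.exp (- v y₀) := by
  haveI : Nontrivial (Euc n) := by
    haveI : Nonempty (Fin n) := ⟨⟨0, by omega⟩⟩
    infer_instance
  set w : Euc n → ℝ := fun x => Real.exp (- v x) with hw
  have hwc : Continuous w := by fun_prop
  have hwp : ∀ x, 0 < w x := fun x => Real.exp_pos _
  have hW : ∀ z, SupW Γ w z := fun z =>
    supW_of_supL hΓ hwp (Ω := univ) (by simpa only [hw, Real.log_exp] using hsup) (mem_univ z)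
  have hKW : ∀ c, ∀ y : Euc n, y ≠ 0 → SupW Γ (bK w c) y := fun c y hy => kelvin_supW hΓ hW c hy
  have hKc : ∀ c, ContinuousOn (bK w c) {0}ᶜ := by
    intro c
    have : ContinuousOn (fun y : Euc n => ‖y‖ ^ 2 * w ((‖y‖ ^ 2)⁻¹ • y)) {0}ᶜ := by
      have h1 : ContinuousOn (fun y : Euc n => (‖y‖ ^ 2)⁻¹) {0}ᶜ :=
        ContinuousOn.inv₀ (by fun_prop) (fun y hy => by simpa using hy)
      have h2 : ContinuousOn (fun y : Euc n => (‖y‖ ^ 2)⁻¹ • y) {0}ᶜ := h1.smul continuousOn_id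
      have h3 := hwc.comp_continuousOn h2
      exact ContinuousOn.mul (by fun_prop) h3
    exact this.congr fun y (hy : y ≠ 0) => by rw [bK, if_neg hy]
  have hKp : ∀ c, 0 < c → ∀ y : Euc n, 0 < bK w c y := by
    intro c hc y
    by_cases hy : y = 0
    · simp [bK, hy, hc]
    · rw [bK, if_neg hy]
      have := norm_pos_iff.2 hy
      have := hwp ((‖y‖ ^ 2)⁻¹ • y)
      positivity
  have hKe : ∀ c d, ∀ y : Euc n, y ≠ 0 → bK w c y = bK w d y := by
    intro c d y hy; rw [bK, bK, if_neg hy, if_neg hy]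
  have hlogc : ∀ c, 0 < c → ContinuousOn (fun y => Real.log (bK w c y)) {0}ᶜ := fun c hc =>
    (hKc c).log fun y _ => (hKp c hc y).ne'
  have hlogL : ∀ c, 0 < c → SupL Γ {0}ᶜ (fun y => Real.log (bK w c y)) := fun c hc =>
    supL_of_supW hΓ (hKp c hc) fun y hy => hKW c y hy
  have hsph : ∀ c, ∀ y : Euc n, ‖y‖ = 1 → bK w c y = w y := by
    intro c y hy
    have : y ≠ 0 := by rintro rfl; simp at hy
    rw [bK, if_neg this, hy]; simp
  obtain ⟨M, hM⟩ : ∃ M, ∀ y : Euc n, ‖y‖ = 1 → - v y ≤ M := by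
    obtain ⟨M, hM⟩ := (isCompact_sphere (0 : Euc n) 1).bddAbove_image
      (f := fun y => - v y) (by fun_prop)
    exact ⟨M, fun y hy => hM ⟨y, by simpa using hy, rfl⟩⟩
  have hbd : ∀ y : Euc n, y ≠ 0 → ‖y‖ ≤ 1 → bK w 1 y ≤ Real.exp M := by
    intro y hy hy1
    have h1 := sing_bound hn hΓ hδ ht (hlogc 1 one_pos) (hlogL 1 one_pos) (M := M)
      (fun y hy => by simp only [hsph 1 y hy]; simp only [hw, Real.log_exp]; exact hM y hy) y hy hy1
    exact (Real.log_le_iff_le_exp (hKp 1 one_pos y)).1 h1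
  have hball : ∀ᶠ y in 𝓝[≠] (0 : Euc n), y ≠ 0 ∧ ‖y‖ ≤ 1 := by
    have : ∀ᶠ y in 𝓝 (0 : Euc n), ‖y‖ ≤ 1 := by
      filter_upwards [closedBall_mem_nhds (0 : Euc n) one_pos] with y hy using by simpa using hy
    filter_upwards [self_mem_nhdsWithin, this.filter_mono nhdsWithin_le_nhds] with y h1 h2
      using ⟨h1, h2⟩
  have hB1 : IsBoundedUnder (· ≤ ·) (𝓝[≠] (0 : Euc n)) (bK w 1) :=
    ⟨Real.exp M, by
      rw [eventually_map]
      filter_upwards [hball] with y hy using hbd y hy.1 hy.2⟩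
  have hB2 : IsBoundedUnder (· ≥ ·) (𝓝[≠] (0 : Euc n)) (bK w 1) :=
    ⟨0, by
      rw [eventually_map]
      exact Eventually.of_forall fun y => (hKp 1 one_pos y).le⟩
  have hB3 := hB2.isCoboundedUnder_le
  set c := limsup (bK w 1) (𝓝[≠] (0 : Euc n)) with hc
  have hc0 : 0 ≤ c := by
    refine le_limsup_of_frequently_le ?_ hB1
    exact (Eventually.of_forall fun y => (hKp 1 one_pos y).le).frequently
  have hb0 : ∀ y, 0 ≤ bK w c y := by
    intro y
    by_cases hy : y = 0
    · simp [bK, hy, hc0]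
    · rw [hKe c 1 y hy]; exact (hKp 1 one_pos y).le
  have hcz : bK w c 0 = c := by simp [bK]
  have husc : UpperSemicontinuousOn (bK w c) (closedBall 0 1) := by
    intro y _
    by_cases hy : y = 0
    · subst hy
      intro t ht'
      rw [hcz] at ht'
      have h1 := eventually_lt_of_limsup_lt (f := 𝓝[≠] (0 : Euc n)) (u := bK w 1) ht' hB1
      rw [eventually_nhdsWithin_iff] at h1
      refine Eventually.filter_mono nhdsWithin_le_nhds ?_
      filter_upwards [h1] with x hx
      by_cases hx0 : x = 0
      · rw [hx0, hcz]; exact ht'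
      · rw [hKe c 1 x hx0]; exact hx hx0
    · have : ContinuousAt (bK w c) y :=
        (hKc c).continuousAt (isOpen_compl_singleton.mem_nhds hy)
      exact this.upperSemicontinuousAt.upperSemicontinuousWithinAt _
  have hSW : ∀ y : Euc n, ‖y‖ < 1 → 0 < bK w c y → SupW Γ (bK w c) y := by
    intro y _ hyp
    by_cases hy : y = 0
    · subst hy
      rw [hcz] at hyp
      have h0 : SupL Γ {0} (fun y => Real.log (bK w c y)) := by
        refine removable hn hΓ hδ ht (hlogc c hyp) (hlogL c hyp) ?_
        intro ε hε r hr
        have h1 : Real.exp (-ε) * c < c := by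
          have : Real.exp (-ε) < 1 := by simpa using hε
          nlinarith
        have h2 := frequently_lt_of_lt_limsup (f := 𝓝[≠] (0 : Euc n)) (u := bK w 1) hB3 h1
        have h3 : ∀ᶠ y in 𝓝[≠] (0 : Euc n), y ≠ 0 ∧ ‖y‖ < r := by
          have : ∀ᶠ y in 𝓝 (0 : Euc n), ‖y‖ < r := by
            filter_upwards [ball_mem_nhds (0 : Euc n) hr] with y hy using by simpa using hy
          filter_upwards [self_mem_nhdsWithin, this.filter_mono nhdsWithin_le_nhds] with y h1 h2
            using ⟨h1, h2⟩
        obtain ⟨x, hx, hx0, hxr⟩ := (h2.and_eventually h3).exists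
        refine ⟨x, hx0, hxr, ?_⟩
        simp only [hcz, hKe c 1 x hx0]
        have h4 := Real.log_lt_log (by positivity) hx
        rw [Real.log_mul (Real.exp_pos _).ne' hyp.ne', Real.log_exp] at h4
        linarith
      exact supW_of_supL hΓ (hKp c hyp) h0 rfl
    · exact hKW c y hy
  have hfin := comparison hΓ hv hsub hb0 husc hSW (fun y hy => hsph c y hy) y₀ hy1
  rwa [bK, if_neg hy0] at hfin

lemma case2 {n : ℕ} (hn : 2 ≤ n) {Γ : Set (Fin n → ℝ)} (hΓ : CondC Γ)
    (hl : lamStar n ∉ closure Γ) {v : Euc n → ℝ} (hv : Continuous v)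
    (hsup : Supersol Γ Set.univ v) (hsub : Subsol Γ Set.univ v) (a b : Euc n) : v a ≤ v b := by
  obtain ⟨δ, hδ, ht⟩ : ∃ δ : ℝ, 0 < δ ∧ tup n (2 + δ) (-(1 - δ)) ∉ closure Γ := by
    have hc : Continuous (fun δ : ℝ => tup n (2 + δ) (-(1 - δ))) := by
      unfold tup
      refine continuous_pi fun i => ?_
      split_ifs <;> fun_prop
    have h0 : tup n (2 + 0) (-(1 - 0)) = lamStar n := by
      funext i; simp only [tup, lamStar]; split_ifs <;> norm_num
    have hev : ∀ᶠ δ in 𝓝 (0 : ℝ), tup n (2 + δ) (-(1 - δ)) ∈ (closure Γ)ᶜ :=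
      hc.continuousAt.eventually_mem (isClosed_closure.isOpen_compl.mem_nhds (by
        simp only [h0]; exact hl))
    have h2 : ∀ᶠ δ in 𝓝[>] (0 : ℝ), 0 < δ ∧ tup n (2 + δ) (-(1 - δ)) ∈ (closure Γ)ᶜ := by
      filter_upwards [self_mem_nhdsWithin, hev.filter_mono nhdsWithin_le_nhds] with δ h1 h2
        using ⟨h1, h2⟩
    exact h2.exists
  by_cases hab : a = b
  · rw [hab]
  set d := ‖b - a‖ with hd
  have hdp : 0 < d := norm_pos_iff.2 (sub_ne_zero.2 (Ne.symm hab))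
  have key : ∀ s : ℝ, 0 < s → v a ≤ v b + Real.log ((s + d) / s) := by
    intro s hs
    set l := Real.sqrt (s * (s + d)) with hl'
    have hlp : 0 < l := Real.sqrt_pos.2 (by positivity)
    have hl2 : l ^ 2 = s * (s + d) := Real.sq_sqrt (by positivity)
    obtain ⟨x, hx⟩ : ∃ x, x = a - (s / d) • (b - a) := ⟨_, rfl⟩
    obtain ⟨y, hy⟩ : ∃ y, y = (s / (d * l)) • (b - a) := ⟨_, rfl⟩
    have hny : ‖y‖ = s / l := by
      rw [hy, norm_smul, Real.norm_of_nonneg (by positivity), ← hd]; field_simp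
    have hyp : 0 < ‖y‖ := by rw [hny]; positivity
    have hny2 : ‖y‖ ^ 2 = s / (s + d) := by
      rw [hny, div_pow, hl2]; field_simp
    have hny1 : ‖y‖ ≤ 1 := by
      rw [hny, div_le_one hlp]
      exact Real.le_sqrt_of_sq_le (by nlinarith)
    have hxa : x + l • y = a := by
      rw [hx, hy, smul_smul]
      have : l * (s / (d * l)) = s / d := by field_simp
      rw [this]; abel
    have hxb : x + l • ((‖y‖ ^ 2)⁻¹ • y) = b := by
      rw [hny2, hx, hy, smul_smul, smul_smul]
      have : l * (s / (s + d))⁻¹ * (s / (d * l)) = s / d + 1 := by field_simp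
      rw [this, add_smul, one_smul]; abel
    have h := kelvin_cmp hn hΓ hδ ht (v := fun y => v (x + l • y)) (by fun_prop)
      ((subV_of hΓ hsub).affine hΓ x hlp) ((supL_of hΓ hsup).affine hΓ x hlp) y
      (norm_pos_iff.1 hyp) hny1
    simp only [hxa, hxb] at h
    rw [hny2] at h
    have h2 := Real.log_le_log (by positivity) h
    rw [Real.log_mul (by positivity) (Real.exp_pos _).ne', Real.log_exp, Real.log_exp] at h2
    have h3 : Real.log ((s + d) / s) = - Real.log (s / (s + d)) := by
      rw [← Real.log_inv, inv_div]
    linarith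
  have hlim : Tendsto (fun s : ℝ => v b + Real.log ((s + d) / s)) atTop (𝓝 (v b)) := by
    have h1 : Tendsto (fun s : ℝ => 1 + d / s) atTop (𝓝 1) := by
      simpa using (tendsto_const_nhds (x := (1 : ℝ))).add
        (tendsto_const_nhds (x := d) |>.div_atTop tendsto_id)
    have h2 : Tendsto (fun s : ℝ => (s + d) / s) atTop (𝓝 1) := by
      refine h1.congr' ?_
      filter_upwards [eventually_gt_atTop 0] with s hs
      field_simp
    have h3 := (Real.continuousAt_log one_ne_zero).tendsto.comp h2
    simpa using h3.const_add (v b)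
  refine ge_of_tendsto hlim ?_
  filter_upwards [eventually_gt_atTop 0] with s hs using key s hs

/-- **Liouville theorem for `λ(A[v]) ∈ ∂Γ` in `ℝⁿ`** (Theorem 1.2):
if `Γ` satisfies condition (C) and `λ* ∉ ∂Γ`, then every continuous viscosity solution
of `λ(A[v]) ∈ ∂Γ` in `ℝⁿ` is constant. -/
theorem liouville_degenerate_entire
    {n : ℕ} (hn : 2 ≤ n) (Γ : Set (Fin n → ℝ)) (hΓ : CondC Γ)
    (hstar : lamStar n ∉ frontier Γ)
    (v : Euc n → ℝ) (hv : Continuous v)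
    (hsup : Supersol Γ Set.univ v) (hsub : Subsol Γ Set.univ v) :
    ∀ x y : Euc n, v x = v y := by
  intro x y
  by_cases hl : lamStar n ∈ Γ
  · exact le_antisymm (case1 hn hΓ hl hv (subV_of hΓ hsub) y x) (case1 hn hΓ hl hv (subV_of hΓ hsub) x y)
  · have hl2 : lamStar n ∉ closure Γ := by
      intro h
      apply hstar
      rw [frontier, hΓ.2.2.1.interior_eq]
      exact ⟨h, hl⟩
    exact le_antisymm (case2 hn hΓ hl2 hv hsup hsub x y) (case2 hn hΓ hl2 hv hsup hsub y x)
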